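/- arXiv:0905.0867 — 2 statements merged into one kernel-verified Lean document; each statement's English description precedes it below -/
import Mathlib

section
/- For every n ≥ 2 there exists δ = δ(n) > 0 with the following property: if K ⊂ ℝⁿ is an origin-symmetric convex body for which there exists T ∈ GL(n,ℝ) with B∞ⁿ ⊆ T(K) ⊆ (1+δ)·B∞ⁿ, and K is not a parallelepiped (i.e., K ≠ S(B∞ⁿ) for every S ∈ GL(n,ℝ)), then the strict inequality volₙ(K)·volₙ(K*) > 4ⁿ/n! holds. Equivalently, equality volₙ(K)·volₙ(K*) = 4ⁿ/n! among such K occurs only when K is a linear image of the cube. -/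
open MeasureTheory RealInnerProductSpace ENNReal Pointwise

noncomputable section

/-- The unit cube `B∞ⁿ = {x : |xᵢ| ≤ 1 ∀ i}`. -/
def cube (n : ℕ) : Set (EuclideanSpace ℝ (Fin n)) := {x | ∀ i, |x i| ≤ 1}

/-- The polar body `K* = {ξ : ⟨x, ξ⟩ ≤ 1 ∀ x ∈ K}`. -/
def polarBody {n : ℕ} (K : Set (EuclideanSpace ℝ (Fin n))) :
    Set (EuclideanSpace ℝ (Fin n)) :=
  {ξ | ∀ x ∈ K, ⟪x, ξ⟫ ≤ 1}

/-!
Cut the cube into the `2 ^ n * n!` simplices spanned by the origin and the face centers of a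
complete flag; the polar cross-polytope is cut into the dual simplices. For a body `K` near the
cube, choose for every face `s` a point `X s ∈ K` near its center and a point `Y s`, also near the
center, such that `Y s / codim s` lies in the polar of `K` and `X s ⬝ᵥ Y s = codim s`. The perturbed
simplices still have disjoint interiors, so the volumes of `K` and of its polar are bounded below by
sums of determinants. To first order these sums change by a linear functional of `X - center` and
of `Y - center`, and duality makes the two changes cancel up to a quadratic error.

To beat this error, first place `K` inside the cube so that it touches every facet at its center, by
maximizing a determinant over matrices with rows in the polar. Let `d` be the least number such that
`K` contains the `(1 - d)`-dilate of the cube. If `d > 0`, then `K` misses a vertex of the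
`(1 - d / 2)`-dilate, and the midpoint between a vertex and a facet center shows that `K` or its
polar sticks out of one of the perturbed simplices by a volume linear in `d`.
-/

namespace CubeMahler

open Matrix Equiv

/-! ### Determinants near the identity -/

section Determinant

variable {ι : Type*} {t : ℝ}

lemma abs_prod_one_add_sub_le {S : Finset ι} {a : ι → ℝ} (ht₀ : 0 ≤ t) (ht₁ : t ≤ 1)
    (ha : ∀ i, |a i| ≤ t) :
    |∏ i ∈ S, (1 + a i) - (1 + ∑ i ∈ S, a i)| ≤ 4 ^ S.card * t ^ 2 := by
  classical
  induction S using Finset.induction_on with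
  | empty => simpa using sq_nonneg t
  | insert j S hj ih =>
    rw [Finset.prod_insert hj, Finset.sum_insert hj, Finset.card_insert_of_notMem hj]
    set p := ∏ i ∈ S, (1 + a i)
    set σ := ∑ i ∈ S, a i
    have hσ : |σ| ≤ 4 ^ S.card * t := by
      calc |σ| ≤ ∑ i ∈ S, |a i| := Finset.abs_sum_le_sum_abs _ _
        _ ≤ S.card * t := by simpa using Finset.sum_le_card_nsmul S _ t fun i _ => ha i
        _ ≤ 4 ^ S.card * t := by
          gcongr
          exact_mod_cast (Nat.lt_pow_self (by norm_num)).le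
    have hone : |1 + a j| ≤ 2 := by
      linarith [abs_add_le 1 (a j), ha j, abs_one (α := ℝ)]
    calc |(1 + a j) * p - (1 + (a j + σ))|
        = |(p - (1 + σ)) * (1 + a j) + a j * σ| := by ring_nf
      _ ≤ |p - (1 + σ)| * |1 + a j| + |a j| * |σ| := by
        rw [← abs_mul, ← abs_mul]
        exact abs_add_le _ _
      _ ≤ 4 ^ S.card * t ^ 2 * 2 + t * (4 ^ S.card * t) := by
        gcongr
        exact ha j
      _ ≤ 4 ^ (S.card + 1) * t ^ 2 := by
        rw [pow_succ (4 : ℝ)]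
        nlinarith [show (0 : ℝ) ≤ 4 ^ S.card * t ^ 2 by positivity]

variable [Fintype ι] [DecidableEq ι] {E : Matrix ι ι ℝ}

-- A permutation other than the identity moves two points, giving two small factors.
lemma abs_prod_one_add_perm_le (ht₀ : 0 ≤ t) (ht₁ : t ≤ 1) (hE : ∀ i j, |E i j| ≤ t)
    {σ : Perm ι} (hσ : σ ≠ 1) :
    |∏ i, (1 + E) (σ i) i| ≤ 2 ^ Fintype.card ι * t ^ 2 := by
  obtain ⟨a, ha⟩ : ∃ a, σ a ≠ a := by
    by_contra! h
    exact hσ (Equiv.ext h)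
  have off_diag {i : ι} (hi : σ i ≠ i) : |(1 + E) (σ i) i| ≤ t := by
    simpa [Matrix.one_apply, hi] using hE (σ i) i
  have entry (i : ι) : |(1 + E) (σ i) i| ≤ 2 := by
    by_cases hi : σ i = i
    · rw [hi, Matrix.add_apply, Matrix.one_apply_eq]
      linarith [abs_add_le 1 (E i i), hE i i, abs_one (α := ℝ)]
    · linarith [off_diag hi]
  have others : ∏ i ∈ (Finset.univ.erase a).erase (σ a), |(1 + E) (σ i) i|
      ≤ 2 ^ Fintype.card ι :=
    calc _ ≤ ∏ _i ∈ (Finset.univ.erase a).erase (σ a), (2 : ℝ) :=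
          Finset.prod_le_prod (fun _ _ => abs_nonneg _) fun _ _ => entry _
      _ = 2 ^ ((Finset.univ.erase a).erase (σ a)).card := Finset.prod_const _
      _ ≤ 2 ^ Fintype.card ι := pow_le_pow_right₀ one_le_two (Finset.card_le_univ _)
  have others_nonneg : 0 ≤ ∏ i ∈ (Finset.univ.erase a).erase (σ a), |(1 + E) (σ i) i| :=
    Finset.prod_nonneg fun _ _ => abs_nonneg _
  rw [Finset.abs_prod, ← Finset.mul_prod_erase _ _ (Finset.mem_univ a),
    ← Finset.mul_prod_erase _ _ (Finset.mem_erase.mpr ⟨ha, Finset.mem_univ (σ a)⟩)]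
  calc _ ≤ t * (t * 2 ^ Fintype.card ι) := by
        refine mul_le_mul (off_diag ha) (mul_le_mul ?_ others others_nonneg ht₀) ?_ ht₀
        · exact off_diag fun h => ha (σ.injective h)
        · exact mul_nonneg (abs_nonneg _) others_nonneg
    _ = _ := by ring

variable (ι) in
lemma exists_one_add_trace_sub_le_det : ∃ C : ℝ, 0 ≤ C ∧ ∀ (E : Matrix ι ι ℝ) (t : ℝ),
    0 ≤ t → t ≤ 1 → (∀ i j, |E i j| ≤ t) → 1 + E.trace - C * t ^ 2 ≤ (1 + E).det := by
  refine ⟨4 ^ Fintype.card ι + Fintype.card (Perm ι) * 2 ^ Fintype.card ι, by positivity,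
    fun E t ht₀ ht₁ hE => ?_⟩
  have diagonal : |∏ i, (1 + E i i) - (1 + E.trace)| ≤ 4 ^ Fintype.card ι * t ^ 2 :=
    abs_prod_one_add_sub_le ht₀ ht₁ fun i => hE i i
  have off_diagonal : -(Fintype.card (Perm ι) * (2 ^ Fintype.card ι * t ^ 2)) ≤
      ∑ σ ∈ Finset.univ.erase (1 : Perm ι), Perm.sign σ • ∏ i, (1 + E) (σ i) i := by
    refine (abs_le.1 ?_).1
    calc _ ≤ ∑ σ ∈ Finset.univ.erase (1 : Perm ι), |Perm.sign σ • ∏ i, (1 + E) (σ i) i| :=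
          Finset.abs_sum_le_sum_abs _ _
      _ ≤ (Finset.univ.erase (1 : Perm ι)).card • (2 ^ Fintype.card ι * t ^ 2) := by
        refine Finset.sum_le_card_nsmul _ _ _ fun σ hσ => ?_
        rcases Int.units_eq_one_or (Perm.sign σ) with h | h <;>
          simpa only [h, one_smul, Units.neg_smul, abs_neg] using
            abs_prod_one_add_perm_le ht₀ ht₁ hE (Finset.ne_of_mem_erase hσ)
      _ ≤ _ := by
        rw [nsmul_eq_mul]
        gcongr
        exact Finset.card_le_univ _
  rw [Matrix.det_apply, ← Finset.add_sum_erase _ _ (Finset.mem_univ (1 : Perm ι))]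
  simp only [Perm.sign_one, one_smul, Perm.one_apply, Matrix.add_apply, Matrix.one_apply_eq] at *
  linarith [(abs_le.1 diagonal).1]

end Determinant

/-! ### Flags of faces of the cube -/

variable {n : ℕ}

/-- A face of the cube `[-1, 1]ⁿ`, encoded by the signs of its fixed coordinates and `0` at its
free coordinates; the zero vector is the whole cube. -/
abbrev Face (n : ℕ) := Fin n → SignType

/-- The center of a face: its sign vector, read in `ℝⁿ`. -/
def center (s : Face n) : Fin n → ℝ := fun i => s i

/-- A complete flag of faces of the cube, encoded by the order in which the coordinates are fixed
(from the facet down to the vertex) and the signs at which they are fixed. -/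
abbrev CubeFlag (n : ℕ) := Perm (Fin n) × (Fin n → ℤˣ)

namespace CubeFlag

/-- The sign, as a real number, at which a flag fixes the `i`-th coordinate. -/
def sign (f : CubeFlag n) (i : Fin n) : ℝ := ((f.2 i : ℤ) : ℝ)

/-- The `k`-th face of a flag, of codimension `k + 1`. -/
def face (f : CubeFlag n) (k : Fin n) : Face n :=
  fun i => if f.1.symm i ≤ k then SignType.sign (f.sign i) else 0

/-- The matrix whose rows are the points attached by `P` to the faces of a flag. -/
def matrix (P : Face n → Fin n → ℝ) (f : CubeFlag n) : Matrix (Fin n) (Fin n) ℝ :=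
  Matrix.of fun k => P (f.face k)

/-- The coordinates of a vector, in the order and with the signs prescribed by a flag. They are
indexed by `ℕ` and vanish from `n` on, which makes the last coordinate no exception below. -/
def coord (f : CubeFlag n) (w : Fin n → ℝ) (j : ℕ) : ℝ :=
  if h : j < n then f.sign (f.1 ⟨j, h⟩) * w (f.1 ⟨j, h⟩) else 0

lemma sign_eq_one_or (f : CubeFlag n) (i : Fin n) : f.sign i = 1 ∨ f.sign i = -1 := by
  rcases Int.units_eq_one_or (f.2 i) with h | h <;> simp [sign, h]

lemma sign_mul_self (f : CubeFlag n) (i : Fin n) : f.sign i * f.sign i = 1 := by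
  rcases f.sign_eq_one_or i with h | h <;> simp [h]

lemma abs_sign (f : CubeFlag n) (i : Fin n) : |f.sign i| = 1 := by
  rcases f.sign_eq_one_or i with h | h <;> simp [h]

lemma center_face_apply (f : CubeFlag n) (k i : Fin n) :
    center (f.face k) i = if f.1.symm i ≤ k then f.sign i else 0 := by
  rcases f.sign_eq_one_or i with h | h <;> simp only [center, face, h] <;> split_ifs <;> simp

lemma coord_val (f : CubeFlag n) (w : Fin n → ℝ) (k : Fin n) :
    f.coord w k = f.sign (f.1 k) * w (f.1 k) := by
  simp [coord]

lemma abs_coord_le (f : CubeFlag n) (w : Fin n → ℝ) (j : ℕ) : |f.coord w j| ≤ ‖w‖ := by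
  unfold coord
  split_ifs
  · rw [abs_mul, abs_sign, one_mul]
    exact norm_le_pi_norm w _
  · simp

lemma coord_vecMul_center (f : CubeFlag n) (θ : Fin n → ℝ) (j : ℕ) :
    f.coord (θ ᵥ* f.matrix center) j = ∑ k with j ≤ k.val, θ k := by
  unfold coord
  split_ifs with hj
  · simp only [vecMul, dotProduct, matrix, of_apply, center_face_apply, symm_apply_apply,
      Finset.sum_filter, Finset.mul_sum, Fin.le_def]
    refine Finset.sum_congr rfl fun k _ => ?_
    split_ifs
    · linear_combination θ k * f.sign_mul_self (f.1 ⟨j, hj⟩)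
    · simp
  · refine (Finset.sum_eq_zero fun k hk => ?_).symm
    have := (Finset.mem_filter.1 hk).2
    omega

lemma eq_coord_sub_coord (f : CubeFlag n) (θ : Fin n → ℝ) (l : Fin n) :
    θ l = f.coord (θ ᵥ* f.matrix center) l - f.coord (θ ᵥ* f.matrix center) (l + 1) := by
  have tail : (Finset.univ.filter fun k : Fin n => l.val ≤ k)
      = insert l (Finset.univ.filter fun k : Fin n => l.val + 1 ≤ k) := by
    ext k
    simp only [Finset.mem_filter, Finset.mem_univ, true_and, Finset.mem_insert, Fin.ext_iff]
    omega
  rw [coord_vecMul_center, coord_vecMul_center, tail, Finset.sum_insert (by simp),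
    add_sub_cancel_right]

lemma norm_le_two_mul_norm_vecMul_center (f : CubeFlag n) (θ : Fin n → ℝ) :
    ‖θ‖ ≤ 2 * ‖θ ᵥ* f.matrix center‖ := by
  refine (pi_norm_le_iff_of_nonneg (by positivity)).2 fun l => ?_
  rw [Real.norm_eq_abs, f.eq_coord_sub_coord θ l, two_mul]
  exact (abs_sub _ _).trans (add_le_add (f.abs_coord_le _ _) (f.abs_coord_le _ _))

lemma abs_det_matrix_center (f : CubeFlag n) : |(f.matrix center).det| = 1 := by
  let L : Matrix (Fin n) (Fin n) ℝ := Matrix.of fun k l => if l ≤ k then 1 else 0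
  have factor : f.matrix center = L.submatrix (Equiv.refl _) f.1.symm * diagonal f.sign := by
    ext k i
    simp [matrix, center_face_apply, L]
  have det_L : L.det = 1 := by
    rw [Matrix.det_of_isLowerTriangular _ fun i j hij => by simpa [L] using hij]
    simp [L]
  rw [factor, det_mul, abs_mul, abs_det_submatrix_equiv_equiv, det_L, det_diagonal,
    Finset.abs_prod]
  simp [abs_sign]

section Perturbation

variable {P : Face n → Fin n → ℝ} {η : ℝ}

lemma norm_vecMul_matrix_sub_le (hP : ∀ s, ‖P s - center s‖ ≤ η) (f : CubeFlag n)
    (θ : Fin n → ℝ) : ‖θ ᵥ* f.matrix P - θ ᵥ* f.matrix center‖ ≤ n * (‖θ‖ * η) := by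
  have row_sum : θ ᵥ* f.matrix P - θ ᵥ* f.matrix center
      = ∑ k, θ k • (P (f.face k) - center (f.face k)) := by
    ext i
    simp [vecMul, dotProduct, matrix, mul_sub]
  rw [row_sum]
  calc _ ≤ ∑ _k : Fin n, ‖θ‖ * η := norm_sum_le_of_le _ fun k _ => by
        rw [norm_smul]
        exact mul_le_mul (norm_le_pi_norm θ k) (hP _) (norm_nonneg _) (norm_nonneg _)
    _ = n * (‖θ‖ * η) := by simp

lemma norm_le_four_mul_norm_vecMul (hη : 4 * n * η ≤ 1) (hP : ∀ s, ‖P s - center s‖ ≤ η)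
    (f : CubeFlag n) (θ : Fin n → ℝ) : ‖θ‖ ≤ 4 * ‖θ ᵥ* f.matrix P‖ := by
  have h_center := f.norm_le_two_mul_norm_vecMul_center θ
  have h_diff := norm_vecMul_matrix_sub_le hP f θ
  have h_tri := norm_le_norm_add_norm_sub (θ ᵥ* f.matrix P) (θ ᵥ* f.matrix center)
  nlinarith [norm_nonneg θ]

lemma det_matrix_ne_zero (hη : 4 * n * η ≤ 1) (hP : ∀ s, ‖P s - center s‖ ≤ η)
    (f : CubeFlag n) : (f.matrix P).det ≠ 0 := by
  intro h
  obtain ⟨θ, hθ, hθ₀⟩ := exists_vecMul_eq_zero_iff.mpr h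
  refine hθ (norm_le_zero_iff.1 ?_)
  simpa [hθ₀] using norm_le_four_mul_norm_vecMul hη hP f θ

lemma exists_vecMul_eq_norm_sub_le (hη : 4 * n * η ≤ 1) (hP : ∀ s, ‖P s - center s‖ ≤ η)
    (f : CubeFlag n) {β₀ z : Fin n → ℝ} {t : ℝ} (hβ₀ : ‖β₀‖ ≤ 1)
    (hz : ‖z - β₀ ᵥ* f.matrix center‖ ≤ t) :
    ∃ β, β ᵥ* f.matrix P = z ∧ ‖β - β₀‖ ≤ 4 * (t + n * η) := by
  have hη₀ : 0 ≤ η := (norm_nonneg _).trans (hP 0)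
  have unit : IsUnit (f.matrix P).det := (det_matrix_ne_zero hη hP f).isUnit
  have solves : (z ᵥ* (f.matrix P)⁻¹) ᵥ* f.matrix P = z := by
    rw [vecMul_vecMul, nonsing_inv_mul _ unit, vecMul_one]
  refine ⟨_, solves, (norm_le_four_mul_norm_vecMul hη hP f _).trans ?_⟩
  gcongr
  rw [sub_vecMul, solves]
  calc ‖z - β₀ ᵥ* f.matrix P‖
      ≤ ‖z - β₀ ᵥ* f.matrix center‖ + ‖β₀ ᵥ* f.matrix P - β₀ ᵥ* f.matrix center‖ := by
        rw [← sub_sub_sub_cancel_right z (β₀ ᵥ* f.matrix P) (β₀ ᵥ* f.matrix center)]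
        exact norm_sub_le _ _
    _ ≤ t + n * (1 * η) := by
        refine add_le_add hz ((norm_vecMul_matrix_sub_le hP f β₀).trans ?_)
        gcongr
    _ = t + n * η := by rw [one_mul]

end Perturbation

variable (n) in
lemma exists_one_add_sum_coord_sub_le_abs_det : ∃ C : ℝ, 0 ≤ C ∧
    ∀ (P : Face n → Fin n → ℝ) (η : ℝ), 2 * η ≤ 1 → (∀ s, ‖P s - center s‖ ≤ η) →
      ∀ f : CubeFlag n, 1 + ∑ k : Fin n, (f.coord (P (f.face k) - center (f.face k)) k
        - f.coord (P (f.face k) - center (f.face k)) (k + 1)) - C * η ^ 2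
          ≤ |(f.matrix P).det| := by
  obtain ⟨C, hC, det_bound⟩ := exists_one_add_trace_sub_le_det (Fin n)
  refine ⟨C * 4, by positivity, fun P η hη hP f => ?_⟩
  have unit : IsUnit (f.matrix center).det := by
    refine isUnit_iff_ne_zero.2 fun h => ?_
    simpa [h] using f.abs_det_matrix_center
  set E := (f.matrix P - f.matrix center) * (f.matrix center)⁻¹
  have E_mul : E * f.matrix center = f.matrix P - f.matrix center :=
    nonsing_inv_mul_cancel_right _ _ unit
  have row (k : Fin n) : E k ᵥ* f.matrix center = P (f.face k) - center (f.face k) :=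
    congrFun E_mul k
  have factor : f.matrix P = (1 + E) * f.matrix center := by
    rw [Matrix.add_mul, E_mul, Matrix.one_mul, add_sub_cancel]
  have entry (k l : Fin n) : |E k l| ≤ 2 * η := by
    refine (norm_le_pi_norm (E k) l).trans ((f.norm_le_two_mul_norm_vecMul_center _).trans ?_)
    rw [row]
    gcongr
    exact hP _
  have trace : E.trace = ∑ k : Fin n, (f.coord (P (f.face k) - center (f.face k)) k
      - f.coord (P (f.face k) - center (f.face k)) (k + 1)) := by
    refine Finset.sum_congr rfl fun k _ => ?_
    rw [Matrix.diag_apply, f.eq_coord_sub_coord (E k) k, row]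
  have hη₀ : 0 ≤ η := (norm_nonneg _).trans (hP 0)
  rw [factor, det_mul, abs_mul, abs_det_matrix_center, mul_one, ← trace]
  calc _ = 1 + E.trace - C * (2 * η) ^ 2 := by ring
    _ ≤ _ := det_bound E (2 * η) (by positivity) hη entry
    _ ≤ _ := le_abs_self _

variable (n) in
lemma exists_one_sub_le_abs_det : ∃ C : ℝ,
    ∀ (P : Face n → Fin n → ℝ) (η : ℝ), 2 * η ≤ 1 → (∀ s, ‖P s - center s‖ ≤ η) →
      ∀ f : CubeFlag n, 1 - C * η ≤ |(f.matrix P).det| := by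
  obtain ⟨C, hC, det_bound⟩ := exists_one_add_sum_coord_sub_le_abs_det n
  refine ⟨2 * n + C, fun P η hη hP f => le_trans ?_ (det_bound P η hη hP f)⟩
  have hη₀ : 0 ≤ η := (norm_nonneg _).trans (hP 0)
  have linear : |∑ k : Fin n, (f.coord (P (f.face k) - center (f.face k)) k
      - f.coord (P (f.face k) - center (f.face k)) (k + 1))| ≤ n * (2 * η) := by
    calc _ ≤ ∑ _k : Fin n, 2 * η := (Finset.abs_sum_le_sum_abs _ _).trans <|
          Finset.sum_le_sum fun k _ => (abs_sub _ _).trans <| by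
            linarith [f.abs_coord_le (P (f.face k) - center (f.face k)) k,
              f.abs_coord_le (P (f.face k) - center (f.face k)) (k + 1), hP (f.face k)]
      _ = n * (2 * η) := by simp
  have quadratic : C * η ^ 2 ≤ C * η := by
    gcongr
    nlinarith
  linarith [(abs_le.1 linear).1]

-- Reversing the sign of the next coordinate to be fixed does not change the `k`-th face.
lemma sum_coord_succ_eq_zero (k : Fin n) (D : Face n → Fin n → ℝ) :
    ∑ f : CubeFlag n, f.coord (D (f.face k)) (k + 1) = 0 := by
  by_cases hk : k.val + 1 < n
  swap
  · simp [coord, hk]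
  let l : Fin n := ⟨k + 1, hk⟩
  let flip (f : CubeFlag n) : CubeFlag n := (f.1, Function.update f.2 (f.1 l) (-f.2 (f.1 l)))
  have flip_flip : Function.Involutive flip := fun f => by simp [flip]
  have face_flip (f : CubeFlag n) : (flip f).face k = f.face k := by
    ext1 i
    by_cases hi : f.1.symm i ≤ k
    · have : i ≠ f.1 l := by
        rintro rfl
        simp [l, Fin.le_def] at hi
      simp [face, sign, flip, this]
    · simp [face, flip, hi]
  have coord_flip (f : CubeFlag n) (w : Fin n → ℝ) : (flip f).coord w l = -f.coord w l := by
    simp only [coord_val, sign, flip, Function.update_self]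
    push_cast
    ring
  have key : ∑ f : CubeFlag n, f.coord (D (f.face k)) l
      = -∑ f : CubeFlag n, f.coord (D (f.face k)) l := by
    conv_lhs => rw [← Equiv.sum_comp (flip_flip.toPerm flip)]
    simp only [Function.Involutive.coe_toPerm, face_flip, coord_flip, Finset.sum_neg_distrib]
  exact self_eq_neg.1 key

-- Exchanging two fixed coordinates does not change the `k`-th face.
lemma sum_coord_eq_sum_coord {j k : Fin n} (hjk : j ≤ k) (D : Face n → Fin n → ℝ) :
    ∑ f : CubeFlag n, f.coord (D (f.face k)) j = ∑ f : CubeFlag n, f.coord (D (f.face k)) k := by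
  let exch (f : CubeFlag n) : CubeFlag n := (f.1 * swap j k, f.2)
  have exch_exch : Function.Involutive exch := fun f => by simp [exch, mul_assoc]
  have face_exch (f : CubeFlag n) : (exch f).face k = f.face k := by
    ext1 i
    have : (exch f).1.symm i ≤ k ↔ f.1.symm i ≤ k := by
      have : (exch f).1.symm i = swap j k (f.1.symm i) := by simp [exch, symm_apply_eq]
      rw [this, swap_apply_def]
      split_ifs with h₁ h₂ <;> simp [*]
    simp only [face, this, sign, exch]
  have coord_exch (f : CubeFlag n) (w : Fin n → ℝ) : (exch f).coord w j = f.coord w k := by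
    simp [coord_val, sign, exch]
  rw [← Equiv.sum_comp (exch_exch.toPerm exch)]
  simp only [Function.Involutive.coe_toPerm, face_exch, coord_exch]

lemma center_face_dotProduct (f : CubeFlag n) (k : Fin n) (w : Fin n → ℝ) :
    center (f.face k) ⬝ᵥ w = ∑ j ∈ Finset.Iic k, f.coord w j := by
  rw [dotProduct, ← Equiv.sum_comp f.1,
    ← Finset.sum_subset (Finset.subset_univ (Finset.Iic k))]
  · exact Finset.sum_congr rfl fun j hj => by
      simp [center_face_apply, coord_val, Finset.mem_Iic.1 hj]
  · intro j _ hj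
    simp_all [center_face_apply]

lemma sum_coord_eq_sum_dotProduct (k : Fin n) (D : Face n → Fin n → ℝ) :
    ∑ f : CubeFlag n, f.coord (D (f.face k)) k
      = ∑ f : CubeFlag n, ((k : ℝ) + 1)⁻¹ * (center (f.face k) ⬝ᵥ D (f.face k)) := by
  simp only [center_face_dotProduct, ← Finset.mul_sum]
  rw [Finset.sum_comm, Finset.sum_congr rfl fun j hj =>
    sum_coord_eq_sum_coord (Finset.mem_Iic.1 hj) D, Finset.sum_const, Fin.card_Iic, nsmul_eq_mul]
  push_cast
  field_simp

end CubeFlag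

/-- The first variation of the total absolute determinant `∑ f, |det (f.matrix P)|` at the face
centers, in the direction of `P - center`. -/
def firstVariation (P : Face n → Fin n → ℝ) : ℝ :=
  ∑ f : CubeFlag n, ∑ k : Fin n,
    ((k : ℝ) + 1)⁻¹ * (center (f.face k) ⬝ᵥ (P (f.face k) - center (f.face k)))

variable (n) in
lemma exists_card_add_firstVariation_sub_le : ∃ C : ℝ, 0 ≤ C ∧
    ∀ (P : Face n → Fin n → ℝ) (η : ℝ), 2 * η ≤ 1 → (∀ s, ‖P s - center s‖ ≤ η) →
      Fintype.card (CubeFlag n) + firstVariation P - C * η ^ 2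
        ≤ ∑ f : CubeFlag n, |(f.matrix P).det| := by
  obtain ⟨C, hC, det_bound⟩ := CubeFlag.exists_one_add_sum_coord_sub_le_abs_det n
  refine ⟨Fintype.card (CubeFlag n) * C, by positivity, fun P η hη hP => ?_⟩
  refine le_trans (le_of_eq ?_) (Finset.sum_le_sum fun f _ => det_bound P η hη hP f)
  have variation : ∑ f : CubeFlag n, ∑ k : Fin n,
      (f.coord (P (f.face k) - center (f.face k)) k
        - f.coord (P (f.face k) - center (f.face k)) (k + 1)) = firstVariation P := by
    rw [firstVariation, Finset.sum_comm, Finset.sum_comm (s := Finset.univ (α := CubeFlag n))]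
    refine Finset.sum_congr rfl fun k _ => ?_
    rw [Finset.sum_sub_distrib, CubeFlag.sum_coord_succ_eq_zero k fun s => P s - center s,
      CubeFlag.sum_coord_eq_sum_dotProduct k fun s => P s - center s, sub_zero]
  rw [Finset.sum_sub_distrib, Finset.sum_add_distrib, variation]
  simp [mul_assoc]

/-! ### Disjointness of perturbed flag cones -/

section Weight

/-- The vector with entries `‖a‖ - s i * a i` on the support of `s`, whose norm is the distance
from `‖a‖` down to the least of the numbers `s i * a i`. -/
def supportDefect (s : Face n) (a : Fin n → ℝ) : Fin n → ℝ :=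
  fun i => if s i = 0 then 0 else ‖a‖ - s i * a i

/-- The part of a vector living on the free coordinates of a face. -/
def offSupport (s : Face n) (a : Fin n → ℝ) : Fin n → ℝ :=
  fun i => if s i = 0 then a i else 0

/-- The coefficient of `center s` in the expansion of `a` in the face centers of a flag whose cone
contains `a`: the positive part of the least `s i * a i` on the support of `s` minus the largest
`|a i|` off it. The minimum is written through `‖a‖`, which gives the empty support weight `0`. -/
def weight (s : Face n) (a : Fin n → ℝ) : ℝ :=
  max 0 (‖a‖ - ‖supportDefect s a‖ - ‖offSupport s a‖)

lemma norm_supportDefect_sub_le (s : Face n) (a b : Fin n → ℝ) :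
    ‖supportDefect s a - supportDefect s b‖ ≤ 2 * ‖a - b‖ := by
  refine (pi_norm_le_iff_of_nonneg (by positivity)).2 fun i => ?_
  have h_norm := abs_le.1 (abs_norm_sub_norm_le a b)
  have h_coord := abs_le.1 (norm_le_pi_norm (a - b) i)
  simp only [Pi.sub_apply] at h_coord
  simp only [Pi.sub_apply, supportDefect, Real.norm_eq_abs, abs_le]
  rcases (s i).trichotomy with h | h | h <;> simp [h] <;> constructor <;> linarith

lemma norm_offSupport_sub_le (s : Face n) (a b : Fin n → ℝ) :
    ‖offSupport s a - offSupport s b‖ ≤ ‖a - b‖ := by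
  refine (pi_norm_le_iff_of_nonneg (by positivity)).2 fun i => ?_
  by_cases hi : s i = 0
  · simpa [offSupport, hi] using norm_le_pi_norm (a - b) i
  · simp [offSupport, hi]

lemma abs_weight_sub_le (s : Face n) (a b : Fin n → ℝ) :
    |weight s a - weight s b| ≤ 4 * ‖a - b‖ := by
  have h_norm := abs_le.1 (abs_norm_sub_norm_le a b)
  have h_on := abs_le.1 ((abs_norm_sub_norm_le _ _).trans (norm_supportDefect_sub_le s a b))
  have h_off := abs_le.1 ((abs_norm_sub_norm_le _ _).trans (norm_offSupport_sub_le s a b))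
  refine (abs_max_sub_max_le_max _ _ _ _).trans (max_le (by simp) (abs_le.2 ?_))
  constructor <;> linarith

lemma ne_zero_of_weight_pos {s : Face n} {a : Fin n → ℝ} (h : 0 < weight s a) : s ≠ 0 := by
  rintro rfl
  have off : offSupport 0 a = a := funext fun i => if_pos rfl
  have : weight 0 a = 0 := by simp [weight, off]
  exact h.ne' this

lemma norm_offSupport_lt_of_weight_pos {s : Face n} {a : Fin n → ℝ} (h : 0 < weight s a)
    {i : Fin n} (hi : s i ≠ 0) : ‖offSupport s a‖ < s i * a i := by
  have h_pos := (lt_max_iff.1 h).resolve_left (lt_irrefl 0)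
  have h_on := (le_abs_self _).trans (norm_le_pi_norm (supportDefect s a) i)
  simp only [supportDefect, hi, if_false] at h_on
  linarith

end Weight

namespace CubeFlag

variable {f g : CubeFlag n} {γ θ : Fin n → ℝ}

lemma face_apply (f : CubeFlag n) (k l : Fin n) :
    f.face k (f.1 l) = if l ≤ k then SignType.sign (f.sign (f.1 l)) else 0 := by
  simp [face]

lemma face_apply_eq_zero_iff (f : CubeFlag n) (k l : Fin n) :
    f.face k (f.1 l) = 0 ↔ k < l := by
  rcases f.sign_eq_one_or (f.1 l) with h | h <;> simp [face_apply, h]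

lemma face_injective (f : CubeFlag n) : Function.Injective f.face := by
  intro k l h
  have h_zero (m : Fin n) : k < m ↔ l < m := by
    rw [← f.face_apply_eq_zero_iff, h, f.face_apply_eq_zero_iff]
  exact le_antisymm (not_lt.1 fun hlk => lt_irrefl _ ((h_zero k).2 hlk))
    (not_lt.1 fun hkl => lt_irrefl _ ((h_zero l).1 hkl))

lemma apply_eq_sign_mul_coord (f : CubeFlag n) (w : Fin n → ℝ) (l : Fin n) :
    w (f.1 l) = f.sign (f.1 l) * f.coord w l := by
  rw [coord_val, ← mul_assoc, sign_mul_self, one_mul]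

section Cone

lemma coord_vecMul_center_antitone (hγ : ∀ k, 0 < γ k) :
    Antitone (f.coord (γ ᵥ* f.matrix center)) := by
  intro i j hij
  rw [coord_vecMul_center, coord_vecMul_center]
  exact Finset.sum_le_sum_of_subset_of_nonneg
    (Finset.monotone_filter_right _ fun _ _ hk => hij.trans hk) fun k _ _ => (hγ k).le

lemma coord_vecMul_center_nonneg (hγ : ∀ k, 0 < γ k) (j : ℕ) :
    0 ≤ f.coord (γ ᵥ* f.matrix center) j := by
  rw [coord_vecMul_center]
  exact Finset.sum_nonneg fun k _ => (hγ k).le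

lemma coord_vecMul_center_pos (hγ : ∀ k, 0 < γ k) (l : Fin n) :
    0 < f.coord (γ ᵥ* f.matrix center) l := by
  linarith [hγ l, f.eq_coord_sub_coord γ l, coord_vecMul_center_nonneg (f := f) hγ (l + 1)]

lemma coord_vecMul_center_strictAnti (hγ : ∀ k, 0 < γ k) :
    StrictAnti fun l : Fin n => f.coord (γ ᵥ* f.matrix center) l := by
  intro l m hlm
  linarith [hγ l, f.eq_coord_sub_coord γ l,
    coord_vecMul_center_antitone (f := f) hγ (show l.val + 1 ≤ m from hlm)]

lemma abs_vecMul_center_apply (hγ : ∀ k, 0 < γ k) (l : Fin n) :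
    |(γ ᵥ* f.matrix center) (f.1 l)| = f.coord (γ ᵥ* f.matrix center) l := by
  rw [f.apply_eq_sign_mul_coord (γ ᵥ* _) l, abs_mul, abs_sign, one_mul,
    abs_of_pos (coord_vecMul_center_pos hγ l)]

lemma sign_vecMul_center_apply (hγ : ∀ k, 0 < γ k) (l : Fin n) :
    SignType.sign ((γ ᵥ* f.matrix center) (f.1 l)) = SignType.sign (f.sign (f.1 l)) := by
  rw [f.apply_eq_sign_mul_coord (γ ᵥ* _) l, sign_mul, sign_pos (coord_vecMul_center_pos hγ l),
    mul_one]

lemma norm_vecMul_center (hγ : ∀ k, 0 < γ k) :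
    ‖γ ᵥ* f.matrix center‖ = f.coord (γ ᵥ* f.matrix center) 0 := by
  refine le_antisymm ?_ ((le_abs_self _).trans (f.abs_coord_le _ _))
  refine (pi_norm_le_iff_of_nonneg (coord_vecMul_center_nonneg hγ 0)).2 fun i => ?_
  obtain ⟨l, rfl⟩ := f.1.surjective i
  rw [Real.norm_eq_abs, abs_vecMul_center_apply hγ]
  exact coord_vecMul_center_antitone hγ (Nat.zero_le _)

lemma norm_supportDefect_face (hγ : ∀ k, 0 < γ k) (k : Fin n) :
    ‖supportDefect (f.face k) (γ ᵥ* f.matrix center)‖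
      = f.coord (γ ᵥ* f.matrix center) 0 - f.coord (γ ᵥ* f.matrix center) k := by
  set a := γ ᵥ* f.matrix center
  have anti : Antitone (f.coord a) := coord_vecMul_center_antitone hγ
  have h_entry {l : Fin n} (hl : l ≤ k) :
      supportDefect (f.face k) a (f.1 l) = f.coord a 0 - f.coord a l := by
    have h_center := f.center_face_apply k (f.1 l)
    rw [symm_apply_apply, if_pos hl, center] at h_center
    rw [supportDefect, if_neg (by simpa [f.face_apply_eq_zero_iff] using hl), h_center,
      ← f.coord_val, norm_vecMul_center hγ]
  refine le_antisymm ((pi_norm_le_iff_of_nonneg (sub_nonneg.2 (anti (Nat.zero_le _)))).2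
    fun i => ?_) ?_
  · obtain ⟨l, rfl⟩ := f.1.surjective i
    rcases le_or_gt l k with hl | hl
    · rw [h_entry hl, Real.norm_eq_abs, abs_of_nonneg (sub_nonneg.2 (anti (Nat.zero_le _)))]
      exact sub_le_sub_left (anti hl) _
    · rw [supportDefect, if_pos ((f.face_apply_eq_zero_iff k l).2 hl), norm_zero]
      exact sub_nonneg.2 (anti (Nat.zero_le _))
  · rw [← h_entry le_rfl]
    exact (le_abs_self _).trans (norm_le_pi_norm (supportDefect _ a) (f.1 k))

lemma norm_offSupport_face (hγ : ∀ k, 0 < γ k) (k : Fin n) :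
    ‖offSupport (f.face k) (γ ᵥ* f.matrix center)‖ = f.coord (γ ᵥ* f.matrix center) (k + 1) := by
  set a := γ ᵥ* f.matrix center
  refine le_antisymm ((pi_norm_le_iff_of_nonneg (coord_vecMul_center_nonneg hγ _)).2
    fun i => ?_) ?_
  · obtain ⟨l, rfl⟩ := f.1.surjective i
    rcases le_or_gt l k with hl | hl
    · rw [offSupport, if_neg (by simpa [f.face_apply_eq_zero_iff] using hl), norm_zero]
      exact coord_vecMul_center_nonneg hγ _
    · rw [offSupport, if_pos ((f.face_apply_eq_zero_iff k l).2 hl), Real.norm_eq_abs,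
        abs_vecMul_center_apply hγ]
      exact coord_vecMul_center_antitone hγ hl
  · by_cases hk : k.val + 1 < n
    · have h_next : k < (⟨k + 1, hk⟩ : Fin n) := Nat.lt_succ_self _
      have h_entry := norm_le_pi_norm (offSupport (f.face k) a) (f.1 ⟨k + 1, hk⟩)
      rwa [offSupport, if_pos ((f.face_apply_eq_zero_iff k _).2 h_next), Real.norm_eq_abs,
        abs_vecMul_center_apply hγ] at h_entry
    · simp [coord, hk]

lemma weight_face (hγ : ∀ k, 0 < γ k) (k : Fin n) :
    weight (f.face k) (γ ᵥ* f.matrix center) = γ k := by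
  have h_coeff := f.eq_coord_sub_coord γ k
  rw [weight, norm_supportDefect_face hγ, norm_offSupport_face hγ, norm_vecMul_center hγ,
    max_eq_right] <;> linarith [hγ k]

lemma exists_eq_face_of_weight_pos (hγ : ∀ k, 0 < γ k) {s : Face n}
    (hs : 0 < weight s (γ ᵥ* f.matrix center)) : ∃ k, s = f.face k := by
  set a := γ ᵥ* f.matrix center
  have h_sign {i : Fin n} (hi : s i ≠ 0) : s i = SignType.sign (a i) := by
    have h_pos := (norm_nonneg _).trans_lt (norm_offSupport_lt_of_weight_pos hs hi)
    rcases (s i).trichotomy with h | h | h <;> simp_all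
  have h_order {l m : Fin n} (hl : s (f.1 l) ≠ 0) (hm : s (f.1 m) = 0) : l < m := by
    have h_off := norm_le_pi_norm (offSupport s a) (f.1 m)
    have h_on := norm_offSupport_lt_of_weight_pos hs hl
    rw [h_sign hl, _root_.sign_mul_self, abs_vecMul_center_apply hγ] at h_on
    rw [offSupport, if_pos hm, Real.norm_eq_abs, abs_vecMul_center_apply hγ] at h_off
    exact (coord_vecMul_center_strictAnti (f := f) hγ).lt_iff_gt.1 (h_off.trans_lt h_on)
  obtain ⟨i, hi⟩ := Function.ne_iff.1 (ne_zero_of_weight_pos hs)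
  obtain ⟨k, hk, hk_max⟩ := (Finset.univ.filter fun l => s (f.1 l) ≠ 0).exists_max_image id
    ⟨f.1.symm i, by simpa using hi⟩
  simp only [Finset.mem_filter, Finset.mem_univ, true_and, id] at hk hk_max
  refine ⟨k, funext fun j => ?_⟩
  obtain ⟨l, rfl⟩ := f.1.surjective j
  rw [face_apply]
  split_ifs with hl
  · rw [h_sign fun h => (h_order hk h).not_ge hl, sign_vecMul_center_apply hγ]
  · exact not_not.1 fun h => hl (hk_max l h)

lemma sum_smul_face_eq_sum_weight_smul {E : Type*} [AddCommGroup E] [Module ℝ E]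
    (hγ : ∀ k, 0 < γ k) (D : Face n → E) :
    ∑ k, γ k • D (f.face k) = ∑ s, weight s (γ ᵥ* f.matrix center) • D s := by
  calc ∑ k, γ k • D (f.face k)
      = ∑ s ∈ Finset.univ.image f.face, weight s (γ ᵥ* f.matrix center) • D s := by
        rw [Finset.sum_image f.face_injective.injOn]
        simp only [weight_face hγ]
    _ = _ := Finset.sum_subset (Finset.subset_univ _) fun s _ hs => by
        have : ¬ 0 < weight s (γ ᵥ* f.matrix center) := fun h => by
          obtain ⟨k, rfl⟩ := exists_eq_face_of_weight_pos hγ h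
          exact hs (Finset.mem_image_of_mem _ (Finset.mem_univ k))
        rw [le_antisymm (not_lt.1 this) (le_max_left _ _), zero_smul]

-- The flag is read off the point: its order sorts the absolute values of the coordinates.
lemma eq_of_vecMul_center_eq (hγ : ∀ k, 0 < γ k) (hθ : ∀ k, 0 < θ k)
    (h : γ ᵥ* f.matrix center = θ ᵥ* g.matrix center) : f = g := by
  set a := γ ᵥ* f.matrix center with ha
  have f_anti : StrictAnti fun l => |a (f.1 l)| := by
    simpa only [ha, abs_vecMul_center_apply hγ] using coord_vecMul_center_strictAnti hγ
  have g_anti : StrictAnti fun l => |a (g.1 l)| := by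
    simpa only [h, abs_vecMul_center_apply hθ] using coord_vecMul_center_strictAnti hθ
  have sorted : (fun l => -|a (f.1 l)|) = fun l => -|a (g.1 l)| := by
    refine (StrictMono.range_inj f_anti.neg g_anti.neg).1 ?_
    exact (f.1.surjective.range_comp fun i => -|a i|).trans
      (g.1.surjective.range_comp fun i => -|a i|).symm
  have order_eq : f.1 = g.1 := by
    ext1 l
    have h_abs : |a (f.1 l)| = |a (f.1 (f.1.symm (g.1 l)))| := by
      rw [apply_symm_apply]
      exact neg_injective (congrFun sorted l)
    rw [f_anti.injective h_abs, apply_symm_apply]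
    exact f_anti.injective h_abs ▸ rfl
  have sign_eq (i : Fin n) : f.sign i = g.sign i := by
    obtain ⟨l, rfl⟩ := f.1.surjective i
    have h_sign := sign_vecMul_center_apply (f := f) hγ l
    rw [← ha, h, order_eq, sign_vecMul_center_apply hθ, ← order_eq] at h_sign
    rcases f.sign_eq_one_or (f.1 l) with hf | hf <;>
      rcases g.sign_eq_one_or (f.1 l) with hg | hg <;> simp_all
  exact Prod.ext order_eq (funext fun i => Units.ext (Int.cast_injective (sign_eq i)))

-- In terms of the expansion weights the perturbation of a cone point is Lipschitz with constant
-- less than one across all cones, so the perturbation is globally injective.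
lemma eq_of_vecMul_matrix_eq {P : Face n → Fin n → ℝ} {η : ℝ}
    (hη : Fintype.card (Face n) * (4 * η) < 1) (hP : ∀ s, ‖P s - center s‖ ≤ η)
    (hγ : ∀ k, 0 < γ k) (hθ : ∀ k, 0 < θ k) (h : γ ᵥ* f.matrix P = θ ᵥ* g.matrix P) : f = g := by
  refine eq_of_vecMul_center_eq hγ hθ ?_
  have expand {f : CubeFlag n} {γ : Fin n → ℝ} (hγ : ∀ k, 0 < γ k) : γ ᵥ* f.matrix P
      = γ ᵥ* f.matrix center + ∑ s, weight s (γ ᵥ* f.matrix center) • (P s - center s) := by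
    rw [← sum_smul_face_eq_sum_weight_smul hγ fun s => P s - center s]
    ext i
    simp [vecMul, dotProduct, matrix, mul_sub]
  rw [expand hγ, expand hθ] at h
  set a := γ ᵥ* f.matrix center
  set b := θ ᵥ* g.matrix center
  have diff : a - b = ∑ s, (weight s b - weight s a) • (P s - center s) := by
    simp only [sub_smul, Finset.sum_sub_distrib]
    linear_combination (exp := 1) h
  have contract : ‖a - b‖ ≤ Fintype.card (Face n) * (4 * η) * ‖a - b‖ := by
    conv_lhs => rw [diff]
    calc _ ≤ ∑ _s : Face n, 4 * ‖b - a‖ * η := norm_sum_le_of_le _ fun s _ => by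
          rw [norm_smul]
          exact mul_le_mul (abs_weight_sub_le s b a) (hP s) (norm_nonneg _) (by positivity)
      _ = _ := by
          rw [Finset.sum_const, nsmul_eq_mul, Finset.card_univ, norm_sub_rev]
          ring
  exact sub_eq_zero.1 (norm_le_zero_iff.1 (by nlinarith))

end Cone

end CubeFlag

/-! ### Volume of a convex set containing perturbed flag simplices -/

/-- The open simplex with vertices `0` and the standard basis vectors. -/
def cornerSimplex (n : ℕ) : Set (Fin n → ℝ) := {γ | (∀ k, 0 < γ k) ∧ ∑ k, γ k < 1}

lemma isOpen_cornerSimplex (n : ℕ) : IsOpen (cornerSimplex n) := by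
  have : cornerSimplex n = (⋂ k, {γ | 0 < γ k}) ∩ {γ | ∑ k, γ k < 1} := by
    ext γ
    simp [cornerSimplex]
  rw [this]
  exact (isOpen_iInter_of_finite fun k => isOpen_lt continuous_const (continuous_apply k)).inter
    (isOpen_lt (by fun_prop) continuous_const)

lemma measurableSet_cornerSimplex (n : ℕ) : MeasurableSet (cornerSimplex n) :=
  (isOpen_cornerSimplex n).measurableSet

lemma volume_preimage_units_mul (σ : Fin n → ℤˣ) (S : Set (Fin n → ℝ)) :
    volume {x : Fin n → ℝ | (fun i => ((σ i : ℤ) : ℝ) * x i) ∈ S} = volume S := by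
  let L := Matrix.toLin' (diagonal fun i => ((σ i : ℤ) : ℝ))
  have det_L : |LinearMap.det L| = 1 := by
    simp only [L, LinearMap.det_toLin', det_diagonal, Finset.abs_prod]
    refine Finset.prod_eq_one fun i _ => ?_
    rcases Int.units_eq_one_or (σ i) with h | h <;> simp [h]
  have det_ne : LinearMap.det L ≠ 0 := fun h => by simp [h] at det_L
  have preimage : {x : Fin n → ℝ | (fun i => ((σ i : ℤ) : ℝ) * x i) ∈ S} = L ⁻¹' S := by
    ext x
    have : L x = fun i => ((σ i : ℤ) : ℝ) * x i := by ext i; simp [L, mulVec_diagonal]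
    simp [this]
  rw [preimage, Measure.addHaar_preimage_linearMap _ det_ne, abs_inv, det_L]
  simp

lemma crossPolytope_subset_iUnion_preimage_cornerSimplex (n : ℕ) :
    {x : Fin n → ℝ | ∑ i, |x i| < 1} ⊆
      (⋃ σ : Fin n → ℤˣ, {x | (fun i => ((σ i : ℤ) : ℝ) * x i) ∈ cornerSimplex n}) ∪
        ⋃ i, {x | x i = 0} := by
  intro x hx
  by_cases h : ∃ i, x i = 0
  · exact Or.inr (by simpa using h)
  have exists_unit (i : Fin n) : ∃ u : ℤˣ, ((u : ℤ) : ℝ) * x i = |x i| := by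
    rcases le_total 0 (x i) with h | h
    · exact ⟨1, by simp [abs_of_nonneg h]⟩
    · exact ⟨-1, by simp [abs_of_nonpos h]⟩
  choose σ hσ using exists_unit
  refine Or.inl (Set.mem_iUnion.2 ⟨σ, ?_⟩)
  simp only [Set.mem_ofPred_eq, cornerSimplex, hσ]
  exact ⟨fun k => abs_pos.2 fun hk => h ⟨k, hk⟩, hx⟩

lemma volume_crossPolytope (hn : 0 < n) :
    volume {x : Fin n → ℝ | ∑ i, |x i| < 1} = 2 ^ n * ENNReal.ofReal (1 / n.factorial) := by
  have : Nonempty (Fin n) := ⟨⟨0, hn⟩⟩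
  have h := volume_sum_rpow_lt_one (Fin n) (p := 1) le_rfl
  simp only [Real.rpow_one, Fintype.card_fin, div_one, Real.Gamma_nat_eq_factorial,
    Real.Gamma_add_one one_ne_zero, Real.Gamma_one, mul_one] at h
  rw [h, div_eq_mul_one_div, ENNReal.ofReal_mul (by positivity), ENNReal.ofReal_pow (by norm_num),
    ENNReal.ofReal_ofNat]

lemma inv_factorial_le_volume_cornerSimplex (hn : 0 < n) :
    ENNReal.ofReal (1 / n.factorial) ≤ volume (cornerSimplex n) := by
  have volume_hyperplanes : volume (⋃ i, {x : Fin n → ℝ | x i = 0}) = 0 :=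
    measure_iUnion_null fun i => Measure.pi_hyperplane (fun _ => (volume : Measure ℝ)) i 0
  have h : 2 ^ n * ENNReal.ofReal (1 / n.factorial) ≤ 2 ^ n * volume (cornerSimplex n) := calc
    _ = volume {x : Fin n → ℝ | ∑ i, |x i| < 1} := (volume_crossPolytope hn).symm
    _ ≤ _ := (measure_mono (crossPolytope_subset_iUnion_preimage_cornerSimplex n)).trans
      (measure_union_le _ _)
    _ ≤ ∑ σ : Fin n → ℤˣ,
          volume {x : Fin n → ℝ | (fun i => ((σ i : ℤ) : ℝ) * x i) ∈ cornerSimplex n} + 0 := by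
      rw [volume_hyperplanes]
      gcongr
      exact (measure_iUnion_le _).trans (tsum_fintype _).le
    _ = 2 ^ n * volume (cornerSimplex n) := by
      simp [volume_preimage_units_mul]
  exact (ENNReal.mul_le_mul_iff_right (by simp) (by simp)).1 h

lemma volume_preimage_sub_smul (b : Fin n → ℝ) {c : ℝ} (hc : 1 - c * ∑ k, b k ≠ 0)
    (S : Set (Fin n → ℝ)) :
    volume {γ : Fin n → ℝ | γ - (c * (∑ k, γ k - 1)) • b ∈ S}
      = ENNReal.ofReal |1 - c * ∑ k, b k|⁻¹ * volume S := by
  let M : Matrix (Fin n) (Fin n) ℝ :=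
    1 + replicateCol Unit (-(c • b)) * replicateRow Unit (fun _ => (1 : ℝ))
  have det_M : LinearMap.det (Matrix.toLin' M) = 1 - c * ∑ k, b k := by
    rw [LinearMap.det_toLin', det_one_add_replicateCol_mul_replicateRow]
    simp [dotProduct, Finset.mul_sum, sub_eq_add_neg]
  have preimage : {γ : Fin n → ℝ | γ - (c * (∑ k, γ k - 1)) • b ∈ S}
      = Matrix.toLin' M ⁻¹' ((fun x => x + c • b) ⁻¹' S) := by
    ext γ
    have : Matrix.toLin' M γ + c • b = γ - (c * (∑ k, γ k - 1)) • b := by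
      ext i
      simp only [M, toLin'_apply, add_mulVec, one_mulVec, Pi.add_apply, mulVec, dotProduct,
        Matrix.mul_apply, replicateCol_apply, replicateRow_apply, Pi.neg_apply, Pi.smul_apply,
        Pi.sub_apply, smul_eq_mul, Finset.univ_unique, Finset.sum_singleton, mul_one,
        ← Finset.mul_sum]
      ring
    simp only [Set.mem_ofPred_eq, Set.mem_preimage, this]
  rw [preimage, Measure.addHaar_preimage_linearMap _ (det_M.symm ▸ hc), det_M,
    measure_preimage_add_right, abs_inv]

/-- The part of `conv {0, e₁, …, eₙ, b}` beyond the facet `∑ γ = 1` of the corner simplex. -/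
lemma exists_measurableSet_beyond_cornerSimplex {b : Fin n → ℝ} (hb : 0 ≤ b)
    (hb1 : 1 ≤ ∑ k, b k) :
    ∃ D : Set (Fin n → ℝ), MeasurableSet D ∧
      volume D = ENNReal.ofReal (∑ k, b k - 1) * volume (cornerSimplex n) ∧
      ∀ γ ∈ D, 1 ≤ ∑ k, γ k ∧ (∀ k, 0 < γ k) ∧
        ∃ μ ∈ cornerSimplex n, γ = (1 - ∑ k, μ k) • b + μ := by
  rcases hb1.eq_or_lt with h1 | h1
  · exact ⟨∅, MeasurableSet.empty, by simp [← h1], by simp⟩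
  set S := ∑ k, b k with hS
  set c := (S - 1)⁻¹ with hc
  have c_pos : 0 < c := inv_pos.2 (by linarith)
  have c_mul : c * (S - 1) = 1 := inv_mul_cancel₀ (by linarith)
  have det_eq : 1 - c * S = -c := by linarith
  refine ⟨{γ | γ - (c * (∑ k, γ k - 1)) • b ∈ cornerSimplex n}, ?_, ?_, fun γ hγ => ?_⟩
  · exact (measurableSet_cornerSimplex n).preimage (by fun_prop)
  · rw [volume_preimage_sub_smul b (by rw [← hS, det_eq]; exact neg_ne_zero.2 c_pos.ne'), ← hS,
      det_eq, abs_neg, abs_of_pos c_pos, hc, inv_inv]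
  · set μ := γ - (c * (∑ k, γ k - 1)) • b with hμ
    obtain ⟨μ_pos, sum_μ_lt⟩ : μ ∈ cornerSimplex n := hγ
    have one_sub : 1 - ∑ k, μ k = c * (∑ k, γ k - 1) := by
      simp only [hμ, Pi.sub_apply, Pi.smul_apply, smul_eq_mul, Finset.sum_sub_distrib,
        ← Finset.mul_sum, ← hS]
      linear_combination (∑ k, γ k - 1) * c_mul
    have γ_eq : γ = (1 - ∑ k, μ k) • b + μ := by rw [one_sub, hμ, add_sub_cancel]
    refine ⟨?_, fun k => ?_, μ, ⟨μ_pos, sum_μ_lt⟩, γ_eq⟩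
    · have : 0 < c * (∑ k, γ k - 1) := one_sub ▸ sub_pos.2 sum_μ_lt
      linarith [(pos_iff_pos_of_mul_pos this).1 c_pos]
    · rw [γ_eq]
      exact add_pos_of_nonneg_of_pos (mul_nonneg (sub_pos.2 sum_μ_lt).le (hb k)) (μ_pos k)

lemma exists_measurableSet_sum_div_factorial_le_volume (hn : 0 < n) {b : Fin n → ℝ} (hb : 0 ≤ b)
    (hb1 : 1 ≤ ∑ k, b k) :
    ∃ G : Set (Fin n → ℝ), MeasurableSet G ∧
      ENNReal.ofReal ((∑ k, b k) / n.factorial) ≤ volume G ∧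
      ∀ γ ∈ G, (∀ k, 0 < γ k) ∧
        ∃ c, ∃ μ : Fin n → ℝ, 0 ≤ c ∧ 0 ≤ μ ∧ c + ∑ k, μ k ≤ 1 ∧ γ = c • b + μ := by
  obtain ⟨D, D_meas, D_vol, hD⟩ := exists_measurableSet_beyond_cornerSimplex hb hb1
  refine ⟨cornerSimplex n ∪ D, (measurableSet_cornerSimplex n).union D_meas, ?_, ?_⟩
  · have disj : Disjoint (cornerSimplex n) D :=
      Set.disjoint_left.2 fun γ h₁ h₂ => h₁.2.not_ge (hD γ h₂).1
    calc ENNReal.ofReal ((∑ k, b k) / n.factorial)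
        = ENNReal.ofReal (1 + (∑ k, b k - 1)) * ENNReal.ofReal (1 / n.factorial) := by
          rw [← ENNReal.ofReal_mul (by linarith)]
          ring_nf
      _ ≤ ENNReal.ofReal (1 + (∑ k, b k - 1)) * volume (cornerSimplex n) := by
          gcongr
          exact inv_factorial_le_volume_cornerSimplex hn
      _ = volume (cornerSimplex n ∪ D) := by
          rw [measure_union disj D_meas, D_vol, ENNReal.ofReal_add zero_le_one (by linarith),
            add_mul, ENNReal.ofReal_one, one_mul]
  · rintro γ (hγ | hγ)
    · exact ⟨hγ.1, 0, γ, le_rfl, fun k => (hγ.1 k).le, by simpa using hγ.2.le, by simp⟩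
    · obtain ⟨-, γ_pos, μ, hμ, γ_eq⟩ := hD γ hγ
      exact ⟨γ_pos, _, μ, (sub_pos.2 hμ.2).le, fun k => (hμ.1 k).le, by simp, γ_eq⟩

lemma sum_smul_mem_of_zero_mem {ι E : Type*} [Fintype ι] [AddCommGroup E] [Module ℝ E] {K : Set E}
    (hK : Convex ℝ K) (h0 : (0 : E) ∈ K) {w : ι → ℝ} {z : ι → E} (hw : 0 ≤ w)
    (hw1 : ∑ i, w i ≤ 1) (hz : ∀ i, z i ∈ K) : ∑ i, w i • z i ∈ K := by
  have := hK.sum_mem (t := Finset.univ) (w := fun o : Option ι => o.elim (1 - ∑ i, w i) w)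
    (z := fun o => o.elim 0 z) (by rintro (_ | i) _; exacts [sub_nonneg.2 hw1, hw i])
    (by simp [Fintype.sum_option]) (by rintro (_ | i) _; exacts [h0, hz i])
  simpa [Fintype.sum_option] using this

lemma sum_abs_det_mul_volume_le {ι : Type*} [Fintype ι] {M : ι → Matrix (Fin n) (Fin n) ℝ}
    {G : ι → Set (Fin n → ℝ)} {K : Set (Fin n → ℝ)} (hM : ∀ i, (M i).det ≠ 0)
    (hG : ∀ i, MeasurableSet (G i)) (hK : ∀ i, ∀ γ ∈ G i, γ ᵥ* M i ∈ K)
    (hdisj : ∀ i j, ∀ γ ∈ G i, ∀ θ ∈ G j, γ ᵥ* M i = θ ᵥ* M j → i = j) :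
    ∑ i, ENNReal.ofReal |(M i).det| * volume (G i) ≤ volume K := by
  let A i := Matrix.toLin' ((M i)⁻¹)ᵀ
  have vecMul_A (i x) : A i x ᵥ* M i = x := by
    simp only [A, toLin'_apply, mulVec_transpose, vecMul_vecMul,
      nonsing_inv_mul _ (hM i).isUnit, vecMul_one]
  have det_A (i) : LinearMap.det (A i) = (M i).det⁻¹ := by
    simp only [A, LinearMap.det_toLin', det_transpose, det_nonsing_inv, Ring.inverse_eq_inv']
  have volume_preimage (i) :
      volume (A i ⁻¹' G i) = ENNReal.ofReal |(M i).det| * volume (G i) := by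
    rw [Measure.addHaar_preimage_linearMap _ (det_A i ▸ inv_ne_zero (hM i)), det_A, inv_inv]
  have disjoint : Pairwise (Function.onFun Disjoint fun i => A i ⁻¹' G i) := fun i j hij =>
    Set.disjoint_left.2 fun x hi hj =>
      hij (hdisj i j _ hi _ hj (by rw [vecMul_A, vecMul_A]))
  calc _ = volume (⋃ i, A i ⁻¹' G i) := by
        rw [measure_iUnion disjoint fun i =>
          (A i).continuous_of_finiteDimensional.measurable (hG i), tsum_fintype]
        simp only [volume_preimage]
    _ ≤ volume K := measure_mono <| Set.iUnion_subset fun i x hx => by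
        simpa only [vecMul_A] using hK i _ hx

namespace CubeFlag

variable {P : Face n → Fin n → ℝ} {η : ℝ} {lam : Fin n → ℝ} {K : Set (Fin n → ℝ)}

lemma vecMul_mul_matrix (f : CubeFlag n) (γ : Fin n → ℝ) :
    (γ * lam) ᵥ* f.matrix P = ∑ k, γ k • lam k • P (f.face k) := by
  ext i
  simp [vecMul, dotProduct, matrix, mul_assoc]

lemma vecMul_mul_matrix_mem (hK : Convex ℝ K) (h0 : 0 ∈ K) (f : CubeFlag n)
    (hmem : ∀ k, lam k • P (f.face k) ∈ K) {b μ : Fin n → ℝ}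
    (hbK : (b * lam) ᵥ* f.matrix P ∈ K) {c : ℝ} (hc : 0 ≤ c) (hμ : 0 ≤ μ)
    (hsum : c + ∑ k, μ k ≤ 1) : ((c • b + μ) * lam) ᵥ* f.matrix P ∈ K := by
  have h := sum_smul_mem_of_zero_mem hK h0 (w := fun o : Option (Fin n) => o.elim c μ)
    (z := fun o => o.elim ((b * lam) ᵥ* f.matrix P) fun k => lam k • P (f.face k))
    (by rintro (_ | k); exacts [hc, hμ k]) (by simpa [Fintype.sum_option] using hsum)
    (by rintro (_ | k); exacts [hbK, hmem k])
  rw [add_mul, smul_mul_assoc, add_vecMul, smul_vecMul, vecMul_mul_matrix f μ]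
  simpa [Fintype.sum_option] using h

lemma ofReal_sum_abs_det_mul_le_volume (hn : 0 < n) (hη : Fintype.card (Face n) * (4 * η) < 1)
    (hη' : 4 * n * η ≤ 1) (hP : ∀ s, ‖P s - center s‖ ≤ η) (hK : Convex ℝ K) (h0 : 0 ∈ K)
    (hlam : ∀ k, 0 < lam k) (hmem : ∀ (f : CubeFlag n) k, lam k • P (f.face k) ∈ K)
    {b : CubeFlag n → Fin n → ℝ} (hb : ∀ f, 0 ≤ b f) (hb1 : ∀ f, 1 ≤ ∑ k, b f k)
    (hbK : ∀ f, (b f * lam) ᵥ* f.matrix P ∈ K) :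
    ENNReal.ofReal ((∏ k, lam k) / n.factorial *
      ∑ f : CubeFlag n, |(f.matrix P).det| * ∑ k, b f k) ≤ volume K := by
  choose G G_meas G_vol hG using fun f =>
    exists_measurableSet_sum_div_factorial_le_volume hn (hb f) (hb1 f)
  have prod_pos : 0 < ∏ k, lam k := Finset.prod_pos fun k _ => hlam k
  have det_eq (f : CubeFlag n) :
      (diagonal lam * f.matrix P).det = (∏ k, lam k) * (f.matrix P).det := by
    rw [det_mul, det_diagonal]
  have vecMul_eq (f : CubeFlag n) (γ : Fin n → ℝ) :
      γ ᵥ* (diagonal lam * f.matrix P) = (γ * lam) ᵥ* f.matrix P := by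
    rw [← vecMul_vecMul]
    congr 1
    ext k
    exact vecMul_diagonal _ _ _
  refine le_trans ?_ (sum_abs_det_mul_volume_le (M := fun f => diagonal lam * f.matrix P)
    (G := G) (K := K) (fun f => ?_) G_meas (fun f γ hγ => ?_) fun f g γ hγ θ hθ h => ?_)
  · rw [Finset.mul_sum, ENNReal.ofReal_sum_of_nonneg fun f _ => mul_nonneg (by positivity)
      (mul_nonneg (abs_nonneg _) (zero_le_one.trans (hb1 f)))]
    refine Finset.sum_le_sum fun f _ => ?_
    calc _ = ENNReal.ofReal |(diagonal lam * f.matrix P).det| *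
            ENNReal.ofReal ((∑ k, b f k) / n.factorial) := by
          rw [← ENNReal.ofReal_mul (abs_nonneg _), det_eq, abs_mul, abs_of_pos prod_pos]
          ring_nf
      _ ≤ _ := by gcongr; exact G_vol f
  · rw [det_eq]
    exact mul_ne_zero prod_pos.ne' (det_matrix_ne_zero hη' hP f)
  · obtain ⟨-, c, μ, hc, hμ, hsum, rfl⟩ := hG f γ hγ
    rw [vecMul_eq]
    exact vecMul_mul_matrix_mem hK h0 f (hmem f) (hbK f) hc hμ hsum
  · rw [vecMul_eq, vecMul_eq] at h
    exact eq_of_vecMul_matrix_eq hη hP (fun k => mul_pos ((hG f γ hγ).1 k) (hlam k))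
      (fun k => mul_pos ((hG g θ hθ).1 k) (hlam k)) h

lemma barycenter_mem (hK : Convex ℝ K) (h0 : 0 ∈ K) (f : CubeFlag n)
    (hmem : ∀ k, lam k • P (f.face k) ∈ K) :
    ((fun _ => (n : ℝ)⁻¹) * lam) ᵥ* f.matrix P ∈ K := by
  rw [vecMul_mul_matrix]
  exact sum_smul_mem_of_zero_mem hK h0 (fun _ => by positivity) (by simpa using mul_inv_le_one)
    hmem

lemma ofReal_sum_abs_det_le_volume (hn : 0 < n) (hη : Fintype.card (Face n) * (4 * η) < 1)
    (hη' : 4 * n * η ≤ 1) (hP : ∀ s, ‖P s - center s‖ ≤ η) (hK : Convex ℝ K) (h0 : 0 ∈ K)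
    (hlam : ∀ k, 0 < lam k) (hmem : ∀ (f : CubeFlag n) k, lam k • P (f.face k) ∈ K) :
    ENNReal.ofReal ((∏ k, lam k) / n.factorial * ∑ f : CubeFlag n, |(f.matrix P).det|)
      ≤ volume K := by
  have sum_inv : ∑ _k : Fin n, (n : ℝ)⁻¹ = 1 := by simp [hn.ne']
  simpa only [sum_inv, mul_one] using ofReal_sum_abs_det_mul_le_volume hn hη hη' hP hK h0 hlam
    hmem (fun _ _ => by positivity) (fun _ => sum_inv.ge)
    fun f => barycenter_mem hK h0 f (hmem f)

/-- Averaging `β` with the barycenter makes its coefficients nonnegative. -/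
lemma ofReal_sum_abs_det_add_le_volume (hn : 0 < n) (hη : Fintype.card (Face n) * (4 * η) < 1)
    (hη' : 4 * n * η ≤ 1) (hP : ∀ s, ‖P s - center s‖ ≤ η) (hK : Convex ℝ K) (h0 : 0 ∈ K)
    (hlam : ∀ k, 0 < lam k) (hmem : ∀ (f : CubeFlag n) k, lam k • P (f.face k) ∈ K)
    (f₀ : CubeFlag n) {β : Fin n → ℝ} (hβ : ∀ k, -(n : ℝ)⁻¹ ≤ β k) (hβ1 : 1 ≤ ∑ k, β k)
    (hβK : (β * lam) ᵥ* f₀.matrix P ∈ K) :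
    ENNReal.ofReal ((∏ k, lam k) / n.factorial * (∑ f : CubeFlag n, |(f.matrix P).det| +
      (∑ k, β k - 1) / 2 * |(f₀.matrix P).det|)) ≤ volume K := by
  let bary : Fin n → ℝ := fun _ => (n : ℝ)⁻¹
  have sum_bary : ∑ k, bary k = 1 := by simp [bary, hn.ne']
  let avg := (1 / 2 : ℝ) • β + (1 / 2 : ℝ) • bary
  have sum_avg : ∑ k, avg k = 1 + (∑ k, β k - 1) / 2 := by
    simp only [avg, Pi.add_apply, Pi.smul_apply, smul_eq_mul, Finset.sum_add_distrib,
      ← Finset.mul_sum, sum_bary]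
    ring
  let b := Function.update (fun _ => bary) f₀ avg
  have sum_b (f) : ∑ k, b f k = 1 + if f = f₀ then (∑ k, β k - 1) / 2 else 0 := by
    by_cases h : f = f₀
    · subst h; simp [b, sum_avg]
    · simp [b, h, sum_bary]
  have key := ofReal_sum_abs_det_mul_le_volume hn hη hη' hP hK h0 hlam hmem (b := b)
    (fun f => ?_) (fun f => ?_) fun f => ?_
  · simpa only [sum_b, mul_add, mul_one, mul_ite, mul_zero, Finset.sum_add_distrib,
      Finset.sum_ite_eq', Finset.mem_univ, if_true, mul_comm |(f₀.matrix P).det|] using key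
  · by_cases h : f = f₀
    · subst h
      intro k
      have := hβ k
      simp only [b, avg, bary, Function.update_self, Pi.zero_apply, Pi.add_apply, Pi.smul_apply,
        smul_eq_mul]
      linarith
    · simp only [b, bary, Function.update_of_ne h]
      exact fun k => by positivity
  · rw [sum_b]
    split_ifs <;> linarith
  · by_cases h : f = f₀
    · subst h
      simp only [b, avg, Function.update_self, add_mul, smul_mul_assoc, add_vecMul, smul_vecMul]
      exact hK hβK (barycenter_mem hK h0 f (hmem f)) (by norm_num) (by norm_num) (by norm_num)
    · simp only [b, Function.update_of_ne h]
      exact barycenter_mem hK h0 f (hmem f)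

end CubeFlag

/-! ### Polarity with respect to the dot product -/

/-- The polar body in the coordinate space `Fin n → ℝ`, whose norm is the gauge of the cube. -/
def dotPolar (K : Set (Fin n → ℝ)) : Set (Fin n → ℝ) := {y | ∀ x ∈ K, x ⬝ᵥ y ≤ 1}

variable {K : Set (Fin n → ℝ)}

lemma zero_mem_dotPolar (K : Set (Fin n → ℝ)) : 0 ∈ dotPolar K := fun x _ => by simp

lemma convex_dotPolar (K : Set (Fin n → ℝ)) : Convex ℝ (dotPolar K) := by
  intro y hy z hz a b ha hb hab x hx
  rw [dotProduct_add, dotProduct_smul, dotProduct_smul, smul_eq_mul, smul_eq_mul]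
  nlinarith [hy x hx, hz x hx]

lemma exists_mem_dotPolar_one_lt (hK : Convex ℝ K) (hclosed : IsClosed K) (h0 : 0 ∈ K)
    {z : Fin n → ℝ} (hz : z ∉ K) : ∃ y ∈ dotPolar K, 1 < z ⬝ᵥ y := by
  obtain ⟨f, u, hfu, huz⟩ := geometric_hahn_banach_closed_point hK hclosed hz
  obtain ⟨y, hy⟩ := (dotProductEquiv ℝ (Fin n)).surjective f
  have f_apply (x) : f x = x ⬝ᵥ y := by
    rw [dotProduct_comm]
    exact (LinearMap.congr_fun hy x).symm
  have u_pos : 0 < u := by simpa using hfu 0 h0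
  refine ⟨u⁻¹ • y, fun x hx => ?_, ?_⟩
  · rw [dotProduct_smul, smul_eq_mul, ← f_apply, inv_mul_le_one₀ u_pos]
    exact (hfu x hx).le
  · rwa [dotProduct_smul, smul_eq_mul, ← f_apply, one_lt_inv_mul₀ u_pos]

lemma exists_mem_dotPolar_dotProduct_eq (hK : Convex ℝ K) (h0 : K ∈ nhds 0)
    (E : Submodule ℝ (Fin n → ℝ)) {l : Fin n → ℝ} (hl : ∀ w ∈ K, w ∈ E → w ⬝ᵥ l ≤ 1) :
    ∃ y ∈ dotPolar K, ∀ w ∈ E, w ⬝ᵥ y = w ⬝ᵥ l := by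
  have absorbent : Absorbent ℝ K := absorbent_nhds_zero h0
  have le_gauge (w) (hw : w ∈ E) : l ⬝ᵥ w ≤ gauge K w := by
    refine le_of_forall_gt fun r hr => ?_
    obtain ⟨b, b_pos, hbr, x, hx, rfl⟩ := exists_lt_of_gauge_lt absorbent hr
    have hxE : x ∈ E := (E.smul_mem_iff b_pos.ne').1 hw
    have := hl x hx hxE
    change l ⬝ᵥ (b • x) < r
    rw [dotProduct_comm, smul_dotProduct, smul_eq_mul]
    nlinarith
  obtain ⟨g, g_eq, g_le⟩ := exists_extension_of_le_sublinear
    ⟨E, (dotProductEquiv ℝ (Fin n) l).comp E.subtype⟩ (gauge K)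
    (fun c hc x => by simpa using gauge_smul_of_nonneg hc.le x) (gauge_add_le hK absorbent)
    fun w => le_gauge w w.2
  obtain ⟨y, rfl⟩ := (dotProductEquiv ℝ (Fin n)).surjective g
  simp only [dotProductEquiv_apply_apply] at g_eq g_le
  refine ⟨y, fun x hx => ?_, fun w hw => ?_⟩
  · rw [dotProduct_comm]
    exact (g_le x).trans (gauge_le_one_of_mem hx)
  · rw [dotProduct_comm, dotProduct_comm w l]
    exact g_eq ⟨w, hw⟩

lemma mul_sum_abs_le_one_of_mem_dotPolar {r : ℝ} (hr : 0 ≤ r) (hK : Metric.closedBall 0 r ⊆ K)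
    {y : Fin n → ℝ} (hy : y ∈ dotPolar K) : r * ∑ i, |y i| ≤ 1 := by
  let x : Fin n → ℝ := fun i => r * SignType.sign (y i)
  have x_mem : x ∈ K := by
    refine hK (mem_closedBall_zero_iff.2 ((pi_norm_le_iff_of_nonneg hr).2 fun i => ?_))
    have : |((SignType.sign (y i) : SignType) : ℝ)| ≤ 1 := by
      rcases lt_trichotomy (y i) 0 with h | h | h <;> simp [h]
    simpa [x, abs_of_nonneg hr] using mul_le_of_le_one_right hr this
  calc r * ∑ i, |y i| = x ⬝ᵥ y := by
        rw [Finset.mul_sum]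
        exact Finset.sum_congr rfl fun i _ => by simp only [x, mul_assoc, _root_.sign_mul_self]
    _ ≤ 1 := hy x x_mem

lemma exists_nearest_point_dotProduct {C : Set (Fin n → ℝ)} (hC : Convex ℝ C)
    (hclosed : IsClosed C) (hne : C.Nonempty) (p : Fin n → ℝ) :
    ∃ x ∈ C, ∀ w ∈ C, (p - x) ⬝ᵥ (w - x) ≤ 0 := by
  let C' : Set (EuclideanSpace ℝ (Fin n)) := WithLp.ofLp ⁻¹' C
  have C'_closed : IsClosed C' := hclosed.preimage (PiLp.continuous_ofLp 2 _)
  have C'_convex : Convex ℝ C' :=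
    hC.linear_preimage (WithLp.linearEquiv 2 ℝ (Fin n → ℝ)).toLinearMap
  obtain ⟨w₀, hw₀⟩ := hne
  obtain ⟨x, hx, hmin⟩ := exists_norm_eq_iInf_of_complete_convex ⟨WithLp.toLp 2 w₀, hw₀⟩
    C'_closed.isComplete C'_convex (WithLp.toLp 2 p)
  refine ⟨x.ofLp, hx, fun w hw => ?_⟩
  have := (norm_eq_iInf_iff_real_inner_le_zero C'_convex hx).1 hmin (WithLp.toLp 2 w) hw
  rwa [EuclideanSpace.inner_eq_star_dotProduct, dotProduct_comm] at this

/-! ### Dual boundary points near the face centers -/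

variable {d : ℝ}

/-- The codimension of a face: the number of its fixed coordinates. -/
def codim (s : Face n) : ℕ := (Finset.univ.filter fun i => s i ≠ 0).card

/-- The vectors vanishing at the free coordinates of a face, which form its normal space. -/
def normalSpace (s : Face n) : Submodule ℝ (Fin n → ℝ) := Submodule.pi {i | s i = 0} fun _ => ⊥

lemma mem_normalSpace {s : Face n} {w : Fin n → ℝ} :
    w ∈ normalSpace s ↔ ∀ i, s i = 0 → w i = 0 := by
  simp [normalSpace]

lemma abs_center (s : Face n) (i : Fin n) : |center s i| = if s i = 0 then 0 else 1 := by
  simp only [center]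
  cases s i <;> simp

lemma abs_center_le_one (s : Face n) (i : Fin n) : |center s i| ≤ 1 := by
  rw [abs_center]
  split_ifs <;> simp

lemma center_mul_self (s : Face n) (i : Fin n) :
    center s i * center s i = if s i = 0 then 0 else 1 := by
  simp only [center]
  cases s i <;> simp

lemma center_mem_normalSpace (s : Face n) : center s ∈ normalSpace s :=
  mem_normalSpace.2 fun i hi => by simp [center, hi]

lemma sum_ite_eq_codim (s : Face n) : ∑ i, (if s i = 0 then (0 : ℝ) else 1) = codim s := by
  rw [codim, Finset.card_filter]
  push_cast
  exact Finset.sum_congr rfl fun i _ => by split_ifs <;> simp_all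

lemma center_dotProduct_center (s : Face n) : center s ⬝ᵥ center s = codim s := by
  rw [← sum_ite_eq_codim]
  exact Finset.sum_congr rfl fun i _ => center_mul_self s i

lemma codim_le (s : Face n) : codim s ≤ n := by
  simpa [codim] using Finset.card_filter_le (Finset.univ : Finset (Fin n)) (fun i => s i ≠ 0)

lemma one_le_codim {s : Face n} (hs : s ≠ 0) : 1 ≤ codim s := by
  obtain ⟨i, hi⟩ := Function.ne_iff.1 hs
  exact Finset.card_pos.2 ⟨i, by simpa using hi⟩

lemma smul_center_mem {r : ℝ} (hr : 0 ≤ r) (hK : Metric.closedBall 0 r ⊆ K) (s : Face n) :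
    r • center s ∈ K := by
  refine hK (mem_closedBall_zero_iff.2 ?_)
  rw [norm_smul, Real.norm_of_nonneg hr]
  exact mul_le_of_le_one_right hr
    ((pi_norm_le_iff_of_nonneg zero_le_one).2 fun i => abs_center_le_one s i)

lemma dotProduct_center_mul_eq {s : Face n} {u : Fin n → ℝ} (hu : ∀ i, s i = 0 → u i = 0)
    (a : ℝ) : (a • center s) ⬝ᵥ (center s * (1 + u)) = a * (codim s + ∑ i, u i) := by
  rw [← sum_ite_eq_codim, ← Finset.sum_add_distrib, Finset.mul_sum]
  refine Finset.sum_congr rfl fun i _ => ?_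
  have := center_mul_self s i
  simp only [Pi.smul_apply, Pi.mul_apply, Pi.add_apply, Pi.one_apply, smul_eq_mul]
  split_ifs at this ⊢ with hi
  · simp [mul_self_eq_zero.1 this, hu i hi]
  · linear_combination a * (1 + u i) * this

lemma center_mul_one_sub_dotProduct {s : Face n} {u : Fin n → ℝ} (hu : ∀ i, s i = 0 → u i = 0) :
    (center s * (1 - u)) ⬝ᵥ (center s * (1 + u)) = codim s - ∑ i, u i ^ 2 := by
  rw [← sum_ite_eq_codim, ← Finset.sum_sub_distrib]
  refine Finset.sum_congr rfl fun i _ => ?_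
  have := center_mul_self s i
  simp only [Pi.mul_apply, Pi.add_apply, Pi.sub_apply, Pi.one_apply]
  split_ifs at this ⊢ with hi
  · simp [mul_self_eq_zero.1 this, hu i hi]
  · linear_combination (1 - u i ^ 2) * this

/-- The point is the one of `K ∩ normalSpace s` nearest to `2 • center s`. -/
lemma exists_center_mul_one_sub_mem (hK : Convex ℝ K) (hclosed : IsClosed K) (hd : d ≤ 1)
    (hball : Metric.closedBall 0 (1 - d) ⊆ K) (hcube : K ⊆ Metric.closedBall 0 1) (s : Face n) :
    ∃ u : Fin n → ℝ, 0 ≤ u ∧ (∀ i, s i = 0 → u i = 0) ∧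
      (1 - d) * ∑ i, u i + ∑ i, u i ^ 2 ≤ d * codim s ∧ center s * (1 - u) ∈ K ∧
      ∀ w ∈ K, w ∈ normalSpace s → w ⬝ᵥ (center s * (1 + u)) ≤ codim s - ∑ i, u i ^ 2 := by
  have scaled_mem : (1 - d) • center s ∈ K ∩ normalSpace s :=
    ⟨smul_center_mem (sub_nonneg.2 hd) hball s,
      (normalSpace s).smul_mem _ (center_mem_normalSpace s)⟩
  obtain ⟨x, ⟨hxK, hxE⟩, hx⟩ := exists_nearest_point_dotProduct
    (hK.inter (normalSpace s).convex) (hclosed.inter (normalSpace s).closed_of_finiteDimensional)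
    ⟨_, scaled_mem⟩ ((2 : ℝ) • center s)
  let u : Fin n → ℝ := fun i => center s i * center s i - center s i * x i
  have hu (i) (hi : s i = 0) : u i = 0 := by simp [u, center, hi]
  have x_eq : x = center s * (1 - u) := by
    ext i
    have := center_mul_self s i
    simp only [Pi.mul_apply, Pi.sub_apply, Pi.one_apply, u]
    split_ifs at this with hi
    · simp [mul_self_eq_zero.1 this, mem_normalSpace.1 hxE i hi]
    · linear_combination (center s i - x i) * this
  have normal_eq : (2 : ℝ) • center s - x = center s * (1 + u) := by
    rw [x_eq]
    ext i
    simp only [Pi.mul_apply, Pi.sub_apply, Pi.add_apply, Pi.one_apply, Pi.smul_apply, smul_eq_mul]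
    ring
  have variation (w) (hw : w ∈ K ∩ normalSpace s) :
      w ⬝ᵥ (center s * (1 + u)) ≤ codim s - ∑ i, u i ^ 2 := by
    have := hx w hw
    rw [normal_eq, dotProduct_comm, sub_dotProduct, sub_nonpos] at this
    rwa [← center_mul_one_sub_dotProduct hu, ← x_eq]
  refine ⟨u, fun i => ?_, hu, ?_, x_eq ▸ hxK, fun w hw hwE => variation w ⟨hw, hwE⟩⟩
  · have hxi : |x i| ≤ 1 := (norm_le_pi_norm x i).trans (mem_closedBall_zero_iff.1 (hcube hxK))
    have hsx : center s i * x i ≤ |center s i| := (le_abs_self _).trans <| by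
      rw [abs_mul]
      exact mul_le_of_le_one_right (abs_nonneg _) hxi
    simpa only [u, center_mul_self, ← abs_center, Pi.zero_apply, sub_nonneg] using hsx
  · have := variation _ scaled_mem
    rw [dotProduct_center_mul_eq hu] at this
    linarith

lemma mul_abs_apply_le_of_one_le_center_dotProduct (hd : d ≤ 1)
    (hball : Metric.closedBall 0 (1 - d) ⊆ K) {y : Fin n → ℝ} (hy : y ∈ dotPolar K) {s : Face n}
    (hsy : 1 ≤ center s ⬝ᵥ y) {i : Fin n} (hi : s i = 0) : (1 - d) * |y i| ≤ d := by
  have center_le : center s ⬝ᵥ y ≤ ∑ j ∈ Finset.univ.erase i, |y j| := calc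
    _ ≤ ∑ j, |center s j| * |y j| := Finset.sum_le_sum fun j _ => by
        rw [← abs_mul]
        exact le_abs_self _
    _ = ∑ j ∈ Finset.univ.erase i, |center s j| * |y j| :=
        (Finset.sum_erase _ (by simp [abs_center, hi])).symm
    _ ≤ _ := Finset.sum_le_sum fun j _ =>
        mul_le_of_le_one_left (abs_nonneg _) (abs_center_le_one s j)
  have sum_le := mul_sum_abs_le_one_of_mem_dotPolar (sub_nonneg.2 hd) hball hy
  rw [← Finset.add_sum_erase _ _ (Finset.mem_univ i)] at sum_le
  nlinarith

lemma exists_mem_dotPolar_of_supporting (hK : Convex ℝ K) (hd : d < 1)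
    (hball : Metric.closedBall 0 (1 - d) ⊆ K) {s : Face n} {u : Fin n → ℝ} (hu0 : 0 ≤ u)
    (hu : ∀ i, s i = 0 → u i = 0) (hpos : 0 < codim s - ∑ i, u i ^ 2)
    (hsupp : ∀ w ∈ K, w ∈ normalSpace s →
      w ⬝ᵥ (center s * (1 + u)) ≤ codim s - ∑ i, u i ^ 2) :
    ∃ y ∈ dotPolar K, (center s * (1 - u)) ⬝ᵥ y = 1 ∧
      ∀ i, (s i ≠ 0 → (codim s - ∑ i, u i ^ 2) * y i = center s i * (1 + u i)) ∧
        (s i = 0 → (1 - d) * |y i| ≤ d) := by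
  set h : ℝ := codim s - ∑ i, u i ^ 2
  have h0 : K ∈ nhds 0 :=
    Filter.mem_of_superset (Metric.closedBall_mem_nhds 0 (sub_pos.2 hd)) hball
  obtain ⟨y, hy, y_eq⟩ := exists_mem_dotPolar_dotProduct_eq hK h0 (normalSpace s)
    (l := h⁻¹ • (center s * (1 + u))) fun w hw hwE => by
      rw [dotProduct_smul, smul_eq_mul, inv_mul_le_one₀ hpos]
      exact hsupp w hw hwE
  have point_mem : center s * (1 - u) ∈ normalSpace s :=
    mem_normalSpace.2 fun i hi => by simp [center, hi]
  have center_dotProduct_y : 1 ≤ center s ⬝ᵥ y := by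
    have := dotProduct_center_mul_eq hu 1
    rw [one_smul, one_mul] at this
    rw [y_eq _ (center_mem_normalSpace s), dotProduct_smul, this, smul_eq_mul,
      le_inv_mul_iff₀ hpos, mul_one]
    have := Finset.sum_nonneg fun i (_ : i ∈ Finset.univ) => hu0 i
    have := Finset.sum_nonneg fun i (_ : i ∈ Finset.univ) => sq_nonneg (u i)
    simp only [h]
    linarith
  refine ⟨y, hy, ?_, fun i => ⟨fun hi => ?_, fun hi =>
    mul_abs_apply_le_of_one_le_center_dotProduct hd.le hball hy center_dotProduct_y hi⟩⟩
  · rw [y_eq _ point_mem, dotProduct_smul, center_mul_one_sub_dotProduct hu, smul_eq_mul,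
      inv_mul_cancel₀ hpos.ne']
  · have := y_eq (Pi.single i 1) (mem_normalSpace.2 fun j hj =>
      Pi.single_eq_of_ne (by rintro rfl; exact hi hj) _)
    simp only [single_dotProduct, one_mul, Pi.smul_apply, Pi.mul_apply, Pi.add_apply,
      Pi.one_apply, smul_eq_mul] at this
    rw [this, mul_inv_cancel_left₀ hpos.ne']

lemma norm_codim_smul_sub_center_le (hd : d ≤ 1 / 4) {s : Face n} {u y : Fin n → ℝ}
    (hs : 1 ≤ codim s) (hu0 : 0 ≤ u) (hu : ∀ i, 3 * u i ≤ 4 * (d * codim s))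
    (hsq : ∑ i, u i ^ 2 ≤ d * codim s)
    (hy : ∀ i, (s i ≠ 0 → (codim s - ∑ i, u i ^ 2) * y i = center s i * (1 + u i)) ∧
      (s i = 0 → (1 - d) * |y i| ≤ d)) :
    ‖(codim s : ℝ) • y - center s‖ ≤ 4 * (d * codim s) := by
  have one_le : (1 : ℝ) ≤ codim s := mod_cast hs
  set m := (codim s : ℝ)
  have sum_sq_nonneg : 0 ≤ ∑ i, u i ^ 2 := Finset.sum_nonneg fun i _ => sq_nonneg _
  have dm_nonneg : 0 ≤ d * m := sum_sq_nonneg.trans hsq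
  set h := m - ∑ i, u i ^ 2 with hh
  have h_ge : 3 / 4 * m ≤ h := by nlinarith
  refine (pi_norm_le_iff_of_nonneg (by positivity)).2 fun i => ?_
  rw [Pi.sub_apply, Pi.smul_apply, smul_eq_mul, Real.norm_eq_abs]
  by_cases hi : s i = 0
  · have := (hy i).2 hi
    rw [show center s i = 0 by simp [center, hi], sub_zero, abs_mul, abs_of_nonneg (by linarith)]
    nlinarith [abs_nonneg (y i)]
  · have scaled : h * (m * y i - center s i) = center s i * (m * u i + ∑ i, u i ^ 2) := by
      rw [mul_sub, mul_left_comm, (hy i).1 hi, hh]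
      ring
    have bound : m * u i + ∑ i, u i ^ 2 ≤ 3 / 4 * m * (4 * (d * m)) := by
      nlinarith [hu i]
    have : h * |m * y i - center s i| ≤ h * (4 * (d * m)) := calc
      _ = |h * (m * y i - center s i)| := by rw [abs_mul, abs_of_pos (show 0 < h by linarith)]
      _ = m * u i + ∑ i, u i ^ 2 := by
        rw [scaled, abs_mul, abs_center, if_neg hi, one_mul, abs_of_nonneg]
        exact add_nonneg (mul_nonneg (by linarith) (hu0 i)) sum_sq_nonneg
      _ ≤ _ := bound.trans (by gcongr)
    exact le_of_mul_le_mul_left this (by linarith)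

lemma exists_dual_points (hK : Convex ℝ K) (hclosed : IsClosed K) (hd : 0 ≤ d)
    (hnd : 4 * n * d ≤ 1) (hball : Metric.closedBall 0 (1 - d) ⊆ K)
    (hcube : K ⊆ Metric.closedBall 0 1) {s : Face n} (hs : s ≠ 0) :
    ∃ x ∈ K, ∃ y ∈ dotPolar K, x ⬝ᵥ y = 1 ∧ ‖x - center s‖ ≤ 4 * n * d ∧
      ‖(codim s : ℝ) • y - center s‖ ≤ 4 * n * d := by
  have one_le : (1 : ℝ) ≤ codim s := mod_cast one_le_codim hs
  have le_n : (codim s : ℝ) ≤ n := mod_cast codim_le s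
  have d_le : d ≤ 1 / 4 := by nlinarith
  have hdm : 4 * (d * codim s) ≤ 4 * n * d := by nlinarith
  obtain ⟨u, hu0, hu, hquad, hxK, hsupp⟩ :=
    exists_center_mul_one_sub_mem hK hclosed (by linarith) hball hcube s
  have sum_sq_nonneg : 0 ≤ ∑ i, u i ^ 2 := Finset.sum_nonneg fun i _ => sq_nonneg _
  have sum_nonneg : 0 ≤ ∑ i, u i := Finset.sum_nonneg fun i _ => hu0 i
  have sum_sq_le : ∑ i, u i ^ 2 ≤ d * codim s := by nlinarith
  have hui (i) : 3 * u i ≤ 4 * (d * codim s) := by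
    nlinarith [Finset.single_le_sum (fun j _ => hu0 j) (Finset.mem_univ i)]
  obtain ⟨y, hy, hxy, hyi⟩ := exists_mem_dotPolar_of_supporting hK (by linarith) hball hu0 hu
    (by nlinarith) hsupp
  refine ⟨_, hxK, y, hy, hxy, ?_,
    (norm_codim_smul_sub_center_le d_le (one_le_codim hs) hu0 hui sum_sq_le hyi).trans hdm⟩
  refine (pi_norm_le_iff_of_nonneg (by positivity)).2 fun i => ?_
  have : (center s * (1 - u) - center s) i = -(center s i * u i) := by
    simp only [Pi.sub_apply, Pi.mul_apply, Pi.one_apply]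
    ring
  rw [this, norm_neg, norm_mul, Real.norm_eq_abs, Real.norm_of_nonneg (hu0 i)]
  nlinarith [mul_le_of_le_one_left (hu0 i) (abs_center_le_one s i), hui i]

/-- A body squeezed between the cube and its `(1 - d)`-dilate, in the position where it touches
every facet of the cube at the center of that facet. -/
structure NearCube (K : Set (Fin n → ℝ)) (d : ℝ) : Prop where
  convex : Convex ℝ K
  isClosed : IsClosed K
  closedBall_subset : Metric.closedBall 0 (1 - d) ⊆ K
  subset_closedBall : K ⊆ Metric.closedBall 0 1
  center_mem : ∀ s : Face n, codim s = 1 → center s ∈ K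

/-- Points `X s` of `K` and `Y s` of a multiple of its polar, close to the center of each face `s`
of the cube, which are dual to each other. The multiple is chosen so that for the cube itself one
may take `X = Y = center`. -/
structure IsDualFacePoints (K : Set (Fin n → ℝ)) (d : ℝ) (X Y : Face n → Fin n → ℝ) : Prop where
  left_mem : ∀ s, X s ∈ K
  right_mem : ∀ s, (codim s : ℝ)⁻¹ • Y s ∈ dotPolar K
  dotProduct_eq : ∀ s, X s ⬝ᵥ Y s = codim s
  norm_left_sub_le : ∀ s, ‖X s - center s‖ ≤ 4 * n * d
  norm_right_sub_le : ∀ s, ‖Y s - center s‖ ≤ 4 * n * d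
  right_eq_center : ∀ s, codim s = 1 → Y s = center s

lemma center_mem_dotPolar (hcube : K ⊆ Metric.closedBall 0 1) {s : Face n} (hs : codim s = 1) :
    center s ∈ dotPolar K := fun x hx => calc
  x ⬝ᵥ center s ≤ ∑ i, |center s i| := Finset.sum_le_sum fun i _ => by
    have hxi : |x i| ≤ 1 := (norm_le_pi_norm x i).trans (mem_closedBall_zero_iff.1 (hcube hx))
    refine (le_abs_self _).trans ?_
    rw [abs_mul]
    exact mul_le_of_le_one_left (abs_nonneg _) hxi
  _ = 1 := by simp only [abs_center, sum_ite_eq_codim, hs, Nat.cast_one]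

lemma NearCube.zero_mem (hK : NearCube K d) (hd : d ≤ 1) : 0 ∈ K :=
  hK.closedBall_subset (Metric.mem_closedBall_self (by linarith))

lemma NearCube.exists_dual_points (hK : NearCube K d) (hd : 0 ≤ d) (hd1 : d ≤ 1)
    (hnd : 4 * n * d ≤ 1) (s : Face n) :
    ∃ x ∈ K, ∃ y : Fin n → ℝ, (codim s : ℝ)⁻¹ • y ∈ dotPolar K ∧ x ⬝ᵥ y = codim s ∧
      ‖x - center s‖ ≤ 4 * n * d ∧ ‖y - center s‖ ≤ 4 * n * d ∧ (codim s = 1 → y = center s) := by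
  have hη : 0 ≤ 4 * n * d := by positivity
  rcases eq_or_ne s 0 with rfl | hs
  · have hc : center (0 : Face n) = 0 := by ext; simp [center]
    have hm : codim (0 : Face n) = 0 := by simp [codim]
    exact ⟨0, hK.zero_mem hd1, 0, by simp [zero_mem_dotPolar], by simp [hm], by simpa [hc],
      by simpa [hc], by simp [hc]⟩
  by_cases hs1 : codim s = 1
  · refine ⟨center s, hK.center_mem s hs1, center s, ?_, center_dotProduct_center s,
      by simpa, by simpa, fun _ => rfl⟩
    simpa [hs1] using center_mem_dotPolar hK.subset_closedBall hs1
  · obtain ⟨x, hx, y, hy, hxy, hxs, hys⟩ := CubeMahler.exists_dual_points hK.convex hK.isClosed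
      hd hnd hK.closedBall_subset hK.subset_closedBall hs
    have hs0 : (codim s : ℝ) ≠ 0 := Nat.cast_ne_zero.2 (Nat.pos_iff_ne_zero.1 (one_le_codim hs))
    refine ⟨x, hx, (codim s : ℝ) • y, ?_, ?_, hxs, hys, fun h => absurd h hs1⟩
    · rwa [smul_smul, inv_mul_cancel₀ hs0, one_smul]
    · rw [dotProduct_smul, hxy, smul_eq_mul, mul_one]

lemma NearCube.exists_isDualFacePoints (hK : NearCube K d) (hd : 0 ≤ d) (hd1 : d ≤ 1)
    (hnd : 4 * n * d ≤ 1) : ∃ X Y, IsDualFacePoints K d X Y := by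
  choose X hX Y hY hXY hXc hYc hY1 using hK.exists_dual_points hd hd1 hnd
  exact ⟨X, Y, hX, hY, hXY, hXc, hYc, hY1⟩

namespace CubeFlag

lemma codim_face (f : CubeFlag n) (k : Fin n) : codim (f.face k) = k + 1 := by
  have : (Finset.univ.filter fun i => f.face k i ≠ 0) = (Finset.Iic k).map f.1.toEmbedding := by
    ext i
    obtain ⟨l, rfl⟩ := f.1.surjective i
    simp [face_apply_eq_zero_iff]
  rw [codim, this, Finset.card_map, Fin.card_Iic]

lemma center_face_dotProduct_sign (f : CubeFlag n) (k : Fin n) :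
    center (f.face k) ⬝ᵥ f.sign = k + 1 := by
  have : center (f.face k) ⬝ᵥ f.sign = center (f.face k) ⬝ᵥ center (f.face k) :=
    Finset.sum_congr rfl fun i _ => by
      rw [center_face_apply]
      split_ifs <;> simp
  rw [this, center_dotProduct_center, codim_face]
  push_cast
  rfl

variable [NeZero n]

lemma center_face_zero (f : CubeFlag n) :
    center (f.face 0) = Pi.single (f.1 0) (f.sign (f.1 0)) := by
  ext i
  obtain ⟨l, rfl⟩ := f.1.surjective i
  rcases eq_or_ne l 0 with rfl | hl
  · simp [center_face_apply]
  · simp [center_face_apply, hl]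

lemma center_face_top (f : CubeFlag n) : center (f.face ⊤) = f.sign := by
  ext i
  rw [center_face_apply, if_pos le_top]

lemma center_face_apply_zero (f : CubeFlag n) (k : Fin n) :
    center (f.face k) (f.1 0) = f.sign (f.1 0) := by
  rw [center_face_apply, symm_apply_apply, if_pos (Fin.zero_le k)]

end CubeFlag

/-! ### A missing vertex makes the body or its polar exceed a flag simplex -/

/-- The set `L` contains a point beyond the affine hull of the vertices `lam k • P (f.face k)` of a
flag simplex, by a margin `ε` in the coordinates `β` with respect to these vertices, and not too
far from the cone they span. -/
def HasExcess (L : Set (Fin n → ℝ)) (P : Face n → Fin n → ℝ) (lam : Fin n → ℝ) (f : CubeFlag n)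
    (ε : ℝ) : Prop :=
  ∃ β : Fin n → ℝ, (∀ k, -(n : ℝ)⁻¹ ≤ β k) ∧ 1 + ε ≤ ∑ k, β k ∧ (β * lam) ᵥ* f.matrix P ∈ L

lemma abs_dotProduct_le (x y : Fin n → ℝ) : |x ⬝ᵥ y| ≤ n * (‖x‖ * ‖y‖) := calc
  |x ⬝ᵥ y| ≤ ∑ i, |x i * y i| := Finset.abs_sum_le_sum_abs _ _
  _ ≤ ∑ _i : Fin n, ‖x‖ * ‖y‖ := Finset.sum_le_sum fun i _ => by
    rw [abs_mul]
    exact mul_le_mul (norm_le_pi_norm x i) (norm_le_pi_norm y i) (abs_nonneg _) (norm_nonneg _)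
  _ = n * (‖x‖ * ‖y‖) := by simp

lemma norm_center_le_one (s : Face n) : ‖center s‖ ≤ 1 :=
  (pi_norm_le_iff_of_nonneg zero_le_one).2 fun i => abs_center_le_one s i

lemma mul_pow_mul_le_one [NeZero n] {C : ℝ} (hC : 0 ≤ C) (hd : 0 ≤ d) {j m : ℕ} (hj : j ≤ m)
    (h : C * (n ^ m * d) ≤ 1) : C * (n ^ j * d) ≤ 1 := by
  have one_le : (1 : ℝ) ≤ n := mod_cast NeZero.one_le
  exact le_trans (by gcongr) h

namespace CubeFlag

variable {P X Y : Face n → Fin n → ℝ} {η t Q : ℝ} {β₀ z : Fin n → ℝ}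

/-- For `P = center` and suitable `w`, `u` the vector `w - f.matrix P *ᵥ u` vanishes, so the
weighted sum of the coefficients of `z` is read off from `z ⬝ᵥ u` up to second order. -/
lemma exists_vecMul_eq_le_dotProduct (hη : 4 * n * η ≤ 1) (hP : ∀ s, ‖P s - center s‖ ≤ η)
    (f : CubeFlag n) (hβ₀ : ‖β₀‖ ≤ 1) (hz : ‖z - β₀ ᵥ* f.matrix center‖ ≤ t) {w u : Fin n → ℝ}
    (hQ : ‖w - f.matrix P *ᵥ u‖ ≤ Q) :
    ∃ β, β ᵥ* f.matrix P = z ∧ ‖β - β₀‖ ≤ 4 * (t + n * η) ∧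
      z ⬝ᵥ u + β₀ ⬝ᵥ (w - f.matrix P *ᵥ u) - n * (4 * (t + n * η) * Q) ≤ β ⬝ᵥ w := by
  obtain ⟨β, hβ, hβ₀⟩ := exists_vecMul_eq_norm_sub_le hη hP f hβ₀ hz
  refine ⟨β, hβ, hβ₀, ?_⟩
  set q := w - f.matrix P *ᵥ u with hq
  have expand : β ⬝ᵥ w = z ⬝ᵥ u + β₀ ⬝ᵥ q + (β - β₀) ⬝ᵥ q := by
    rw [← hβ, ← dotProduct_mulVec, sub_dotProduct, hq, dotProduct_sub β]
    ring
  have error : |(β - β₀) ⬝ᵥ q| ≤ n * (4 * (t + n * η) * Q) :=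
    (abs_dotProduct_le _ _).trans (by gcongr; exact (norm_nonneg _).trans hβ₀)
  linarith [neg_le_of_abs_le error]

lemma exists_sub_sign_mul_gt (hK : NearCube K d) (hd : 0 < d) (hd2 : d ≤ 1 / 2) {f : CubeFlag n}
    (hf : (1 - d / 2) • f.sign ∉ K) {x : Fin n → ℝ} (hx : x ∈ K) :
    ∃ i, d / 4 < 1 - f.sign i * x i := by
  by_contra! h
  set w : Fin n → ℝ := ((1 - d / 2) / (d / 2)) • (f.sign - x) with hw
  have sub_le (i) : ‖f.sign i - x i‖ ≤ d / 4 := by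
    have hxi : |x i| ≤ 1 :=
      (norm_le_pi_norm x i).trans (mem_closedBall_zero_iff.1 (hK.subset_closedBall hx))
    have := abs_le.1 hxi
    have := h i
    rw [Real.norm_eq_abs, abs_le]
    rcases f.sign_eq_one_or i with hi | hi <;> rw [hi] at this ⊢ <;> constructor <;> linarith
  have ratio_nonneg : 0 ≤ (1 - d / 2) / (d / 2) := div_nonneg (by linarith) (by linarith)
  have hwK : w ∈ K := hK.closedBall_subset <| mem_closedBall_zero_iff.2 <|
    calc ‖w‖ = (1 - d / 2) / (d / 2) * ‖f.sign - x‖ := by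
          rw [hw, norm_smul, Real.norm_of_nonneg ratio_nonneg]
      _ ≤ (1 - d / 2) / (d / 2) * (d / 4) :=
          mul_le_mul_of_nonneg_left ((pi_norm_le_iff_of_nonneg (by linarith)).2 sub_le)
            ratio_nonneg
      _ ≤ 1 - d := by
          field_simp
          linarith
  refine hf ?_
  convert hK.convex hx hwK (a := 1 - d / 2) (b := d / 2) (by linarith) (by linarith) (by ring)
    using 1
  rw [hw, smul_smul, mul_div_cancel₀ _ (by positivity)]
  module

lemma one_sub_mulVec_single_apply (f : CubeFlag n) (X : Face n → Fin n → ℝ) (k i : Fin n) :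
    (1 - f.matrix X *ᵥ Pi.single i (f.sign i)) k = 1 - f.sign i * X (f.face k) i := by
  simp [matrix, mul_comm]

lemma one_sub_mulVec_single_nonneg (hcube : K ⊆ Metric.closedBall 0 1) (hX : ∀ s, X s ∈ K)
    (f : CubeFlag n) (k i : Fin n) : 0 ≤ (1 - f.matrix X *ᵥ Pi.single i (f.sign i)) k := by
  have hXi : |X (f.face k) i| ≤ 1 :=
    (norm_le_pi_norm _ i).trans (mem_closedBall_zero_iff.1 (hcube (hX _)))
  rw [one_sub_mulVec_single_apply, sub_nonneg]
  refine (le_abs_self _).trans ?_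
  rwa [abs_mul, abs_sign, one_mul]

lemma norm_natCast_sub_mulVec_sign_le (hY : ∀ s, ‖Y s - center s‖ ≤ η) (f : CubeFlag n) :
    ‖(fun k : Fin n => (k + 1 : ℝ)) - f.matrix Y *ᵥ f.sign‖ ≤ n * η := by
  have η_nonneg := (norm_nonneg _).trans (hY 0)
  refine (pi_norm_le_iff_of_nonneg (by positivity)).2 fun k => ?_
  have norm_sign_le : ‖f.sign‖ ≤ 1 :=
    (pi_norm_le_iff_of_nonneg zero_le_one).2 fun i => (f.abs_sign i).le
  have entry_eq : ((fun k : Fin n => (k + 1 : ℝ)) - f.matrix Y *ᵥ f.sign) k =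
      -((Y (f.face k) - center (f.face k)) ⬝ᵥ f.sign) := by
    rw [sub_dotProduct, center_face_dotProduct_sign, neg_sub]
    rfl
  rw [entry_eq, norm_neg]
  refine (abs_dotProduct_le _ _).trans ?_
  gcongr
  exact (mul_le_of_le_one_right (norm_nonneg _) norm_sign_le).trans (hY _)

lemma neg_inv_le_add_one_mul {β : Fin n → ℝ} {r : ℝ} (hβ₀ : 0 ≤ β₀) (hβ : ‖β - β₀‖ ≤ r)
    (hr : n * (n * r) ≤ 1) (k : Fin n) : -(n : ℝ)⁻¹ ≤ (k + 1) * β k := by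
  have hn : (0 : ℝ) < n := Nat.cast_pos.2 k.pos
  have k_le : (k : ℝ) + 1 ≤ n := by exact_mod_cast k.2
  have dist_le : |β k - β₀ k| ≤ r := (norm_le_pi_norm (β - β₀) k).trans hβ
  have neg_le : -β k ≤ r := by linarith [neg_le_of_abs_le dist_le, show 0 ≤ β₀ k from hβ₀ k]
  have mul_le : n * r ≤ (n : ℝ)⁻¹ := by
    rw [← one_div, le_div_iff₀ hn]
    linarith
  have : ((k : ℝ) + 1) * -β k ≤ n * r := by
    have hr0 : 0 ≤ r := (norm_nonneg _).trans hβ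
    exact (mul_le_mul_of_nonneg_left neg_le (by positivity)).trans (by gcongr)
  linarith

variable [NeZero n]

lemma exists_zero_sub_sign_mul_gt (hK : NearCube K d) (hd : 0 < d) (hd2 : d ≤ 1 / 2)
    {f : CubeFlag n} (hf : (1 - d / 2) • f.sign ∉ K) (hX : ∀ s, X s ∈ K) :
    ∃ g : CubeFlag n, d / 4 < 1 - g.sign (g.1 0) * X (g.face ⊤) (g.1 0) := by
  obtain ⟨i, hi⟩ := exists_sub_sign_mul_gt hK hd hd2 hf (hX (f.face ⊤))
  refine ⟨(swap 0 i, f.2), ?_⟩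
  have face_top : face (swap 0 i, f.2) ⊤ = f.face ⊤ := by
    ext j
    simp [face, sign]
  rw [face_top, swap_apply_left]
  exact hi

/-- A point slightly inside the midpoint between the facet and the vertex of a flag. -/
def shrunkMidpoint (f : CubeFlag n) (d : ℝ) : Fin n → ℝ :=
  (1 - d / 16) • (2⁻¹ : ℝ) • (center (f.face 0) + center (f.face ⊤))

lemma shrunkMidpoint_dotProduct (f : CubeFlag n) (d : ℝ) (y : Fin n → ℝ) :
    f.shrunkMidpoint d ⬝ᵥ y =
      (1 - d / 16) * ((f.sign (f.1 0) * y (f.1 0) + f.sign ⬝ᵥ y) / 2) := by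
  rw [shrunkMidpoint, smul_dotProduct, smul_dotProduct, add_dotProduct, center_face_top,
    center_face_zero, single_dotProduct, smul_eq_mul, smul_eq_mul]
  ring

lemma norm_shrunkMidpoint_sub_le (f : CubeFlag n) (hd : 0 ≤ d) :
    ‖f.shrunkMidpoint d - ((2⁻¹ : ℝ) • (Pi.single 0 1 + Pi.single ⊤ 1)) ᵥ* f.matrix center‖ ≤
      d / 16 := by
  set c := (2⁻¹ : ℝ) • (center (f.face 0) + center (f.face ⊤)) with hc
  have norm_c_le : ‖c‖ ≤ 1 := by
    rw [hc, norm_smul, norm_inv, Real.norm_two]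
    linarith [norm_add_le (center (f.face 0)) (center (f.face ⊤)), norm_center_le_one (f.face 0),
      norm_center_le_one (f.face ⊤)]
  have vecMul_eq : ((2⁻¹ : ℝ) • (Pi.single 0 1 + Pi.single ⊤ 1)) ᵥ* f.matrix center = c := by
    rw [smul_vecMul, add_vecMul, single_one_vecMul, single_one_vecMul]
    rfl
  have sub_eq : (1 - d / 16) • c - c = -((d / 16) • c) := by module
  rw [vecMul_eq, shrunkMidpoint, ← hc, sub_eq, norm_neg, norm_smul,
    Real.norm_of_nonneg (by positivity)]
  exact mul_le_of_le_one_right (by positivity) norm_c_le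

lemma norm_one_sub_mulVec_single_le (hX : ∀ s, ‖X s - center s‖ ≤ η) (f : CubeFlag n) :
    ‖1 - f.matrix X *ᵥ Pi.single (f.1 0) (f.sign (f.1 0))‖ ≤ η := by
  refine (pi_norm_le_iff_of_nonneg ((norm_nonneg _).trans (hX 0))).2 fun k => ?_
  have entry_eq : 1 - f.sign (f.1 0) * X (f.face k) (f.1 0) =
      -(f.sign (f.1 0) * (X (f.face k) - center (f.face k)) (f.1 0)) := by
    rw [Pi.sub_apply, center_face_apply_zero]
    linear_combination -f.sign_mul_self (f.1 0)
  rw [one_sub_mulVec_single_apply, entry_eq, norm_neg, norm_mul, Real.norm_eq_abs, abs_sign,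
    one_mul]
  exact (norm_le_pi_norm _ _).trans (hX _)

lemma hasExcess_of_shrunkMidpoint_mem (hcube : K ⊆ Metric.closedBall 0 1) (hX : ∀ s, X s ∈ K)
    (hXc : ∀ s, ‖X s - center s‖ ≤ 4 * n * d) (hd : 0 < d) (hnd : 4096 * (n ^ 5 * d) ≤ 1)
    {f : CubeFlag n} (hf : d / 4 < 1 - f.sign (f.1 0) * X (f.face ⊤) (f.1 0))
    (hz : f.shrunkMidpoint d ∈ K) : HasExcess K X 1 f (d / 32) := by
  have one_le : (1 : ℝ) ≤ n := mod_cast NeZero.one_le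
  have pow_le {j : ℕ} (hj : j ≤ 5) : 4096 * (n ^ j * d) ≤ 1 :=
    mul_pow_mul_le_one (by norm_num) hd.le hj hnd
  set u : Fin n → ℝ := Pi.single (f.1 0) (f.sign (f.1 0)) with hu
  set β₀ : Fin n → ℝ := (2⁻¹ : ℝ) • (Pi.single 0 1 + Pi.single ⊤ 1) with hβ₀
  have β₀_nonneg : 0 ≤ β₀ := smul_nonneg (by norm_num)
    (add_nonneg (Pi.single_nonneg.2 zero_le_one) (Pi.single_nonneg.2 zero_le_one))
  have norm_β₀_le : ‖β₀‖ ≤ 1 := by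
    rw [hβ₀, norm_smul, norm_inv, Real.norm_two]
    have := norm_add_le (Pi.single 0 1 : Fin n → ℝ) (Pi.single ⊤ 1)
    simp only [Pi.norm_single, norm_one] at this
    linarith
  have β₀_dotProduct (q : Fin n → ℝ) : β₀ ⬝ᵥ q = 2⁻¹ * (q 0 + q ⊤) := by
    simp [hβ₀, smul_dotProduct, add_dotProduct, mul_add]
  have z_dotProduct : f.shrunkMidpoint d ⬝ᵥ u = 1 - d / 16 := by
    rw [shrunkMidpoint_dotProduct, hu, dotProduct_single, Pi.single_eq_same, sign_mul_self]
    ring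
  obtain ⟨β, hβ, hββ₀, le_sum⟩ := exists_vecMul_eq_le_dotProduct
    (by linarith [pow_le (j := 2) (by norm_num)]) hXc f norm_β₀_le
    (norm_shrunkMidpoint_sub_le f hd.le) (norm_one_sub_mulVec_single_le hXc f)
  have radius_le : 4 * (d / 16 + n * (4 * n * d)) ≤ 17 * (n ^ 2 * d) := by
    linarith [le_mul_of_one_le_left hd.le (one_le_pow₀ one_le (n := 2))]
  refine ⟨β, fun k => ?_, ?_, by rwa [mul_one, hβ]⟩
  · have dist_le : |β k - β₀ k| ≤ _ := (norm_le_pi_norm (β - β₀) k).trans hββ₀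
    have inv_ge : 17 * (n ^ 2 * d) ≤ (n : ℝ)⁻¹ := by
      rw [← one_div, le_div_iff₀ (by linarith)]
      linarith [pow_le (j := 3) (by norm_num)]
    linarith [neg_le_of_abs_le dist_le, show 0 ≤ β₀ k from β₀_nonneg k]
  · have error_le : n * (4 * (d / 16 + n * (4 * n * d)) * (4 * n * d)) ≤ d / 32 := calc
      _ ≤ n * (17 * (n ^ 2 * d) * (4 * n * d)) := by gcongr
      _ = 68 * (n ^ 4 * d) * d := by ring
      _ ≤ d / 32 := by nlinarith [pow_le (j := 4) (by norm_num)]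
    rw [dotProduct_one, z_dotProduct, β₀_dotProduct, one_sub_mulVec_single_apply f X ⊤] at le_sum
    linarith [one_sub_mulVec_single_nonneg hcube hX f 0 (f.1 0)]

lemma le_sign_dotProduct_and_norm_sub_le (hK : NearCube K d) (hd : 0 < d) (hd2 : d ≤ 1 / 2)
    {f : CubeFlag n} {y : Fin n → ℝ} (hy : y ∈ dotPolar K) (hzy : 1 < f.shrunkMidpoint d ⬝ᵥ y) :
    1 + d / 8 ≤ f.sign ⬝ᵥ y ∧ ‖y - center (f.face 0)‖ ≤ 4 * d := by
  set i := f.1 0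
  have first_le : f.sign i * y i ≤ 1 := by
    have := hy _ (hK.center_mem _ (f.codim_face 0))
    rwa [center_face_zero, single_dotProduct] at this
  have sum_abs_le : ∑ j, |y j| ≤ 1 + 2 * d := by
    nlinarith [mul_sum_abs_le_one_of_mem_dotPolar (by linarith) hK.closedBall_subset hy]
  have sign_mul_le (j) : f.sign j * y j ≤ |y j| := by
    simpa [abs_mul, abs_sign] using le_abs_self (f.sign j * y j)
  have dot_le : f.sign ⬝ᵥ y ≤ 1 + 2 * d :=
    (Finset.sum_le_sum fun j _ => sign_mul_le j).trans sum_abs_le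
  rw [shrunkMidpoint_dotProduct] at hzy
  have add_ge : 2 + d / 8 ≤ f.sign i * y i + f.sign ⬝ᵥ y := by
    by_contra! hlt
    nlinarith
  refine ⟨by linarith, (pi_norm_le_iff_of_nonneg (by linarith)).2 fun j => ?_⟩
  rw [center_face_zero, Pi.sub_apply, Real.norm_eq_abs]
  rcases eq_or_ne j i with rfl | hj
  · rw [Pi.single_eq_same, abs_le]
    rcases f.sign_eq_one_or i with hi | hi <;> rw [hi] at first_le add_ge ⊢ <;>
      constructor <;> linarith
  · have pair_le : |y i| + |y j| ≤ ∑ j, |y j| := by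
      rw [← Finset.sum_pair (f := fun j => |y j|) hj.symm]
      exact Finset.sum_le_univ_sum_of_nonneg fun _ => abs_nonneg _
    rw [Pi.single_eq_of_ne hj, sub_zero]
    linarith [sign_mul_le i]

lemma natCast_sub_mulVec_sign_zero (hY : ∀ s, codim s = 1 → Y s = center s) (f : CubeFlag n) :
    ((fun k : Fin n => (k + 1 : ℝ)) - f.matrix Y *ᵥ f.sign) 0 = 0 := by
  have : (f.matrix Y *ᵥ f.sign) 0 = center (f.face 0) ⬝ᵥ f.sign := by
    rw [← hY _ (f.codim_face 0)]
    rfl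
  rw [Pi.sub_apply, this, center_face_dotProduct_sign, sub_self]

lemma hasExcess_of_shrunkMidpoint_notMem (hK : NearCube K d)
    (hYc : ∀ s, ‖Y s - center s‖ ≤ 4 * n * d) (hY1 : ∀ s, codim s = 1 → Y s = center s)
    (hd : 0 < d) (hnd : 4096 * (n ^ 5 * d) ≤ 1) {f : CubeFlag n} (hz : f.shrunkMidpoint d ∉ K) :
    HasExcess (dotPolar K) Y (fun k => (k + 1 : ℝ)⁻¹) f (d / 32) := by
  have one_le : (1 : ℝ) ≤ n := mod_cast NeZero.one_le
  have pow_le {j : ℕ} (hj : j ≤ 5) : 4096 * (n ^ j * d) ≤ 1 :=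
    mul_pow_mul_le_one (by norm_num) hd.le hj hnd
  have hd2 : d ≤ 1 / 2 := by linarith [pow_le (j := 0) (by norm_num)]
  obtain ⟨y, hy, hzy⟩ := exists_mem_dotPolar_one_lt hK.convex hK.isClosed
    (hK.zero_mem (by linarith)) hz
  obtain ⟨sign_dot_ge, norm_sub_le⟩ := le_sign_dotProduct_and_norm_sub_le hK hd hd2 hy hzy
  set β₀ : Fin n → ℝ := Pi.single 0 1 with hβ₀
  have β₀_nonneg : 0 ≤ β₀ := Pi.single_nonneg.2 zero_le_one
  have norm_β₀_le : ‖β₀‖ ≤ 1 := by rw [hβ₀, Pi.norm_single, norm_one]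
  have vecMul_eq : β₀ ᵥ* f.matrix center = center (f.face 0) := single_one_vecMul _ _
  obtain ⟨β, hβ, hββ₀, le_sum⟩ := exists_vecMul_eq_le_dotProduct
    (by linarith [pow_le (j := 2) (by norm_num)]) hYc f norm_β₀_le (vecMul_eq ▸ norm_sub_le)
    (norm_natCast_sub_mulVec_sign_le hYc f)
  have radius_le : 4 * (4 * d + n * (4 * n * d)) ≤ 32 * (n ^ 2 * d) := by
    linarith [le_mul_of_one_le_left hd.le (one_le_pow₀ one_le (n := 2))]
  refine ⟨fun k => (k + 1) * β k, fun k => ?_, ?_, ?_⟩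
  · exact neg_inv_le_add_one_mul β₀_nonneg (hββ₀.trans radius_le)
      (by linarith [pow_le (j := 4) (by norm_num)]) k
  · have error_le : n * (4 * (4 * d + n * (4 * n * d)) * (n * (4 * n * d))) ≤ d / 32 := calc
      _ ≤ n * (32 * (n ^ 2 * d) * (n * (4 * n * d))) := by gcongr
      _ = 128 * (n ^ 5 * d) * d := by ring
      _ ≤ d / 32 := by nlinarith
    rw [single_one_dotProduct, natCast_sub_mulVec_sign_zero hY1 f, dotProduct_comm y,
      dotProduct_comm β] at le_sum
    change _ ≤ ∑ k : Fin n, ((k : ℝ) + 1) * β k at le_sum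
    linarith
  · have : (fun k : Fin n => ((k : ℝ) + 1) * β k) * (fun k : Fin n => (k + 1 : ℝ)⁻¹) = β := by
      ext k
      have : (k : ℝ) + 1 ≠ 0 := by positivity
      simp [field]
    rwa [this, hβ]

end CubeFlag

/-- If the shrunk midpoint belongs to `K`, it sticks out of the simplex of the points `X`; otherwise
a functional separating it from `K` sticks out of the simplex of the points `Y`. -/
lemma IsDualFacePoints.exists_hasExcess [NeZero n] {X Y : Face n → Fin n → ℝ}
    (hXY : IsDualFacePoints K d X Y) (hK : NearCube K d) (hd : 0 < d)
    (hnd : 4096 * (n ^ 5 * d) ≤ 1) {f : CubeFlag n} (hf : (1 - d / 2) • f.sign ∉ K) :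
    ∃ g, HasExcess K X 1 g (d / 32) ∨
      HasExcess (dotPolar K) Y (fun k => (k + 1 : ℝ)⁻¹) g (d / 32) := by
  have hd2 : d ≤ 1 / 2 := by
    have := mul_pow_mul_le_one (j := 0) (by norm_num) hd.le (by norm_num) hnd
    linarith
  obtain ⟨g, hg⟩ := CubeFlag.exists_zero_sub_sign_mul_gt hK hd hd2 hf hXY.left_mem
  refine ⟨g, ?_⟩
  by_cases hz : g.shrunkMidpoint d ∈ K
  · exact .inl (CubeFlag.hasExcess_of_shrunkMidpoint_mem hK.subset_closedBall hXY.left_mem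
      hXY.norm_left_sub_le hd hnd hg hz)
  · exact .inr (CubeFlag.hasExcess_of_shrunkMidpoint_notMem hK hXY.norm_right_sub_le
      hXY.right_eq_center hd hnd hz)

/-! ### The volume product near the cube -/

open Filter Topology

lemma abs_firstVariation_le {P : Face n → Fin n → ℝ} {η : ℝ} (hP : ∀ s, ‖P s - center s‖ ≤ η) :
    |firstVariation P| ≤ Fintype.card (CubeFlag n) * (n * (n * η)) := by
  have term_le (f : CubeFlag n) (k : Fin n) :
      |((k : ℝ) + 1)⁻¹ * (center (f.face k) ⬝ᵥ (P (f.face k) - center (f.face k)))| ≤ n * η := by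
    have inv_le : ((k : ℝ) + 1)⁻¹ ≤ 1 := inv_le_one_of_one_le₀ (by simp)
    rw [abs_mul, abs_of_nonneg (by positivity)]
    refine (mul_le_of_le_one_left (abs_nonneg _) inv_le).trans ((abs_dotProduct_le _ _).trans ?_)
    gcongr
    exact (mul_le_of_le_one_left (norm_nonneg _) (norm_center_le_one _)).trans (hP _)
  calc |firstVariation P| ≤ ∑ _f : CubeFlag n, ∑ _k : Fin n, n * η :=
        (Finset.abs_sum_le_sum_abs _ _).trans <| Finset.sum_le_sum fun f _ =>
          (Finset.abs_sum_le_sum_abs _ _).trans <| Finset.sum_le_sum fun k _ => term_le f k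
    _ = _ := by simp

/-- Since `X s ⬝ᵥ Y s` is the same as for the cube, the linear terms cancel and only the product
of the two displacements remains. -/
lemma IsDualFacePoints.neg_le_firstVariation_add {X Y : Face n → Fin n → ℝ}
    (hXY : IsDualFacePoints K d X Y) :
    -(Fintype.card (CubeFlag n) * (n * (n * (4 * n * d) ^ 2)))
      ≤ firstVariation X + firstVariation Y := by
  have cancel (s : Face n) : center s ⬝ᵥ (X s - center s) + center s ⬝ᵥ (Y s - center s)
      = -((X s - center s) ⬝ᵥ (Y s - center s)) := by
    simp only [dotProduct_sub, sub_dotProduct, hXY.dotProduct_eq, center_dotProduct_center,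
      dotProduct_comm (X s) (center s)]
    ring
  have term_le (f : CubeFlag n) (k : Fin n) : -(n * (4 * n * d) ^ 2) ≤
      ((k : ℝ) + 1)⁻¹ * (center (f.face k) ⬝ᵥ (X (f.face k) - center (f.face k))) +
      ((k : ℝ) + 1)⁻¹ * (center (f.face k) ⬝ᵥ (Y (f.face k) - center (f.face k))) := by
    have inv_le : ((k : ℝ) + 1)⁻¹ ≤ 1 := inv_le_one_of_one_le₀ (by simp)
    rw [← mul_add, cancel, mul_neg, neg_le_neg_iff]
    refine (le_abs_self _).trans ?_
    rw [abs_mul, abs_of_nonneg (by positivity)]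
    refine (mul_le_of_le_one_left (abs_nonneg _) inv_le).trans ((abs_dotProduct_le _ _).trans ?_)
    rw [sq]
    gcongr
    · exact (norm_nonneg _).trans (hXY.norm_left_sub_le 0)
    · exact hXY.norm_left_sub_le _
    · exact hXY.norm_right_sub_le _
  calc -(Fintype.card (CubeFlag n) * (n * (n * (4 * n * d) ^ 2)))
      = ∑ _f : CubeFlag n, ∑ _k : Fin n, -(n * (4 * n * d) ^ 2) := by simp
    _ ≤ firstVariation X + firstVariation Y := by
      simp only [firstVariation, ← Finset.sum_add_distrib]
      exact Finset.sum_le_sum fun f _ => Finset.sum_le_sum fun k _ => term_le f k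

lemma HasExcess.ofReal_le_volume [NeZero n] {L : Set (Fin n → ℝ)} {P : Face n → Fin n → ℝ}
    {lam : Fin n → ℝ} {f : CubeFlag n} {ε η : ℝ} (hf : HasExcess L P lam f ε) (hε : 0 ≤ ε)
    (hη : Fintype.card (Face n) * (4 * η) < 1) (hη' : 4 * n * η ≤ 1)
    (hP : ∀ s, ‖P s - center s‖ ≤ η) (hL : Convex ℝ L) (h0 : 0 ∈ L) (hlam : ∀ k, 0 < lam k)
    (hmem : ∀ (f : CubeFlag n) k, lam k • P (f.face k) ∈ L) (hdet : 1 / 2 ≤ |(f.matrix P).det|) :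
    ENNReal.ofReal ((∏ k, lam k) / n.factorial * (∑ f : CubeFlag n, |(f.matrix P).det| + ε / 4))
      ≤ volume L := by
  obtain ⟨β, hβ, sum_ge, hβL⟩ := hf
  refine le_trans (ENNReal.ofReal_le_ofReal ?_) (CubeFlag.ofReal_sum_abs_det_add_le_volume
    (NeZero.pos n) hη hη' hP hL h0 hlam hmem f hβ (by linarith) hβL)
  have := Finset.prod_nonneg fun k (_ : k ∈ Finset.univ) => (hlam k).le
  gcongr
  nlinarith

lemma prod_inv_add_one (n : ℕ) : ∏ k : Fin n, ((k : ℝ) + 1)⁻¹ = (n.factorial : ℝ)⁻¹ := by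
  rw [Fin.prod_univ_eq_prod_range (fun k => ((k : ℝ) + 1)⁻¹) n, Finset.prod_inv_distrib,
    ← Finset.prod_range_add_one_eq_factorial]
  push_cast
  rfl

lemma CubeFlag.card (n : ℕ) : Fintype.card (CubeFlag n) = n.factorial * 2 ^ n := by
  simp [CubeFlag, Fintype.card_perm]

lemma IsDualFacePoints.exists_ofReal_le_volume [NeZero n] {X Y : Face n → Fin n → ℝ}
    (hXY : IsDualFacePoints K d X Y) (hK : NearCube K d) (hd : 0 < d)
    (hnd : 4096 * (n ^ 5 * d) ≤ 1) (hcard : Fintype.card (Face n) * (4 * (4 * n * d)) < 1)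
    (hX : ∀ f : CubeFlag n, 1 / 2 ≤ |(f.matrix X).det|)
    (hY : ∀ f : CubeFlag n, 1 / 2 ≤ |(f.matrix Y).det|)
    {f : CubeFlag n} (hf : (1 - d / 2) • f.sign ∉ K) :
    ∃ p q : ℝ, 0 ≤ p ∧ 0 ≤ q ∧ p + q = d / 128 ∧
      ENNReal.ofReal ((n.factorial : ℝ)⁻¹ * (∑ g : CubeFlag n, |(g.matrix X).det| + p))
        ≤ volume K ∧
      ENNReal.ofReal ((n.factorial : ℝ)⁻¹ / n.factorial *
        (∑ g : CubeFlag n, |(g.matrix Y).det| + q)) ≤ volume (dotPolar K) := by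
  have pow_le {j : ℕ} (hj : j ≤ 5) : 4096 * (n ^ j * d) ≤ 1 :=
    mul_pow_mul_le_one (by norm_num) hd.le hj hnd
  have h0 : 0 ∈ K := hK.zero_mem (by linarith [pow_le (j := 0) (by norm_num)])
  have hn : 4 * n * (4 * n * d) ≤ 1 := by linarith [pow_le (j := 2) (by norm_num)]
  have left_mem (f : CubeFlag n) (k : Fin n) : (1 : Fin n → ℝ) k • X (f.face k) ∈ K := by
    simpa using hXY.left_mem (f.face k)
  have right_mem (f : CubeFlag n) (k : Fin n) :
      ((k : ℝ) + 1)⁻¹ • Y (f.face k) ∈ dotPolar K := by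
    simpa [CubeFlag.codim_face] using hXY.right_mem (f.face k)
  have volume_left := CubeFlag.ofReal_sum_abs_det_le_volume (NeZero.pos n) hcard hn
    hXY.norm_left_sub_le hK.convex h0 (fun _ => one_pos) left_mem
  have volume_right := CubeFlag.ofReal_sum_abs_det_le_volume (NeZero.pos n) hcard hn
    hXY.norm_right_sub_le (convex_dotPolar K) (zero_mem_dotPolar K)
    (lam := fun k => ((k : ℝ) + 1)⁻¹) (fun _ => by positivity) right_mem
  obtain ⟨g, excess | excess⟩ := hXY.exists_hasExcess hK hd hnd hf
  · refine ⟨d / 32 / 4, 0, by positivity, le_rfl, by ring, ?_, ?_⟩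
    · simpa using excess.ofReal_le_volume (by positivity) hcard hn hXY.norm_left_sub_le hK.convex
        h0 (fun _ => one_pos) left_mem (hX g)
    · rwa [add_zero, ← prod_inv_add_one]
  · refine ⟨0, d / 32 / 4, le_rfl, by positivity, by ring, ?_, ?_⟩
    · simpa using volume_left
    · rw [← prod_inv_add_one]
      exact excess.ofReal_le_volume (by positivity) hcard hn hXY.norm_right_sub_le
        (convex_dotPolar K) (zero_mem_dotPolar K) (fun _ => by positivity) right_mem (hY g)

lemma four_pow_div_factorial_lt_mul {A B : ℝ} {u v : ℝ≥0∞} (hA : 0 ≤ A)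
    (hAB : (Fintype.card (CubeFlag n) : ℝ) ^ 2 < A * B)
    (hu : ENNReal.ofReal ((n.factorial : ℝ)⁻¹ * A) ≤ u)
    (hv : ENNReal.ofReal ((n.factorial : ℝ)⁻¹ / n.factorial * B) ≤ v) :
    (4 : ℝ≥0∞) ^ n / n.factorial < u * v := by
  have hF : (0 : ℝ) < n.factorial := mod_cast n.factorial_pos
  have four_pow : (4 : ℝ) ^ n = 2 ^ n * 2 ^ n := by rw [← mul_pow]; norm_num
  calc (4 : ℝ≥0∞) ^ n / n.factorial = ENNReal.ofReal (4 ^ n / n.factorial) := by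
        rw [ENNReal.ofReal_div_of_pos hF, ENNReal.ofReal_pow (by norm_num), ENNReal.ofReal_natCast]
        norm_num
    _ < ENNReal.ofReal ((n.factorial : ℝ)⁻¹ * A * ((n.factorial : ℝ)⁻¹ / n.factorial * B)) := by
      rw [ENNReal.ofReal_lt_ofReal_iff_of_nonneg (by positivity)]
      have : (4 : ℝ) ^ n / n.factorial = (n.factorial : ℝ)⁻¹ * ((n.factorial : ℝ)⁻¹ / n.factorial)
          * (Fintype.card (CubeFlag n) : ℝ) ^ 2 := by
        rw [CubeFlag.card, four_pow]
        push_cast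
        field_simp
      rw [this, mul_mul_mul_comm]
      gcongr
    _ ≤ u * v := by
      rw [ENNReal.ofReal_mul (by positivity)]
      exact mul_le_mul' hu hv

lemma eventually_mul_lt (Q : ℝ) {ε : ℝ} (hε : 0 < ε) : ∀ᶠ d in 𝓝[>] (0 : ℝ), Q * d < ε :=
  ((continuous_const_mul Q).tendsto' 0 0 (mul_zero Q)).mono_left nhdsWithin_le_nhds
    |>.eventually_lt_const hε

lemma eventually_sq_lt_mul {N c : ℝ} (hN : 0 < N) (hc : 0 < c) (C D : ℝ) :
    ∀ᶠ d in 𝓝[>] (0 : ℝ), ∀ A B a b : ℝ, N + a ≤ A → N + b ≤ B → |a| ≤ D * d → |b| ≤ D * d →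
      c * d - C * d ^ 2 ≤ a + b → 0 ≤ A ∧ N ^ 2 < A * B := by
  filter_upwards [eventually_mul_lt D hN, eventually_mul_lt (N * C + D ^ 2) (mul_pos hN hc),
    self_mem_nhdsWithin] with d hD hCd hd A B a b hA hB ha hb hab
  have mul_ge : -(D * d) ^ 2 ≤ a * b := by
    have := mul_le_mul ha hb (abs_nonneg b) ((abs_nonneg a).trans ha)
    rw [← abs_mul] at this
    linarith [neg_le_of_abs_le this]
  have hA' : 0 ≤ N + a := by linarith [neg_le_of_abs_le ha]
  have hB' : 0 ≤ N + b := by linarith [neg_le_of_abs_le hb]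
  refine ⟨hA'.trans hA, ?_⟩
  calc N ^ 2 < N ^ 2 + (N * c - (N * C + D ^ 2) * d) * d :=
        lt_add_of_pos_right _ (mul_pos (by linarith) hd)
    _ = N ^ 2 + N * (c * d - C * d ^ 2) + -(D * d) ^ 2 := by ring
    _ ≤ N ^ 2 + N * (a + b) + a * b := by gcongr
    _ = (N + a) * (N + b) := by ring
    _ ≤ A * B := mul_le_mul hA hB hB' (hA'.trans hA)

variable (n) in
lemma eventually_lt_volume_mul_volume_dotPolar [NeZero n] : ∀ᶠ d in 𝓝[>] (0 : ℝ),
    ∀ K : Set (Fin n → ℝ), NearCube K d → ∀ f : CubeFlag n, (1 - d / 2) • f.sign ∉ K →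
      (4 : ℝ≥0∞) ^ n / n.factorial < volume K * volume (dotPolar K) := by
  obtain ⟨C, det_ge⟩ := CubeFlag.exists_one_sub_le_abs_det n
  obtain ⟨C', hC', sum_det_ge⟩ := exists_card_add_firstVariation_sub_le n
  set N := (Fintype.card (CubeFlag n) : ℝ)
  have hN0 : 0 < N := Nat.cast_pos.2 Fintype.card_pos
  filter_upwards [self_mem_nhdsWithin, eventually_mul_lt (4096 * n ^ 5) one_pos,
    eventually_mul_lt (Fintype.card (Face n) * (4 * (4 * n))) one_pos,
    eventually_mul_lt (C * (4 * n)) one_half_pos,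
    eventually_sq_lt_mul hN0 (show (0 : ℝ) < 1 / 128 by norm_num)
      (N * (n * (n * (4 * n) ^ 2)) + 2 * (C' * (4 * n) ^ 2))
      (N * (n * (n * (4 * n))) + C' * (4 * n) + 1)]
    with d (hd : 0 < d) hnd hcard hCd sq_lt K hK f hf
  rw [mul_assoc] at hnd
  have pow_le {j : ℕ} (hj : j ≤ 5) : 4096 * (n ^ j * d) ≤ 1 :=
    mul_pow_mul_le_one (by norm_num) hd.le hj hnd.le
  have hd1 : 4096 * d ≤ 1 := by simpa using pow_le (j := 0) (by norm_num)
  have hη : 4096 * (n * d) ≤ 1 := by simpa using pow_le (j := 1) (by norm_num)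
  obtain ⟨X, Y, hXY⟩ := hK.exists_isDualFacePoints hd.le (by linarith) (by linarith)
  have hη2 : 2 * (4 * n * d) ≤ 1 := by linarith
  obtain ⟨p, q, hp, hq, hpq, volume_left, volume_right⟩ := hXY.exists_ofReal_le_volume hK hd
    hnd.le (by linarith) (fun f => by linarith [det_ge X _ hη2 hXY.norm_left_sub_le f])
    (fun f => by linarith [det_ge Y _ hη2 hXY.norm_right_sub_le f]) hf
  have sq_le : C' * (4 * n * d) ^ 2 ≤ C' * (4 * n * d) := by
    gcongr
    exact pow_le_of_le_one (by positivity) (by linarith) two_ne_zero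
  have sq_nonneg : 0 ≤ C' * (4 * n * d) ^ 2 := by positivity
  have abs_le {a r : ℝ} (ha : |a| ≤ N * (n * (n * (4 * n * d)))) (hr : 0 ≤ r) (hr' : r ≤ d / 128) :
      |a - C' * (4 * n * d) ^ 2 + r| ≤ (N * (n * (n * (4 * n))) + C' * (4 * n) + 1) * d := by
    rw [abs_le] at ha ⊢
    constructor <;> nlinarith
  obtain ⟨hA, hAB⟩ := sq_lt (∑ f : CubeFlag n, |(f.matrix X).det| + p)
    (∑ f : CubeFlag n, |(f.matrix Y).det| + q) (firstVariation X - C' * (4 * n * d) ^ 2 + p)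
    (firstVariation Y - C' * (4 * n * d) ^ 2 + q)
    (by linarith [sum_det_ge X _ hη2 hXY.norm_left_sub_le])
    (by linarith [sum_det_ge Y _ hη2 hXY.norm_right_sub_le])
    (abs_le (abs_firstVariation_le hXY.norm_left_sub_le) hp (by linarith))
    (abs_le (abs_firstVariation_le hXY.norm_right_sub_le) hq (by linarith))
    (by linarith [hXY.neg_le_firstVariation_add])
  exact four_pow_div_factorial_lt_mul hA hAB volume_left volume_right

/-! ### Positioning the body by a maximal determinant -/

section Determinant

variable {ι : Type*} [Fintype ι]

lemma det_sq_le_prod_sum_sq (Y : Matrix (Fin n) (Fin n) ℝ) :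
    Y.det ^ 2 ≤ ∏ i, ∑ j, Y i j ^ 2 := by
  let b := EuclideanSpace.basisFun (Fin n) ℝ
  have : Fact (Module.finrank ℝ (EuclideanSpace ℝ (Fin n)) = n) := ⟨by simp⟩
  let v : Fin n → EuclideanSpace ℝ (Fin n) := fun i => WithLp.toLp 2 (Y i)
  have toMatrix_eq : b.toBasis.toMatrix v = Yᵀ := by
    ext i j
    simp [b, v, Module.Basis.toMatrix_apply]
  have abs_det_le : |Y.det| ≤ ∏ i, ‖v i‖ := by
    simpa only [Orientation.volumeForm_robust _ b rfl, Module.Basis.det_apply, toMatrix_eq,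
      det_transpose] using b.toBasis.orientation.abs_volumeForm_apply_le v
  calc Y.det ^ 2 ≤ (∏ i, ‖v i‖) ^ 2 := sq_le_sq.2 (abs_det_le.trans (le_abs_self _))
    _ = ∏ i, ∑ j, Y i j ^ 2 := by
      simp only [← Finset.prod_pow, EuclideanSpace.real_norm_sq_eq, v]

lemma sum_sq_le_of_sum_abs_le_one {y : ι → ℝ} {i : ι} (hy : ∑ j, |y j| ≤ 1) (hi : 1 / 2 ≤ y i) :
    ∑ j, y j ^ 2 ≤ y i := by
  classical
  have abs_le (j : ι) : |y j| ≤ y i := by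
    rcases eq_or_ne j i with rfl | hj
    · rw [abs_of_nonneg (by linarith)]
    · have := Finset.add_le_sum (f := fun j => |y j|) (fun j _ => abs_nonneg _)
        (Finset.mem_univ i) (Finset.mem_univ j) hj.symm
      linarith [le_abs_self (y i)]
  calc ∑ j, y j ^ 2 ≤ ∑ j, y i * |y j| := Finset.sum_le_sum fun j _ => by
        rw [← sq_abs, sq]
        exact mul_le_mul_of_nonneg_right (abs_le j) (abs_nonneg _)
    _ = y i * ∑ j, |y j| := by rw [Finset.mul_sum]
    _ ≤ y i := mul_le_of_le_one_right (by linarith) hy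

lemma abs_apply_le_one_of_sum_abs_le_one {y : ι → ℝ} (hy : ∑ j, |y j| ≤ 1) (i : ι) : |y i| ≤ 1 :=
  (Finset.single_le_sum (f := fun j => |y j|) (fun _ _ => abs_nonneg _) (Finset.mem_univ i)).trans
    hy

lemma det_sq_le_diag {Y : Matrix (Fin n) (Fin n) ℝ} (hrow : ∀ i, ∑ j, |Y i j| ≤ 1)
    (hdiag : ∀ i, 1 / 2 ≤ Y i i) (i : Fin n) : Y.det ^ 2 ≤ Y i i := calc
  Y.det ^ 2 ≤ ∏ k, ∑ j, Y k j ^ 2 := det_sq_le_prod_sum_sq Y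
  _ ≤ ∏ k, Y k k := Finset.prod_le_prod (fun _ _ => Finset.sum_nonneg fun _ _ => sq_nonneg _)
    fun k _ => sum_sq_le_of_sum_abs_le_one (hrow k) (hdiag k)
  _ = Y i i * ∏ k ∈ Finset.univ.erase i, Y k k :=
    (Finset.mul_prod_erase _ (fun k => Y k k) (Finset.mem_univ i)).symm
  _ ≤ Y i i := mul_le_of_le_one_right (by linarith [hdiag i]) <|
    Finset.prod_le_one (fun k _ => by linarith [hdiag k])
      fun k _ => (le_abs_self _).trans (abs_apply_le_one_of_sum_abs_le_one (hrow k) k)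

variable {Y : Matrix ι ι ℝ}

lemma norm_sub_norm_mulVec_le {ε : ℝ} (hrow : ∀ i, ∑ j, |Y i j| ≤ 1)
    (hdiag : ∀ i, 1 - ε ≤ Y i i) (x : ι → ℝ) : ‖x‖ - ‖Y *ᵥ x‖ ≤ 2 * ε * ‖x‖ := by
  classical
  have sum_abs_le (i : ι) : ∑ j, |(1 - Y) i j| ≤ 2 * ε := by
    have row := hrow i
    rw [← Finset.add_sum_erase _ _ (Finset.mem_univ i)] at row ⊢
    have off_diag : ∑ j ∈ Finset.univ.erase i, |(1 - Y) i j|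
        = ∑ j ∈ Finset.univ.erase i, |Y i j| := Finset.sum_congr rfl fun j hj => by
      rw [Matrix.sub_apply, one_apply_ne (Finset.ne_of_mem_erase hj).symm, zero_sub, abs_neg]
    have diag : |(1 - Y) i i| = 1 - Y i i := by
      rw [Matrix.sub_apply, one_apply_eq, abs_of_nonneg]
      linarith [(le_abs_self _).trans (abs_apply_le_one_of_sum_abs_le_one (hrow i) i)]
    linarith [le_abs_self (Y i i), hdiag i]
  rcases isEmpty_or_nonempty ι
  · simp [Subsingleton.elim x 0]
  refine (norm_sub_norm_le _ _).trans ((pi_norm_le_iff_of_nonempty _).2 fun i => ?_)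
  calc ‖(x - Y *ᵥ x) i‖ = |∑ j, (1 - Y) i j * x j| := by
        conv_lhs => rw [← one_mulVec x, mulVec_mulVec, mul_one, ← sub_mulVec]
        rfl
    _ ≤ ∑ j, |(1 - Y) i j| * ‖x‖ := (Finset.abs_sum_le_sum_abs _ _).trans <|
      Finset.sum_le_sum fun j _ => by
        rw [abs_mul]
        exact mul_le_mul_of_nonneg_left (norm_le_pi_norm x j) (abs_nonneg _)
    _ ≤ 2 * ε * ‖x‖ := by
      rw [← Finset.sum_mul]
      exact mul_le_mul_of_nonneg_right (sum_abs_le i) (norm_nonneg x)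

lemma inv_mulVec_single_dotProduct [DecidableEq ι] (i : ι) (y : ι → ℝ) :
    (Y⁻¹ *ᵥ Pi.single i 1) ⬝ᵥ y = (Y.updateRow i y).det / Y.det := by
  rw [← cramer_transpose_apply, cramer_eq_adjugate_mulVec, ← adjugate_transpose, mulVec_transpose,
    Matrix.inv_def, Ring.inverse_eq_inv', dotProduct_comm, smul_mulVec, dotProduct_smul,
    dotProduct_mulVec, dotProduct_single_one, smul_eq_mul, inv_mul_eq_div]

end Determinant

lemma isClosed_dotPolar (K : Set (Fin n → ℝ)) : IsClosed (dotPolar K) := by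
  simp only [dotPolar, Set.ofPred_forall]
  exact isClosed_biInter fun x _ => isClosed_le (by fun_prop) continuous_const

/-- The matrices with rows in the polar of `K` whose diagonal entries are bounded below, which
rules out permuting the rows. Maximizing the determinant over them moves `K` into the position of
`NearCube`. -/
def polarMatrices (K : Set (Fin n → ℝ)) : Set (Matrix (Fin n) (Fin n) ℝ) :=
  {Y | ∀ i, Y i ∈ dotPolar K ∧ 3 / 4 ≤ Y i i}

lemma sum_abs_le_one_of_mem_dotPolar (hK : Metric.closedBall 0 1 ⊆ K) {y : Fin n → ℝ}
    (hy : y ∈ dotPolar K) : ∑ i, |y i| ≤ 1 := by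
  simpa using mul_sum_abs_le_one_of_mem_dotPolar zero_le_one hK hy

lemma isCompact_polarMatrices (hK : Metric.closedBall 0 1 ⊆ K) : IsCompact (polarMatrices K) := by
  have bounded : polarMatrices K ⊆ (Set.univ.pi fun _ => Set.univ.pi fun _ => Set.Icc (-1) 1 :
      Set (Fin n → Fin n → ℝ)) := fun Y hY i _ j _ =>
    abs_le.1 (abs_apply_le_one_of_sum_abs_le_one (sum_abs_le_one_of_mem_dotPolar hK (hY i).1) j)
  refine IsCompact.of_isClosed_subset
    (isCompact_univ_pi fun _ => isCompact_univ_pi fun _ => isCompact_Icc) ?_ bounded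
  simp only [polarMatrices, Set.ofPred_forall, Set.ofPred_and]
  exact isClosed_iInter fun i => ((isClosed_dotPolar K).preimage (continuous_apply i)).inter <|
    isClosed_le continuous_const ((continuous_apply i).comp (continuous_apply i))

lemma smul_one_mem_polarMatrices {δ : ℝ} (hδ : 0 ≤ δ) (hδ1 : 4 * δ ≤ 1)
    (hK : K ⊆ Metric.closedBall 0 (1 + δ)) :
    (1 - δ) • (1 : Matrix (Fin n) (Fin n) ℝ) ∈ polarMatrices K := by
  refine fun i => ⟨fun x hx => ?_, by simp; linarith⟩
  have x_le : x i ≤ 1 + δ := (le_abs_self _).trans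
    ((norm_le_pi_norm x i).trans (mem_closedBall_zero_iff.1 (hK hx)))
  have : x ⬝ᵥ ((1 - δ) • (1 : Matrix (Fin n) (Fin n) ℝ)) i = (1 - δ) * x i := by
    simp [dotProduct, one_apply, mul_comm]
  rw [this]
  nlinarith

lemma det_updateRow_le_of_isMaxOn {Y : Matrix (Fin n) (Fin n) ℝ}
    (hK : Metric.closedBall 0 1 ⊆ K) (hY : Y ∈ polarMatrices K)
    (hmax : IsMaxOn det (polarMatrices K) Y) {i : Fin n} (hi : 3 / 4 < Y i i) {y : Fin n → ℝ}
    (hy : y ∈ dotPolar K) : (Y.updateRow i y).det ≤ Y.det := by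
  have hyi := neg_le_of_abs_le
    (abs_apply_le_one_of_sum_abs_le_one (sum_abs_le_one_of_mem_dotPolar hK hy) i)
  have hYi := le_of_abs_le
    (abs_apply_le_one_of_sum_abs_le_one (sum_abs_le_one_of_mem_dotPolar hK (hY i).1) i)
  obtain ⟨t, ht⟩ : ∃ t, t = (Y i i - 3 / 4) / 2 := ⟨_, rfl⟩
  have t_pos : 0 < t := by linarith
  have mem : Y.updateRow i ((1 - t) • Y i + t • y) ∈ polarMatrices K := by
    intro k
    rcases eq_or_ne k i with rfl | hk
    · rw [updateRow_self]
      refine ⟨convex_dotPolar K (hY k).1 hy (by linarith) t_pos.le (by ring), ?_⟩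
      simp only [Pi.add_apply, Pi.smul_apply, smul_eq_mul]
      nlinarith
    · rw [updateRow_ne hk]
      exact hY k
  have le : (1 - t) * Y.det + t * (Y.updateRow i y).det ≤ Y.det := by
    simpa only [det_updateRow_add, det_updateRow_smul, updateRow_eq_self] using
      isMaxOn_iff.1 hmax _ mem
  nlinarith

lemma exists_center_eq_single {s : Face n} (hs : codim s = 1) :
    ∃ i, center s = Pi.single i 1 ∨ center s = -Pi.single i 1 := by
  obtain ⟨i, hi⟩ := Finset.card_eq_one.1 hs
  have hj (j : Fin n) : s j ≠ 0 ↔ j = i := by simpa using Finset.ext_iff.1 hi j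
  have off (j : Fin n) (h : j ≠ i) : s j = 0 := not_not.1 fun h' => h ((hj j).1 h')
  refine ⟨i, ?_⟩
  rcases hsi : s i with _ | _ | _
  · exact absurd hsi ((hj i).2 rfl)
  · refine .inr (funext fun j => ?_)
    rcases eq_or_ne j i with rfl | h
    · simp [center, hsi]
    · simp [center, off j h, h]
  · refine .inl (funext fun j => ?_)
    rcases eq_or_ne j i with rfl | h
    · simp [center, hsi]
    · simp [center, off j h, h]

lemma exists_isMaxOn_det_polarMatrices [NeZero n] {δ : ℝ} (hδ : 0 ≤ δ) (hδn : 8 * n * δ < 1)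
    (hin : Metric.closedBall 0 1 ⊆ K) (hout : K ⊆ Metric.closedBall 0 (1 + δ)) :
    ∃ Y ∈ polarMatrices K, IsMaxOn det (polarMatrices K) Y ∧ 0 < Y.det ∧
      ∀ i, 1 - 2 * n * δ ≤ Y i i := by
  have one_le : (1 : ℝ) ≤ n := mod_cast NeZero.one_le
  have hδ1 : 8 * δ < 1 := by nlinarith
  have one_mem := smul_one_mem_polarMatrices hδ (by linarith) hout
  obtain ⟨Y, hY, hmax⟩ := (isCompact_polarMatrices hin).exists_isMaxOn ⟨_, one_mem⟩
    (continuous_id.matrix_det).continuousOn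
  have det_ge : (1 - δ) ^ n ≤ Y.det := by simpa using isMaxOn_iff.1 hmax _ one_mem
  refine ⟨Y, hY, hmax, (pow_pos (by linarith) n).trans_le det_ge, fun i => ?_⟩
  calc 1 - 2 * n * δ = 1 + (n * 2 : ℕ) * -δ := by push_cast; ring
    _ ≤ (1 + -δ) ^ (n * 2) := one_add_mul_le_pow (by linarith) _
    _ = ((1 - δ) ^ n) ^ 2 := by rw [← pow_mul, sub_eq_add_neg]
    _ ≤ Y.det ^ 2 := pow_le_pow_left₀ (pow_nonneg (by linarith) n) det_ge 2
    _ ≤ Y i i := det_sq_le_diag (fun i => sum_abs_le_one_of_mem_dotPolar hin (hY i).1)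
      (fun i => by linarith [(hY i).2]) i

lemma norm_mulVec_le_one_of_mem_polarMatrices {Y : Matrix (Fin n) (Fin n) ℝ}
    (hY : Y ∈ polarMatrices K) (hs : ∀ x ∈ K, -x ∈ K) {x : Fin n → ℝ} (hx : x ∈ K) :
    ‖Y *ᵥ x‖ ≤ 1 := by
  refine (pi_norm_le_iff_of_nonneg zero_le_one).2 fun i => abs_le'.2 ⟨?_, ?_⟩
  · rw [mulVec, dotProduct_comm]
    exact (hY i).1 x hx
  · rw [mulVec, dotProduct_comm, ← neg_dotProduct]
    exact (hY i).1 (-x) (hs x hx)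

/-- If `Y` maximizes the determinant, then the preimage under `Y` of each facet center lies in
`K`: a point of the polar separating it from `K` could replace a row of `Y` and would increase the
determinant. -/
lemma exists_nearCube_image [NeZero n] {δ : ℝ} (hδ : 0 ≤ δ) (hδn : 8 * n * δ < 1)
    (hK : Convex ℝ K) (hc : IsCompact K) (hs : ∀ x ∈ K, -x ∈ K)
    (hin : Metric.closedBall 0 1 ⊆ K) (hout : K ⊆ Metric.closedBall 0 (1 + δ)) :
    ∃ L : (Fin n → ℝ) ≃ₗ[ℝ] (Fin n → ℝ), NearCube (L '' K) (4 * n * δ) := by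
  obtain ⟨Y, hY, hmax, det_pos, diag_ge⟩ := exists_isMaxOn_det_polarMatrices hδ hδn hin hout
  let L : (Fin n → ℝ) ≃ₗ[ℝ] (Fin n → ℝ) := Y.toLinearEquiv' (invertibleOfIsUnitDet Y
    (isUnit_iff_ne_zero.2 det_pos.ne'))
  have L_apply (x) : L x = Y *ᵥ x := rfl
  have L_inv (z) : L (Y⁻¹ *ᵥ z) = z := by
    rw [L_apply, mulVec_mulVec, mul_nonsing_inv _ (isUnit_iff_ne_zero.2 det_pos.ne'), one_mulVec]
  have single_mem (i : Fin n) : Pi.single i 1 ∈ L '' K := by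
    refine ⟨_, by_contra fun notMem => ?_, L_inv _⟩
    obtain ⟨y, hy, one_lt⟩ := exists_mem_dotPolar_one_lt hK hc.isClosed
      (hin (Metric.mem_closedBall_self zero_le_one)) notMem
    rw [inv_mulVec_single_dotProduct, one_lt_div det_pos] at one_lt
    exact one_lt.not_ge <| det_updateRow_le_of_isMaxOn hin hY hmax
      (by linarith [diag_ge i]) hy
  refine ⟨L, hK.linear_image L.toLinearMap,
    (hc.image L.toLinearMap.continuous_of_finiteDimensional).isClosed, fun z hz => ?_, ?_,
    fun s hs1 => ?_⟩
  · refine ⟨_, hin (mem_closedBall_zero_iff.2 ?_), L_inv z⟩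
    have := norm_sub_norm_mulVec_le (fun i => sum_abs_le_one_of_mem_dotPolar hin (hY i).1)
      (fun i => by linarith [diag_ge i]) (Y⁻¹ *ᵥ z) (ε := 2 * n * δ)
    rw [← L_apply, L_inv] at this
    nlinarith [mem_closedBall_zero_iff.1 hz]
  · rintro _ ⟨x, hx, rfl⟩
    exact mem_closedBall_zero_iff.2 (norm_mulVec_le_one_of_mem_polarMatrices hY hs hx)
  · obtain ⟨i, h | h⟩ := exists_center_eq_single hs1
    · exact h ▸ single_mem i
    · obtain ⟨x, hx, hxi⟩ := single_mem i
      exact ⟨-x, hs x hx, by rw [h, map_neg, hxi]⟩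

lemma closedBall_subset_of_smul_sign_mem {c : ℝ} (hc : 0 ≤ c) (hK : Convex ℝ K)
    (hsign : ∀ f : CubeFlag n, c • f.sign ∈ K) : Metric.closedBall 0 c ⊆ K := by
  have vertices_subset : (Set.univ.pi fun _ : Fin n => ({-c, c} : Set ℝ)) ⊆ K := by
    intro z hz
    have exists_unit (i : Fin n) : ∃ u : ℤˣ, c * ((u : ℤ) : ℝ) = z i := by
      rcases hz i (Set.mem_univ i) with hi | hi
      · exact ⟨-1, by simp [hi]⟩
      · exact ⟨1, by simp [Set.mem_singleton_iff.1 hi]⟩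
    choose v hv using exists_unit
    rw [← show c • CubeFlag.sign (1, v) = z from funext hv]
    exact hsign _
  refine subset_trans ?_ (convexHull_min vertices_subset hK)
  rw [convexHull_pi, closedBall_pi _ hc]
  refine Set.pi_mono fun i _ => ?_
  rw [convexHull_pair, segment_eq_Icc (by linarith), Real.closedBall_eq_Icc]
  simp

lemma NearCube.exists_smul_sign_notMem (hK : NearCube K d) (hd : 0 ≤ d) (hd1 : d ≤ 1)
    (hne : K ≠ Metric.closedBall 0 1) :
    ∃ d' ∈ Set.Ioc 0 d, NearCube K d' ∧ ∃ f : CubeFlag n, (1 - d' / 2) • f.sign ∉ K := by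
  let D : Set ℝ := Set.Icc 0 1 ∩ ⋂ f : CubeFlag n, (fun r => (1 - r) • f.sign) ⁻¹' K
  have hD : IsCompact D := isCompact_Icc.inter_right <| isClosed_iInter fun f =>
    hK.isClosed.preimage (by fun_prop)
  have closedBall_subset {r : ℝ} (hr : r ∈ D) : Metric.closedBall 0 (1 - r) ⊆ K :=
    closedBall_subset_of_smul_sign_mem (by linarith [hr.1.2]) hK.convex (Set.mem_iInter.1 hr.2)
  have hdD : d ∈ D := by
    refine ⟨⟨hd, hd1⟩, Set.mem_iInter.2 fun f => hK.closedBall_subset ?_⟩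
    rw [mem_closedBall_zero_iff, pi_norm_le_iff_of_nonneg (by linarith)]
    intro i
    simp [f.abs_sign, abs_of_nonneg (sub_nonneg.2 hd1)]
  obtain ⟨d', hd'D, hd'least⟩ := hD.exists_isLeast ⟨d, hdD⟩
  have hd' : 0 < d' := by
    refine hd'D.1.1.lt_of_ne' fun h0 => hne (hK.subset_closedBall.antisymm ?_)
    simpa [h0] using closedBall_subset hd'D
  refine ⟨d', ⟨hd', hd'least hdD⟩, { hK with closedBall_subset := closedBall_subset hd'D }, ?_⟩
  by_contra! hall
  have := hd'least ⟨⟨by linarith, by linarith [hd'D.1.2]⟩, Set.mem_iInter.2 hall⟩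
  linarith

lemma dotPolar_image (L : (Fin n → ℝ) →ₗ[ℝ] (Fin n → ℝ)) (K : Set (Fin n → ℝ)) :
    dotPolar (L '' K) = (LinearMap.toMatrix' L)ᵀ.toLin' ⁻¹' dotPolar K := by
  ext y
  simp only [dotPolar, Set.forall_mem_image, Set.mem_preimage, Set.mem_ofPred_eq, toLin'_apply]
  refine forall₂_congr fun x _ => ?_
  rw [← LinearMap.toMatrix'_mulVec L x, ← vecMul_transpose, dotProduct_mulVec]

lemma volume_image_mul_volume_dotPolar_image (L : (Fin n → ℝ) ≃ₗ[ℝ] (Fin n → ℝ))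
    (K : Set (Fin n → ℝ)) :
    volume (L '' K) * volume (dotPolar (L '' K)) = volume K * volume (dotPolar K) := by
  have hL : LinearMap.det L.toLinearMap ≠ 0 := L.isUnit_det'.ne_zero
  have det_transpose_eq : LinearMap.det (LinearMap.toMatrix' L.toLinearMap)ᵀ.toLin' =
      LinearMap.det L.toLinearMap := by
    rw [LinearMap.det_toLin', det_transpose, LinearMap.det_toMatrix']
  have volume_image : volume (L '' K) = ENNReal.ofReal |LinearMap.det L.toLinearMap| * volume K :=
    Measure.addHaar_image_linearMap volume L.toLinearMap K
  have volume_polar : volume (dotPolar (L '' K)) =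
      ENNReal.ofReal |(LinearMap.det L.toLinearMap)⁻¹| * volume (dotPolar K) := by
    have := Measure.addHaar_preimage_linearMap volume (det_transpose_eq ▸ hL) (dotPolar K)
    rwa [← dotPolar_image, det_transpose_eq] at this
  rw [volume_image, volume_polar, mul_mul_mul_comm, ← ENNReal.ofReal_mul (abs_nonneg _), ← abs_mul,
    mul_inv_cancel₀ hL, abs_one, ENNReal.ofReal_one, one_mul]

variable (n) in
lemma exists_lt_volume_mul_volume_dotPolar [NeZero n] :
    ∃ δ : ℝ, 0 < δ ∧ ∀ K : Set (Fin n → ℝ), Convex ℝ K → IsCompact K → (∀ x ∈ K, -x ∈ K) →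
      Metric.closedBall 0 1 ⊆ K → K ⊆ Metric.closedBall 0 (1 + δ) →
      (∀ L : (Fin n → ℝ) ≃ₗ[ℝ] (Fin n → ℝ), L '' K ≠ Metric.closedBall 0 1) →
      (4 : ℝ≥0∞) ^ n / n.factorial < volume K * volume (dotPolar K) := by
  obtain ⟨r, hr, lt_of_mem_Ioo⟩ := mem_nhdsGT_iff_exists_Ioo_subset.1
    (eventually_lt_volume_mul_volume_dotPolar n)
  obtain ⟨δ, hδr, hδ1, hδ⟩ := ((eventually_mul_lt (4 * n) hr).and
    ((eventually_mul_lt (8 * n) one_pos).and self_mem_nhdsWithin)).exists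
  replace hδ : 0 < δ := hδ
  refine ⟨δ, hδ, fun K hK hc hs hin hout hne => ?_⟩
  obtain ⟨L, hL⟩ := exists_nearCube_image hδ.le hδ1 hK hc hs hin hout
  obtain ⟨d, hd, hLd, f, hf⟩ :=
    hL.exists_smul_sign_notMem (by positivity) (by linarith) (hne L)
  rw [← volume_image_mul_volume_dotPolar_image L K]
  exact lt_of_mem_Ioo ⟨hd.1, hd.2.trans_lt hδr⟩ _ hLd f hf

lemma volume_linearEquiv_image (A : Set (EuclideanSpace ℝ (Fin n))) :
    volume (WithLp.linearEquiv 2 ℝ (Fin n → ℝ) '' A) = volume A := by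
  rw [← (PiLp.volume_preserving_toLp (Fin n)).measure_preimage_equiv
    (f := MeasurableEquiv.toLp 2 (Fin n → ℝ)) A, LinearEquiv.image_eq_preimage_symm]
  rfl

lemma linearEquiv_image_polarBody (K : Set (EuclideanSpace ℝ (Fin n))) :
    WithLp.linearEquiv 2 ℝ (Fin n → ℝ) '' polarBody K =
      dotPolar (WithLp.linearEquiv 2 ℝ (Fin n → ℝ) '' K) := by
  ext y
  rw [LinearEquiv.image_eq_preimage_symm]
  simp only [dotPolar, polarBody, Set.forall_mem_image, Set.mem_preimage, Set.mem_ofPred_eq,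
    EuclideanSpace.inner_eq_star_dotProduct, star_trivial, dotProduct_comm _ y]
  rfl

lemma linearEquiv_image_cube :
    WithLp.linearEquiv 2 ℝ (Fin n → ℝ) '' cube n = Metric.closedBall 0 1 := by
  ext x
  rw [LinearEquiv.image_eq_preimage_symm, mem_closedBall_zero_iff,
    pi_norm_le_iff_of_nonneg zero_le_one]
  rfl

lemma linearEquiv_image_smul_cube {c : ℝ} (hc : 0 ≤ c) :
    WithLp.linearEquiv 2 ℝ (Fin n → ℝ) '' (c • cube n) = Metric.closedBall 0 c := by
  rw [image_smul_set, linearEquiv_image_cube, smul_unitClosedBall, Real.norm_of_nonneg hc]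

lemma volume_mul_volume_polarBody (L : EuclideanSpace ℝ (Fin n) ≃ₗ[ℝ] (Fin n → ℝ))
    (K : Set (EuclideanSpace ℝ (Fin n))) :
    volume K * volume (polarBody K) = volume (L '' K) * volume (dotPolar (L '' K)) := by
  let e := WithLp.linearEquiv 2 ℝ (Fin n → ℝ)
  have image_eq : L '' K = (e.symm.trans L) '' (e '' K) := by
    simp [Set.image_image]
  rw [image_eq, volume_image_mul_volume_dotPolar_image, ← linearEquiv_image_polarBody,
    volume_linearEquiv_image, volume_linearEquiv_image]

end CubeMahler

/-- the cube is a *strict* local minimizer of the Mahler volume product: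
if the Banach–Mazur distance from an origin-symmetric convex body `K` to the cube is
at most `1 + δ(n)` and `K` is not a parallelepiped (a linear image of the cube), then
`volₙ(K)·volₙ(K*) > 4ⁿ/n!`. -/
theorem cube_strict_local_min (n : ℕ) (hn : 2 ≤ n) :
    ∃ δ : ℝ, 0 < δ ∧
      ∀ K : Set (EuclideanSpace ℝ (Fin n)),
        Convex ℝ K → IsCompact K → (interior K).Nonempty → K = -K →
        (∃ T : EuclideanSpace ℝ (Fin n) ≃ₗ[ℝ] EuclideanSpace ℝ (Fin n),
          cube n ⊆ T '' K ∧ T '' K ⊆ (1 + δ) • cube n) →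
        (∀ S : EuclideanSpace ℝ (Fin n) ≃ₗ[ℝ] EuclideanSpace ℝ (Fin n),
          K ≠ S '' cube n) →
        volume K * volume (polarBody K) > (4 : ℝ≥0∞) ^ n / (n.factorial : ℝ≥0∞) := by
  have : NeZero n := ⟨by omega⟩
  obtain ⟨δ, hδ, lt_volume⟩ := CubeMahler.exists_lt_volume_mul_volume_dotPolar n
  refine ⟨δ, hδ, ?_⟩
  rintro K hK hc - hs ⟨T, hin, hout⟩ hne
  let e := WithLp.linearEquiv 2 ℝ (Fin n → ℝ)
  let L := T.trans e
  have image_eq : L '' K = e '' (T '' K) := Set.image_comp e T K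
  rw [gt_iff_lt, CubeMahler.volume_mul_volume_polarBody L]
  refine lt_volume _ (hK.linear_image L.toLinearMap)
    (hc.image (LinearMap.continuous_of_finiteDimensional L.toLinearMap)) ?_ ?_ ?_ ?_
  · rintro _ ⟨x, hx, rfl⟩
    exact ⟨-x, by rwa [hs, Set.neg_mem_neg], map_neg L x⟩
  · rw [image_eq, ← CubeMahler.linearEquiv_image_cube]
    exact Set.image_mono hin
  · rw [image_eq, ← CubeMahler.linearEquiv_image_smul_cube (by linarith)]
    exact Set.image_mono hout
  · intro M hM
    refine hne (e.trans (M.symm.trans L.symm)) ?_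
    calc K = L.symm '' (M.symm '' (M '' (L '' K))) := by simp [Set.image_image]
      _ = L.symm '' (M.symm '' (e '' cube n)) := by rw [hM, CubeMahler.linearEquiv_image_cube]
      _ = e.trans (M.symm.trans L.symm) '' cube n := by rw [Set.image_image, Set.image_image]; rfl
end
end

section
/- Let P ⊂ ℝⁿ be a convex polytope (the convex hull of a finite set) with 0 in its interior, and let P* be its polar. Let F be a nonempty exposed face of P with F ≠ P, let F* = {y ∈ P* : ⟨x,y⟩ = 1 for all x ∈ F} be the dual face (assumed nonempty), and fix points x in the relative interior of F and x* in the relative interior of F*. Then there exists C > 0 (depending on P, F, F*, x, x* but not on K or δ) such that for every δ ∈ (0, 1/2) and every convex body K satisfying (1−δ)·P ⊆ K ⊆ P, there exist points y ∈ ∂K and y* ∈ ∂K* with ⟨y, y*⟩ = 1, ‖y − x‖ ≤ Cδ, and ‖y* − x*‖ ≤ Cδ. -/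
open MeasureTheory RealInnerProductSpace ENNReal Pointwise

noncomputable section

/-!
Since `x*` is relatively interior to `F*`, every vertex of `P` off `F` satisfies `⟨v, x*⟩ < 1`; as
there are finitely many vertices, a whole ball around `x*` in `x* + (span F)ᗮ` lies in `P*`.
Likewise a ball around `x` in the affine span of `F` lies in `F`.

Let `L = ℝ x + (span F)ᗮ` and let `y` maximise `⟨·, x*⟩` over `K ∩ L`, with maximum
`M ∈ [1 - δ, 1]`. The functional `M⁻¹ ⟨·, x*⟩` is at most `1` on `K ∩ L`, so by Hahn–Banach it
extends from `L` to a point `y*` of `K*`, and `⟨y, y*⟩ = 1`. Testing `y ∈ P` against the ball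
around `x*` bounds the component of `y` in `(span F)ᗮ`, and testing `y* ∈ K*` against the ball
around `x`, shrunk by `1 - δ`, bounds `y* - M⁻¹ x*`, which is orthogonal to `L`.
-/

open Filter Topology

section RelativeInterior

variable {E : Type*} [NormedAddCommGroup E] [NormedSpace ℝ E]

lemma eventually_add_mem_of_mem_intrinsicInterior {s : Set E} {x : E}
    (hx : x ∈ intrinsicInterior ℝ s) : ∀ᶠ u in 𝓝[vectorSpan ℝ s] 0, x + u ∈ s := by
  obtain ⟨z, hz, rfl⟩ := hx
  obtain ⟨ε, hε, hball⟩ := Metric.mem_nhds_iff.1 (mem_interior_iff_mem_nhds.1 hz)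
  filter_upwards [self_mem_nhdsWithin, nhdsWithin_le_nhds (Metric.ball_mem_nhds 0 hε)]
    with u hu huε
  have hzu : (z : E) + u ∈ affineSpan ℝ s := by
    rw [add_comm]
    exact AffineSubspace.vadd_mem_of_mem_direction (by rwa [direction_affineSpan]) z.2
  refine hball (a := ⟨z + u, hzu⟩) ?_
  rwa [Metric.mem_ball, Subtype.dist_eq, dist_self_add_left, ← mem_ball_zero_iff]

lemma exists_pos_add_smul_sub_mem_of_mem_intrinsicInterior {s : Set E} {x y : E}
    (hx : x ∈ intrinsicInterior ℝ s) (hy : y ∈ s) : ∃ t : ℝ, 0 < t ∧ x + t • (x - y) ∈ s := by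
  have htendsto : Tendsto (fun t : ℝ ↦ t • (x - y)) (𝓝[>] 0) (𝓝[vectorSpan ℝ s] 0) := by
    refine tendsto_nhdsWithin_iff.2 ⟨?_, .of_forall fun t ↦ Submodule.smul_mem _ t
      (vsub_mem_vectorSpan ℝ (intrinsicInterior_subset hx) hy)⟩
    have hcont : Continuous fun t : ℝ ↦ t • (x - y) := by fun_prop
    exact (hcont.tendsto' 0 0 (zero_smul ℝ _)).mono_left nhdsWithin_le_nhds
  exact (eventually_mem_nhdsWithin.and
    (htendsto.eventually (eventually_add_mem_of_mem_intrinsicInterior hx))).exists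

lemma exists_pos_forall_norm_le_of_eventually_nhdsWithin {U : Submodule ℝ E} {p : E → Prop}
    (h : ∀ᶠ u in 𝓝[U] 0, p u) : ∃ ε : ℝ, 0 < ε ∧ ∀ u ∈ U, ‖u‖ ≤ ε → p u := by
  obtain ⟨ε, hε, hsub⟩ := (nhdsWithin_hasBasis Metric.nhds_basis_closedBall _).mem_iff.1 h
  exact ⟨ε, hε, fun u hu huε ↦ hsub ⟨mem_closedBall_zero_iff.2 huε, hu⟩⟩

end RelativeInterior

lemma map_le_gauge_of_forall_map_le_one {M : Type*} [AddCommGroup M] [Module ℝ M] {K : Set M}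
    (hK : Absorbent ℝ K) {L : Submodule ℝ M} {f : M →ₗ[ℝ] ℝ} (hf : ∀ z ∈ K, z ∈ L → f z ≤ 1)
    {z : M} (hz : z ∈ L) : f z ≤ gauge K z := by
  refine le_of_forall_gt fun c hc ↦ ?_
  obtain ⟨r, hr, hrc, k, hk, rfl⟩ := exists_lt_of_gauge_lt hK hc
  have hkL : k ∈ L := (L.smul_mem_iff hr.ne').1 hz
  calc f (r • k) = r * f k := by rw [map_smul, smul_eq_mul]
    _ ≤ r := mul_le_of_le_one_right hr.le (hf k hk hkL)
    _ < c := hrc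

section VectorSpan

variable {R M : Type*} [Ring R] [AddCommGroup M] [Module R M] {s : Set M}

lemma map_eq_zero_of_mem_vectorSpan {N : Type*} [AddCommGroup N] [Module R N] {f : M →ₗ[R] N}
    {c : N} (hf : ∀ v ∈ s, f v = c) {u : M} (hu : u ∈ vectorSpan R s) : f u = 0 := by
  suffices vectorSpan R s ≤ f.ker from this hu
  refine Submodule.span_le.2 ?_
  rintro _ ⟨v, hv, w, hw, rfl⟩
  simp [hf v hv, hf w hw]

lemma sub_smul_mem_vectorSpan_of_mem_span {f : M →ₗ[R] R} (hf : ∀ v ∈ s, f v = 1) {x u : M}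
    (hx : x ∈ s) (hu : u ∈ Submodule.span R s) : u - f u • x ∈ vectorSpan R s := by
  suffices Submodule.span R s ≤ (vectorSpan R s).comap (LinearMap.id - f.smulRight x) from
    this hu
  exact Submodule.span_le.2 fun v hv ↦ by
    simpa [hf v hv] using vsub_mem_vectorSpan R hv hx

end VectorSpan

variable {E : Type*} [NormedAddCommGroup E] [InnerProductSpace ℝ E]

section Estimates

variable {x ξ : E} {ε : ℝ}

lemma mul_inner_le_mul_norm_of_forall_norm_le {U : Submodule ℝ E} {w : E} {c : ℝ} (hε : 0 < ε)
    (h : ∀ u ∈ U, ‖u‖ ≤ ε → ⟪u, w⟫ ≤ c) {a : E} (ha : a ∈ U) : ε * ⟪a, w⟫ ≤ c * ‖a‖ := by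
  rcases eq_or_ne a 0 with rfl | ha₀
  · simp
  have ha₀ : 0 < ‖a‖ := norm_pos_iff.2 ha₀
  have hscaled : ⟪(ε / ‖a‖) • a, w⟫ ≤ c := by
    refine h _ (U.smul_mem _ ha) (le_of_eq ?_)
    rw [norm_smul, Real.norm_of_nonneg (by positivity), div_mul_cancel₀ _ ha₀.ne']
  rwa [real_inner_smul_left, div_mul_eq_mul_div, div_le_iff₀ ha₀] at hscaled

lemma norm_le_of_inner_eq_norm_sq {U : Submodule ℝ E} {a b w : E} {A c : ℝ} (hε : 0 < ε)
    (hA : 0 ≤ A) (h : ∀ u ∈ U, ‖u‖ ≤ ε → ⟪u, w⟫ ≤ c) (ha : a ∈ U) (haw : ⟪a, w⟫ = ‖b‖ ^ 2)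
    (hab : ‖a‖ ≤ A * ‖b‖) : ‖b‖ ≤ A / ε * c := by
  have hc : 0 ≤ c := by simpa using h 0 U.zero_mem (by simpa using hε.le)
  rcases (norm_nonneg b).eq_or_lt with hb | hb
  · rw [← hb]
    positivity
  have hsq : ε * ‖b‖ * ‖b‖ ≤ A * c * ‖b‖ :=
    calc ε * ‖b‖ * ‖b‖ = ε * ⟪a, w⟫ := by rw [haw]; ring
      _ ≤ c * ‖a‖ := mul_inner_le_mul_norm_of_forall_norm_le hε h ha
      _ ≤ c * (A * ‖b‖) := by gcongr
      _ = A * c * ‖b‖ := by ring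
  rw [div_mul_eq_mul_div, le_div_iff₀' hε]
  exact le_of_mul_le_mul_right hsq hb

lemma norm_sub_le_of_mem_span_sup {W : Submodule ℝ E} {y : E} {δ : ℝ} (hε : 0 < ε)
    (hx : x ∈ Wᗮ) (hxξ : ⟪x, ξ⟫ = 1) (hy : y ∈ Submodule.span ℝ {x} ⊔ W)
    (hyξ : 1 - δ ≤ ⟪y, ξ⟫) (hball : ∀ b ∈ W, ‖b‖ ≤ ε → ⟪y, ξ + b⟫ ≤ 1) :
    ‖y - x‖ ≤ (‖x‖ + (1 + ‖x‖ * ‖ξ‖) / ε) * δ := by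
  obtain ⟨_, hp, b, hb, rfl⟩ := Submodule.mem_sup.1 hy
  obtain ⟨t, rfl⟩ := Submodule.mem_span_singleton.1 hp
  have hb_le : ‖b‖ ≤ 1 / ε * δ := by
    refine norm_le_of_inner_eq_norm_sq (w := t • x + b) hε zero_le_one (fun u hu huε ↦ ?_) hb ?_
      (one_mul _).ge
    · have := hball u hu huε
      rw [inner_add_right, real_inner_comm u] at this
      linarith
    · rw [inner_add_right, inner_smul_right, hx b hb, mul_zero, zero_add,
        real_inner_self_eq_norm_sq]
  have ht : |t - 1| ≤ δ + ‖b‖ * ‖ξ‖ := by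
    have hle : ⟪t • x + b, ξ⟫ ≤ 1 := by simpa using hball 0 W.zero_mem (by simpa using hε.le)
    rw [inner_add_left, real_inner_smul_left, hxξ, mul_one] at hle hyξ
    have := abs_le.1 (abs_real_inner_le_norm b ξ)
    rw [abs_le]
    constructor <;> linarith
  calc ‖t • x + b - x‖ = ‖(t - 1) • x + b‖ := by congr 1; module
    _ ≤ |t - 1| * ‖x‖ + ‖b‖ := (norm_add_le _ _).trans_eq (by rw [norm_smul, Real.norm_eq_abs])
    _ ≤ (δ + ‖b‖ * ‖ξ‖) * ‖x‖ + ‖b‖ := by gcongr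
    _ = ‖x‖ * δ + (1 + ‖x‖ * ‖ξ‖) * ‖b‖ := by ring
    _ ≤ ‖x‖ * δ + (1 + ‖x‖ * ‖ξ‖) * (1 / ε * δ) := by gcongr
    _ = (‖x‖ + (1 + ‖x‖ * ‖ξ‖) / ε) * δ := by ring

lemma norm_sub_le_of_sub_smul_mem {U : Submodule ℝ E} {w : E} {r τ : ℝ} (hε : 0 < ε)
    (hxξ : ⟪x, ξ⟫ = 1) (hUξ : ∀ u ∈ U, ⟪u, ξ⟫ = 0) (hxw : ⟪x, w⟫ = 0)
    (hwU : w - ⟪w, ξ⟫ • x ∈ U) (hr : 1 ≤ r)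
    (hball : ∀ u ∈ U, ‖u‖ ≤ ε → ⟪x + u, r • ξ + w⟫ ≤ 1 + τ) :
    ‖r • ξ + w - ξ‖ ≤ (‖ξ‖ + (1 + ‖x‖ * ‖ξ‖) / ε) * τ := by
  have hball' : ∀ u ∈ U, ‖u‖ ≤ ε → r + ⟪u, w⟫ ≤ 1 + τ := fun u hu huε ↦ by
    simpa only [inner_add_left, inner_add_right, inner_smul_right, hxξ, hxw, hUξ u hu, mul_one,
      mul_zero, add_zero, zero_add] using hball u hu huε
  have hr_le : r ≤ 1 + τ := by simpa using hball' 0 U.zero_mem (by simpa using hε.le)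
  have hw_le : ‖w‖ ≤ (1 + ‖x‖ * ‖ξ‖) / ε * τ := by
    refine norm_le_of_inner_eq_norm_sq hε (by positivity)
      (fun u hu huε ↦ by linarith [hball' u hu huε]) hwU ?_ ?_
    · rw [inner_sub_left, real_inner_smul_left, hxw, mul_zero, sub_zero,
        real_inner_self_eq_norm_sq]
    · calc ‖w - ⟪w, ξ⟫ • x‖ ≤ ‖w‖ + |⟪w, ξ⟫| * ‖x‖ :=
            (norm_sub_le _ _).trans_eq (by rw [norm_smul, Real.norm_eq_abs])
        _ ≤ ‖w‖ + ‖w‖ * ‖ξ‖ * ‖x‖ := by grw [abs_real_inner_le_norm]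
        _ = (1 + ‖x‖ * ‖ξ‖) * ‖w‖ := by ring
  calc ‖r • ξ + w - ξ‖ = ‖(r - 1) • ξ + w‖ := by congr 1; module
    _ ≤ (r - 1) * ‖ξ‖ + ‖w‖ := (norm_add_le _ _).trans_eq
        (by rw [norm_smul, Real.norm_of_nonneg (by linarith)])
    _ ≤ τ * ‖ξ‖ + (1 + ‖x‖ * ‖ξ‖) / ε * τ := by gcongr; linarith
    _ = (‖ξ‖ + (1 + ‖x‖ * ‖ξ‖) / ε) * τ := by ring

end Estimates

/-- The one-sided polar `{ξ : ⟨x, ξ⟩ ≤ 1 for all x ∈ K}` of a subset of a real inner product space,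
regarded as a subset of the same space; `polarBody` is the case of `EuclideanSpace ℝ (Fin n)`. -/
def innerPolar (K : Set E) : Set E :=
  {ξ | ∀ x ∈ K, ⟪x, ξ⟫ ≤ 1}

/-- The dual face `F*` of `F ⊆ P`: the points of the polar of `P` at which every point of `F`
attains the bound `1`. -/
def dualFace (P F : Set E) : Set E :=
  {ξ ∈ innerPolar P | ∀ x ∈ F, ⟪x, ξ⟫ = 1}

lemma innerPolar_convexHull (s : Set E) : innerPolar (convexHull ℝ s) = innerPolar s := by
  refine Set.Subset.antisymm (fun ξ hξ x hx ↦ hξ x (subset_convexHull ℝ s hx)) fun ξ hξ ↦ ?_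
  have hconvex : Convex ℝ {x : E | ⟪x, ξ⟫ ≤ 1} :=
    convex_halfSpace_le (f := fun x ↦ ⟪x, ξ⟫)
      ⟨fun x y ↦ inner_add_left x y ξ, fun c x ↦ real_inner_smul_left x ξ c⟩ 1
  exact convexHull_min hξ hconvex

lemma subset_innerPolar_innerPolar (K : Set E) : K ⊆ innerPolar (innerPolar K) :=
  fun x hx ξ hξ ↦ (real_inner_comm x ξ).trans_le (hξ x hx)

lemma mem_frontier_of_inner_eq_one {K : Set E} {y η : E} (hy : y ∈ K) (hη : η ∈ innerPolar K)
    (hyη : ⟪y, η⟫ = 1) : y ∈ frontier K := by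
  refine ⟨subset_closure hy, fun hyint ↦ ?_⟩
  have htendsto : Tendsto (fun t : ℝ ↦ t • y) (𝓝[>] 1) (𝓝 y) := by
    have hcont : Continuous fun t : ℝ ↦ t • y := by fun_prop
    exact (hcont.tendsto' 1 y (one_smul ℝ y)).mono_left nhdsWithin_le_nhds
  obtain ⟨t, ht, htK⟩ := (eventually_mem_nhdsWithin.and
    (htendsto.eventually (mem_interior_iff_mem_nhds.1 hyint))).exists
  have hle := hη _ htK
  rw [real_inner_smul_left, hyη, mul_one] at hle
  exact hle.not_gt ht

lemma exists_mem_innerPolar_sub_mem_orthogonal [FiniteDimensional ℝ E] {K : Set E}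
    (hK : Convex ℝ K) (hK₀ : Absorbent ℝ K) {L : Submodule ℝ E} {ξ : E}
    (hξ : ∀ z ∈ K, z ∈ L → ⟪z, ξ⟫ ≤ 1) : ∃ η ∈ innerPolar K, η - ξ ∈ Lᗮ := by
  obtain ⟨g, hgL, hgK⟩ := exists_extension_of_le_sublinear
    ⟨L, ((innerₗ E).flip ξ).domRestrict L⟩ (gauge K)
    (fun c hc z ↦ gauge_smul_of_nonneg hc.le z) (gauge_add_le hK hK₀)
    (fun z ↦ map_le_gauge_of_forall_map_le_one (f := (innerₗ E).flip ξ) hK₀ hξ z.2)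
  set η := (InnerProductSpace.toDual ℝ E).symm g.toContinuousLinearMap
  have hη : ∀ z, ⟪z, η⟫ = g z := fun z ↦ by
    rw [real_inner_comm]
    exact InnerProductSpace.toDual_symm_apply
  refine ⟨η, fun z hz ↦ ?_, fun z hz ↦ ?_⟩
  · rw [hη]
    exact (hgK z).trans (gauge_le_one_of_mem hz)
  · rw [inner_sub_right, hη, sub_eq_zero]
    exact hgL ⟨z, hz⟩

lemma exists_dual_pair_of_mem_submodule [FiniteDimensional ℝ E] {K : Set E} (hK : Convex ℝ K)
    (hKc : IsCompact K) (hK₀ : Absorbent ℝ K) {L : Submodule ℝ E} {z ξ : E} (hzK : z ∈ K)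
    (hzL : z ∈ L) (hzξ : 0 < ⟪z, ξ⟫) :
    ∃ y ∈ K, y ∈ L ∧ ⟪z, ξ⟫ ≤ ⟪y, ξ⟫ ∧
      ∃ η ∈ innerPolar K, ⟪y, η⟫ = 1 ∧ η - ⟪y, ξ⟫⁻¹ • ξ ∈ Lᗮ := by
  obtain ⟨y, ⟨hyK, hyL⟩, hmax⟩ := (hKc.inter_right L.closed_of_finiteDimensional).exists_isMaxOn
    ⟨z, hzK, hzL⟩ (f := fun v ↦ ⟪v, ξ⟫) (by fun_prop)
  have hzy : ⟪z, ξ⟫ ≤ ⟪y, ξ⟫ := hmax ⟨hzK, hzL⟩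
  have hy : 0 < ⟪y, ξ⟫ := hzξ.trans_le hzy
  have hslice : ∀ v ∈ K, v ∈ L → ⟪v, ⟪y, ξ⟫⁻¹ • ξ⟫ ≤ 1 := fun v hvK hvL ↦ by
    rw [inner_smul_right, inv_mul_le_iff₀ hy, mul_one]
    exact hmax ⟨hvK, hvL⟩
  obtain ⟨η, hη, hηL⟩ := exists_mem_innerPolar_sub_mem_orthogonal hK hK₀ hslice
  refine ⟨y, hyK, hyL, hzy, η, hη, ?_, hηL⟩
  have hyη := hηL y hyL
  rwa [inner_sub_right, inner_smul_right, inv_mul_cancel₀ hy.ne', sub_eq_zero] at hyη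

section DualFace

variable {P F : Set E}

lemma exists_mem_dualFace_forall_inner_lt_one [CompleteSpace E] (h₀ : 0 ∈ P)
    (hF : IsExposed ℝ P F) (hFne : F.Nonempty) (h₀F : 0 ∉ F) :
    ∃ ζ ∈ dualFace P F, ∀ v ∈ P, v ∉ F → ⟪v, ζ⟫ < 1 := by
  obtain ⟨l, rfl⟩ := hF hFne
  obtain ⟨x, hxP, hx⟩ := hFne
  have hlt : ∀ v ∈ P, v ∉ {z ∈ P | ∀ y ∈ P, l y ≤ l z} → l v < l x := fun v hv hvF ↦
    lt_of_not_ge fun hle ↦ hvF ⟨hv, fun y hy ↦ (hx y hy).trans hle⟩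
  have hlx : 0 < l x := by simpa using hlt 0 h₀ h₀F
  set ζ := (l x)⁻¹ • (InnerProductSpace.toDual ℝ E).symm l
  have hζ : ∀ v, ⟪v, ζ⟫ = l v / l x := fun v ↦ by
    rw [inner_smul_right, real_inner_comm, InnerProductSpace.toDual_symm_apply,
      inv_mul_eq_div]
  refine ⟨ζ, ⟨fun v hv ↦ ?_, fun v hv ↦ ?_⟩, fun v hv hvF ↦ ?_⟩
  · rw [hζ, div_le_one hlx]
    exact hx v hv
  · rw [hζ, div_eq_one_iff_eq hlx.ne']
    exact (hx v hv.1).antisymm (hv.2 x hxP)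
  · rw [hζ, div_lt_one hlx]
    exact hlt v hv hvF

lemma inner_lt_one_of_mem_intrinsicInterior_dualFace [CompleteSpace E] (h₀ : 0 ∈ P)
    (hF : IsExposed ℝ P F) (hFne : F.Nonempty) {ξ : E}
    (hξ : ξ ∈ intrinsicInterior ℝ (dualFace P F)) {v : E} (hv : v ∈ P) (hvF : v ∉ F) :
    ⟪v, ξ⟫ < 1 := by
  have h₀F : 0 ∉ F := fun h ↦ by simpa using (intrinsicInterior_subset hξ).2 0 h
  obtain ⟨ζ, hζ, hζlt⟩ := exists_mem_dualFace_forall_inner_lt_one h₀ hF hFne h₀F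
  obtain ⟨t, ht, hmem⟩ := exists_pos_add_smul_sub_mem_of_mem_intrinsicInterior hξ hζ
  have hle := hmem.1 v hv
  rw [inner_add_right, inner_smul_right, inner_sub_right] at hle
  nlinarith [hζlt v hv hvF]

lemma eventually_add_mem_innerPolar_of_finite {V : Set E} (hV : V.Finite) {ξ : E}
    (hξ : ξ ∈ innerPolar V) (hlt : ∀ v ∈ V, v ∉ F → ⟪v, ξ⟫ < 1) :
    ∀ᶠ b in 𝓝[(Submodule.span ℝ F)ᗮ] 0, ξ + b ∈ innerPolar V := by
  refine hV.eventually_all.2 fun v hv ↦ ?_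
  by_cases hvF : v ∈ F
  · filter_upwards [self_mem_nhdsWithin] with b hb
    rw [inner_add_right, hb v (Submodule.subset_span hvF), add_zero]
    exact hξ v hv
  · have hcont : Continuous fun b ↦ ⟪v, ξ + b⟫ := by fun_prop
    have hlim : Tendsto (fun b ↦ ⟪v, ξ + b⟫) (𝓝[(Submodule.span ℝ F)ᗮ] 0) (𝓝 ⟪v, ξ⟫) :=
      (hcont.tendsto' 0 _ (by rw [add_zero])).mono_left nhdsWithin_le_nhds
    exact hlim.eventually_le_const (hlt v hv hvF)

lemma eventually_add_mem_innerPolar_convexHull [CompleteSpace E] {V : Set E} (hV : V.Finite)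
    (h₀ : 0 ∈ convexHull ℝ V) (hF : IsExposed ℝ (convexHull ℝ V) F) (hFne : F.Nonempty) {ξ : E}
    (hξ : ξ ∈ intrinsicInterior ℝ (dualFace (convexHull ℝ V) F)) :
    ∀ᶠ b in 𝓝[(Submodule.span ℝ F)ᗮ] 0, ξ + b ∈ innerPolar (convexHull ℝ V) := by
  have hξP := (intrinsicInterior_subset hξ).1
  rw [innerPolar_convexHull] at hξP ⊢
  exact eventually_add_mem_innerPolar_of_finite hV hξP fun v hv hvF ↦
    inner_lt_one_of_mem_intrinsicInterior_dualFace h₀ hF hFne hξ (subset_convexHull ℝ V hv) hvF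

lemma exists_dual_pair_near [FiniteDimensional ℝ E] {x ξ : E} {ε₁ ε₂ δ : ℝ} (hFP : F ⊆ P)
    (hx : x ∈ F) (hξ : ξ ∈ dualFace P F) (hε₁ : 0 < ε₁) (hε₂ : 0 < ε₂)
    (hballξ : ∀ b ∈ (Submodule.span ℝ F)ᗮ, ‖b‖ ≤ ε₁ → ξ + b ∈ innerPolar P)
    (hballx : ∀ u ∈ vectorSpan ℝ F, ‖u‖ ≤ ε₂ → x + u ∈ F) (hδ : 0 ≤ δ) (hδ' : δ ≤ 1 / 2)
    {K : Set E} (hK : Convex ℝ K) (hKc : IsCompact K) (hK₀ : Absorbent ℝ K)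
    (hPK : (1 - δ) • P ⊆ K) (hKP : K ⊆ P) :
    ∃ y ∈ K, ∃ η ∈ innerPolar K, ⟪y, η⟫ = 1 ∧
      ‖y - x‖ ≤ (‖x‖ + (1 + ‖x‖ * ‖ξ‖) / ε₁) * δ ∧
      ‖η - ξ‖ ≤ (‖ξ‖ + (1 + ‖x‖ * ‖ξ‖) / ε₂) * (2 * δ) := by
  set S := Submodule.span ℝ F
  set L := Submodule.span ℝ {x} ⊔ Sᗮ
  have hxξ : ⟪x, ξ⟫ = 1 := hξ.2 x hx
  have hxL : x ∈ L := Submodule.mem_sup_left (Submodule.mem_span_singleton_self x)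
  have hzξ : ⟪(1 - δ) • x, ξ⟫ = 1 - δ := by rw [real_inner_smul_left, hxξ, mul_one]
  obtain ⟨y, hyK, hyL, hzy, η, hη, hyη, hηL⟩ := exists_dual_pair_of_mem_submodule (ξ := ξ) hK hKc
    hK₀ (hPK (Set.smul_mem_smul_set (hFP hx))) (L.smul_mem _ hxL) (by linarith)
  rw [hzξ] at hzy
  have hM_le : ⟪y, ξ⟫ ≤ 1 := hξ.1 y (hKP hyK)
  refine ⟨y, hyK, η, hη, hyη, ?_, ?_⟩
  · exact norm_sub_le_of_mem_span_sup hε₁ (S.le_orthogonal_orthogonal (Submodule.subset_span hx))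
      hxξ hyL hzy fun b hb hbε ↦ hballξ b hb hbε y (hKP hyK)
  · set r := ⟪y, ξ⟫⁻¹
    set w := η - r • ξ
    have hη_eq : η = r • ξ + w := (add_sub_cancel _ _).symm
    have hwS : w ∈ S := by
      rw [← S.orthogonal_orthogonal]
      exact Submodule.orthogonal_le le_sup_right hηL
    have hball : ∀ u ∈ vectorSpan ℝ F, ‖u‖ ≤ ε₂ → ⟪x + u, r • ξ + w⟫ ≤ 1 + 2 * δ := by
      intro u hu huε
      rw [← hη_eq]
      have hle := hη _ (hPK (Set.smul_mem_smul_set (hFP (hballx u hu huε))))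
      rw [real_inner_smul_left] at hle
      nlinarith
    rw [hη_eq]
    exact norm_sub_le_of_sub_smul_mem hε₂ hxξ
      (fun u hu ↦ map_eq_zero_of_mem_vectorSpan (f := (innerₗ E).flip ξ) hξ.2 hu) (hηL x hxL)
      (sub_smul_mem_vectorSpan_of_mem_span (f := (innerₗ E).flip ξ) hξ.2 hx hwS)
      ((one_le_inv₀ (by linarith)).2 hM_le) hball

end DualFace

theorem dual_points_near_dual_faces_general [FiniteDimensional ℝ E] {V F : Set E} (hV : V.Finite)
    (h₀ : 0 ∈ interior (convexHull ℝ V)) (hF : IsExposed ℝ (convexHull ℝ V) F) {x ξ : E}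
    (hx : x ∈ intrinsicInterior ℝ F)
    (hξ : ξ ∈ intrinsicInterior ℝ (dualFace (convexHull ℝ V) F)) :
    ∃ C : ℝ, 0 < C ∧ ∀ δ : ℝ, 0 ≤ δ → δ ≤ 1 / 2 → ∀ K : Set E, Convex ℝ K → IsCompact K →
      (1 - δ) • convexHull ℝ V ⊆ K → K ⊆ convexHull ℝ V →
      ∃ y ∈ frontier K, ∃ η ∈ frontier (innerPolar K),
        ⟪y, η⟫ = 1 ∧ ‖y - x‖ ≤ C * δ ∧ ‖η - ξ‖ ≤ C * δ := by
  have hxF := intrinsicInterior_subset hx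
  have hξF := intrinsicInterior_subset hξ
  obtain ⟨ε₁, hε₁, hballξ⟩ := exists_pos_forall_norm_le_of_eventually_nhdsWithin
    (eventually_add_mem_innerPolar_convexHull hV (interior_subset h₀) hF ⟨x, hxF⟩ hξ)
  obtain ⟨ε₂, hε₂, hballx⟩ := exists_pos_forall_norm_le_of_eventually_nhdsWithin
    (eventually_add_mem_of_mem_intrinsicInterior hx)
  set C₁ := ‖x‖ + (1 + ‖x‖ * ‖ξ‖) / ε₁
  set C₂ := ‖ξ‖ + (1 + ‖x‖ * ‖ξ‖) / ε₂
  have hC₁ : 0 < C₁ := by positivity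
  have hC₂ : 0 < C₂ := by positivity
  refine ⟨C₁ + 2 * C₂, by positivity, fun δ hδ hδ' K hK hKc hPK hKP ↦ ?_⟩
  have hK₀ : K ∈ 𝓝 0 := mem_of_superset
    ((set_smul_mem_nhds_zero_iff (by linarith)).2 (mem_interior_iff_mem_nhds.1 h₀)) hPK
  obtain ⟨y, hy, η, hη, hyη, hyx, hηξ⟩ := exists_dual_pair_near hF.subset hxF hξF hε₁ hε₂
    hballξ hballx hδ hδ' hK hKc (absorbent_nhds_zero hK₀) hPK hKP
  refine ⟨y, mem_frontier_of_inner_eq_one hy hη hyη, η, mem_frontier_of_inner_eq_one hη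
    (subset_innerPolar_innerPolar K hy) ((real_inner_comm y η).trans hyη), hyη, ?_, ?_⟩
  · exact hyx.trans (mul_le_mul_of_nonneg_right (by linarith) hδ)
  · exact hηξ.trans (by nlinarith)

/-- Lemma 6: let `P` be a convex polytope with `0` in its interior, `F` a
nonempty proper exposed face of `P`, `F*` its dual face in `P*`, and fix `x`, `x*` in the
relative interiors of `F`, `F*`. Then there is `C > 0` such that whenever
`(1−δ)P ⊆ K ⊆ P`, there are `y ∈ ∂K`, `y* ∈ ∂K*` with `⟨y, y*⟩ = 1`, `‖y − x‖ ≤ Cδ`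
and `‖y* − x*‖ ≤ Cδ`. -/
theorem dual_points_near_dual_faces (n : ℕ)
    (V : Finset (EuclideanSpace ℝ (Fin n)))
    (P : Set (EuclideanSpace ℝ (Fin n)))
    (hP : P = convexHull ℝ (V : Set (EuclideanSpace ℝ (Fin n))))
    (h0P : (0 : EuclideanSpace ℝ (Fin n)) ∈ interior P)
    (F : Set (EuclideanSpace ℝ (Fin n)))
    (hF : IsExposed ℝ P F) (hFne : F.Nonempty) (hFP : F ≠ P)
    (Fstar : Set (EuclideanSpace ℝ (Fin n)))
    (hFstar : Fstar = {y ∈ polarBody P | ∀ x ∈ F, ⟪x, y⟫ = 1})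
    (x xstar : EuclideanSpace ℝ (Fin n))
    (hx : x ∈ intrinsicInterior ℝ F) (hxstar : xstar ∈ intrinsicInterior ℝ Fstar) :
    ∃ C : ℝ, 0 < C ∧
      ∀ δ : ℝ, 0 < δ → δ < 1 / 2 →
        ∀ K : Set (EuclideanSpace ℝ (Fin n)),
          Convex ℝ K → IsCompact K → (interior K).Nonempty →
          (1 - δ) • P ⊆ K → K ⊆ P →
          ∃ y ∈ frontier K, ∃ ystar ∈ frontier (polarBody K),
            ⟪y, ystar⟫ = 1 ∧ ‖y - x‖ ≤ C * δ ∧ ‖ystar - xstar‖ ≤ C * δ := by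
  subst hP hFstar
  obtain ⟨C, hC, h⟩ := dual_points_near_dual_faces_general V.finite_toSet h0P hF hx hxstar
  exact ⟨C, hC, fun δ hδ hδ' K hK hKc _ ↦ h δ hδ.le hδ'.le K hK hKc⟩
end
end
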